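/- arXiv:2306.08545 — 4 statements merged into one kernel-verified Lean document; each statement's English description precedes it below -/
import Mathlib

section
/- Let G be a finite group having a unique minimal normal subgroup M, where M = S_1 × ⋯ × S_n is the internal direct product of subgroups all isomorphic to PSL(2, 3^f) for some odd positive integer f. Let g be an element of G and let r be the order of gM in G/M. Then there exist a non-principal irreducible complex character λ of M and a non-negative integer h ≤ n such that λ has an extension to I = I_G(λ), the element g^{2^h} lies in I, and |M|/λ(1) is a multiple of 2^h · o(g^r), where o(g^r) denotes the order of g^r. -/
open scoped MatrixGroups

noncomputable section

/-- `χ` is the character of some irreducible complex representation of `G`. -/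
def IsIrrChar (G : Type) [Group G] (χ : G → ℂ) : Prop :=
  ∃ V : FDRep ℂ G, CategoryTheory.Simple V ∧ ∀ g : G, FDRep.character V g = χ g

/-- `α : S → ℂ` has an extension to `Aut S`, through the embedding of `S` in `Aut S`
given by inner automorphisms. -/
def ExtendsToAut (S : Type) [Group S] (α : S → ℂ) : Prop :=
  ∃ ψ : MulAut S → ℂ, IsIrrChar (MulAut S) ψ ∧ ∀ s : S, ψ (MulAut.conj s) = α s

/-- The inertia subgroup `I_G(λ)` of a (character) `lam : M → ℂ` of a normal
subgroup `M` of `G`: the set of `g ∈ G` with `lam ∘ (conjugation by g) = lam`. -/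
def inertia {G : Type} [Group G] (M : Subgroup G) (hM : M.Normal) (lam : ↥M → ℂ) :
    Subgroup G where
  carrier := {g : G | ∀ m : ↥M, lam ⟨g * m * g⁻¹, hM.conj_mem m.1 m.2 g⟩ = lam m}
  one_mem' := by
    intro m
    have : ((1 : G) * m * (1 : G)⁻¹) = (m : G) := by group
    exact congrArg lam (Subtype.ext this)
  mul_mem' := by
    intro a b ha hb m
    have key : ∀ (x y : G) (hx : x ∈ M) (hy : y ∈ M), x = y →
        lam ⟨x, hx⟩ = lam ⟨y, hy⟩ := by
      rintro x y hx hy rfl; rfl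
    have h1 := ha ⟨b * m * b⁻¹, hM.conj_mem m.1 m.2 b⟩
    have h2 := hb m
    calc lam ⟨(a * b) * m * (a * b)⁻¹, hM.conj_mem m.1 m.2 (a * b)⟩
        = lam ⟨a * (b * m * b⁻¹) * a⁻¹, hM.conj_mem _ (hM.conj_mem m.1 m.2 b) a⟩ :=
          key _ _ _ _ (by group)
      _ = lam ⟨b * m * b⁻¹, hM.conj_mem m.1 m.2 b⟩ := h1
      _ = lam m := h2
  inv_mem' := by
    intro a ha m
    have key : ∀ (x y : G) (hx : x ∈ M) (hy : y ∈ M), x = y →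
        lam ⟨x, hx⟩ = lam ⟨y, hy⟩ := by
      rintro x y hx hy rfl; rfl
    have h := ha ⟨a⁻¹ * m * (a⁻¹)⁻¹, hM.conj_mem _ m.2 a⁻¹⟩
    have h2 : lam ⟨a * (a⁻¹ * m * (a⁻¹)⁻¹) * a⁻¹,
        hM.conj_mem _ (hM.conj_mem m.1 m.2 a⁻¹) a⟩ = lam m :=
      key _ _ _ _ (by group)
    exact h.symm.trans h2

/-- A (character) `lam : M → ℂ` of a subgroup `M` of `G` has an extension to
the subgroup `H` of `G`: some irreducible character of `H` restricts to `lam`. -/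
def ExtendsToSubgroup {G : Type} [Group G] (M H : Subgroup G) (lam : ↥M → ℂ) : Prop :=
  ∃ ψ : ↥H → ℂ, IsIrrChar ↥H ψ ∧
    ∀ (x : G) (hxM : x ∈ M) (hxH : x ∈ H), ψ ⟨x, hxH⟩ = lam ⟨x, hxM⟩


/-- The commutant of a matrix representation consists of scalars. -/
def Schur {H ι : Type} [Group H] [Fintype ι] [DecidableEq ι]
    (ρ : H →* Matrix ι ι ℂ) : Prop :=
  ∀ X : Matrix ι ι ℂ, (∀ h, X * ρ h = ρ h * X) → ∃ c : ℂ, X = c • (1 : Matrix ι ι ℂ)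

/-- Representation from matrices. -/
def matRep {H ι : Type} [Group H] [Fintype ι] [DecidableEq ι]
    (ρ : H →* Matrix ι ι ℂ) : Representation ℂ H (ι → ℂ) :=
  ((Matrix.toLinAlgEquiv' : Matrix ι ι ℂ ≃ₐ[ℂ] _) : Matrix ι ι ℂ →* _).comp ρ

lemma matRep_apply {H ι : Type} [Group H] [Fintype ι] [DecidableEq ι]
    (ρ : H →* Matrix ι ι ℂ) (h : H) : matRep ρ h = Matrix.toLin' (ρ h) := rfl

lemma matRep_char {H ι : Type} [Group H] [Fintype ι] [DecidableEq ι]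
    (ρ : H →* Matrix ι ι ℂ) (h : H) : (matRep ρ).character h = (ρ h).trace := by
  rw [Representation.character, matRep_apply, Matrix.trace_toLin'_eq]

lemma schur_iff_finrank {H ι : Type} [Group H] [Fintype ι] [DecidableEq ι] [Nonempty ι]
    (ρ : H →* Matrix ι ι ℂ) :
    Schur ρ ↔ Module.finrank ℂ (Representation.IntertwiningMap (matRep ρ) (matRep ρ)) = 1 := by
  have hne : (1 : Representation.IntertwiningMap (matRep ρ) (matRep ρ)) ≠ 0 := by
    intro h
    have := congrArg (fun f => f.toLinearMap (fun _ => (1 : ℂ)) (Classical.arbitrary ι)) h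
    simp at this
  rw [finrank_eq_one_iff_of_nonzero' _ hne]
  constructor
  · intro hS w
    obtain ⟨c, hc⟩ := hS (LinearMap.toMatrix' w.toLinearMap) (by
      intro h
      apply Matrix.toLin'.injective
      rw [Matrix.toLin'_mul, Matrix.toLin'_mul, Matrix.toLin'_toMatrix']
      exact w.2 h)
    refine ⟨c, ?_⟩
    apply Representation.IntertwiningMap.ext
    apply LinearMap.toMatrix'.injective
    rw [hc]
    have : (c • (1 : Representation.IntertwiningMap (matRep ρ) (matRep ρ))).toLinearMap
      = c • LinearMap.id := rfl
    rw [this, map_smul, LinearMap.toMatrix'_id]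
  · intro h X hX
    obtain ⟨c, hc⟩ := h ⟨Matrix.toLin' X, by
      intro h
      rw [matRep_apply, ← Matrix.toLin'_mul, ← Matrix.toLin'_mul, hX]⟩
    refine ⟨c, ?_⟩
    apply Matrix.toLin'.injective
    rw [map_smul, Matrix.toLin'_one]
    exact (congrArg (fun f => f.toLinearMap) hc).symm

lemma schur_iff_norm {H ι : Type} [Group H] [Fintype H] [Fintype ι] [DecidableEq ι] [Nonempty ι]
    (ρ : H →* Matrix ι ι ℂ) :
    Schur ρ ↔ ∑ h : H, (ρ h).trace * (ρ h⁻¹).trace = Nat.card H := by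
  have hH : (Nat.card H : ℂ) ≠ 0 := by
    simp
  have := invertibleOfNonzero hH
  have key := Representation.card_inv_mul_sum_char_mul_char_eq_finrank (matRep ρ) (matRep ρ)
  simp only [matRep_char] at key
  rw [schur_iff_finrank, ← Nat.cast_inj (R := ℂ), ← key, Nat.cast_one, inv_mul_eq_one₀ hH, eq_comm]

lemma irr_of_schur {H ι : Type} [Group H] [Finite H] [Fintype ι] [DecidableEq ι] [Nonempty ι]
    (ρ : H →* Matrix ι ι ℂ) (hS : Schur ρ) : IsIrrChar H (fun h => (ρ h).trace) := by
  have := Fintype.ofFinite H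
  have hc : ∀ h, FDRep.character (FDRep.of (matRep ρ)) h = (ρ h).trace := by
    intro h
    rw [← matRep_char]; rfl
  refine ⟨FDRep.of (matRep ρ), ?_, hc⟩
  rw [FDRep.simple_iff_char_is_norm_one]
  simp only [hc]
  exact (schur_iff_norm ρ).1 hS

lemma schur_of_comp {H K ι : Type} [Group H] [Group K] [Fintype ι] [DecidableEq ι]
    (j : K →* H) (ρ : H →* Matrix ι ι ℂ) (hS : Schur (ρ.comp j)) : Schur ρ :=
  fun X hX => hS X fun k => hX (j k)


lemma tensor_rep {I J A ι : Type} [Group I] [Fintype J] [MulAction I J] [Group A]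
    [Fintype ι] [DecidableEq ι] [DecidableEq J]
    (α : I → J → A) (hα : ∀ x y j, α (x * y) j = α x (y • j) * α y j)
    (R : A →* Matrix ι ι ℂ) :
    ∃ ρ : I →* Matrix (J → ι) (J → ι) ℂ,
      ∀ y, (∀ j : J, y • j = j) → (ρ y).trace = ∏ j, (R (α y j)).trace := by
  have h1 : ∀ j, α 1 j = 1 := by
    intro j
    have := hα 1 1 j
    simpa using this
  refine ⟨⟨⟨fun y => Matrix.of fun x z => ∏ j, R (α y j) (x (y • j)) (z j), ?_⟩, ?_⟩, ?_⟩
  · ext x z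
    simp only [Matrix.of_apply, h1, map_one, one_smul, Matrix.one_apply]
    by_cases h : x = z
    · subst h; simp
    · rw [if_neg h]
      obtain ⟨j, hj⟩ := Function.ne_iff.1 h
      exact Finset.prod_eq_zero (Finset.mem_univ j) (if_neg hj)
  · intro y y'
    ext x t
    simp only [Matrix.of_apply, Matrix.mul_apply, hα, map_mul]
    rw [Finset.prod_univ_sum, Fintype.piFinset_univ]
    refine Fintype.sum_equiv (Equiv.arrowCongr (MulAction.toPerm y') (Equiv.refl ι)) _ _ ?_
    intro w
    rw [Finset.prod_mul_distrib]
    congr 1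
    · refine Eq.trans ?_ (Equiv.prod_comp (MulAction.toPerm y')
        (fun j => R (α y j) (x (y • j)) (w (y'⁻¹ • j))))
      simp [mul_smul]
    · simp
  · intro y hy
    simp only [MonoidHom.coe_mk, OneHom.coe_mk, Matrix.trace, Matrix.diag, Matrix.of_apply, hy]
    rw [Finset.prod_univ_sum, Fintype.piFinset_univ]

/-- Extendible character data on `S0`. -/
structure Datum (S0 : Type) [Group S0] [Fintype S0] where
  ι : Type
  [fι : Fintype ι]
  [dι : DecidableEq ι]
  [nι : Nonempty ι]
  A : Subgroup (MulAut S0)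
  R : ↥A →* Matrix ι ι ℂ
  χ : S0 → ℂ
  hconj : ∀ x, MulAut.conj x ∈ A
  htr : ∀ x, (R ⟨MulAut.conj x, hconj x⟩).trace = χ x
  hfull : ∀ α : MulAut S0, (∀ x, χ (α x) = χ x) → α ∈ A
  hnorm : ∑ x, χ x * χ x⁻¹ = Nat.card S0
  hnc : ∃ x, χ x ≠ χ 1

attribute [instance] Datum.fι Datum.dι Datum.nι

lemma Datum.one {S0 : Type} [Group S0] [Fintype S0] (D : Datum S0) :
    D.χ 1 = Fintype.card D.ι := by
  have : (⟨MulAut.conj 1, D.hconj 1⟩ : ↥D.A) = 1 := by ext1; simp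
  rw [← D.htr, this, map_one, Matrix.trace_one]

lemma Datum.one_ne {S0 : Type} [Group S0] [Fintype S0] (D : Datum S0) : D.χ 1 ≠ 0 := by
  rw [D.one]; simp

lemma Datum.inv {S0 : Type} [Group S0] [Fintype S0] (D : Datum S0) (α : MulAut S0)
    (hα : α ∈ D.A) (x : S0) : D.χ (α x) = D.χ x := by
  have : (⟨MulAut.conj (α x), D.hconj _⟩ : ↥D.A)
      = ⟨α, hα⟩ * ⟨MulAut.conj x, D.hconj x⟩ * (⟨α, hα⟩ : ↥D.A)⁻¹ := by
    ext y
    simp [MulAut.conj_apply]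
  rw [← D.htr, this, map_mul, Matrix.trace_mul_comm, ← map_mul, ← mul_assoc, inv_mul_cancel,
    one_mul, D.htr]

/-- The way `G` acts on its normal subgroup `M = S0 ^ n`. -/
structure Setup (G : Type) [Group G] (M : Subgroup G) (S0 : Type) [Group S0] (n : ℕ) where
  e : (Fin n → S0) ≃* ↥M
  act : G →* Equiv.Perm (Fin n)
  α : G → Fin n → MulAut S0
  hα : ∀ y i x, y * (e (Pi.mulSingle i x) : G) * y⁻¹ = e (Pi.mulSingle (act y i) (α y i x))

namespace Setup

variable {G : Type} [Group G] {M : Subgroup G} {S0 : Type} [Group S0] {n : ℕ}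

lemma single_inj (T : Setup G M S0 n) (i : Fin n) {x y : S0}
    (h : (T.e (Pi.mulSingle i x) : G) = T.e (Pi.mulSingle i y)) : x = y := by
  have := T.e.injective (Subtype.ext h)
  exact Pi.mulSingle_injective i this

lemma cocycle (T : Setup G M S0 n) (x y : G) (i : Fin n) :
    T.α (x * y) i = T.α x (T.act y i) * T.α y i := by
  ext s
  apply T.single_inj (T.act (x * y) i)
  rw [← T.hα, MulAut.mul_apply]
  have : T.act (x * y) i = T.act x (T.act y i) := by simp
  rw [this, ← T.hα, ← T.hα]
  group

lemma conj_e (T : Setup G M S0 n) (hM : M.Normal) (y : G) (s : Fin n → S0) (i : Fin n) :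
    T.e.symm ⟨y * T.e s * y⁻¹, hM.conj_mem _ (T.e s).2 y⟩ (T.act y i) = T.α y i (s i) := by
  let f1 : (Fin n → S0) →* S0 :=
    { toFun := fun s => T.e.symm ⟨y * T.e s * y⁻¹, hM.conj_mem _ (T.e s).2 y⟩ (T.act y i)
      map_one' := by
        have : (⟨y * T.e 1 * y⁻¹, hM.conj_mem _ (T.e 1).2 y⟩ : ↥M) = 1 := by ext1; simp
        rw [this]; simp
      map_mul' := by
        intro a b
        have : (⟨y * T.e (a * b) * y⁻¹, hM.conj_mem _ (T.e (a * b)).2 y⟩ : ↥M) =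
          ⟨y * T.e a * y⁻¹, hM.conj_mem _ (T.e a).2 y⟩ *
          ⟨y * T.e b * y⁻¹, hM.conj_mem _ (T.e b).2 y⟩ := by
          ext1; simp
        rw [this, map_mul, Pi.mul_apply] }
  let f2 : (Fin n → S0) →* S0 := (T.α y i).toMonoidHom.comp (Pi.evalMonoidHom _ i)
  have : f1 = f2 := by
    apply MonoidHom.pi_ext
    intro k x
    change T.e.symm ⟨y * T.e (Pi.mulSingle k x) * y⁻¹, _⟩ (T.act y i)
      = T.α y i ((Pi.mulSingle k x : Fin n → S0) i)
    have : (⟨y * T.e (Pi.mulSingle k x) * y⁻¹, hM.conj_mem _ (T.e (Pi.mulSingle k x)).2 y⟩ : ↥M)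
      = T.e (Pi.mulSingle (T.act y k) (T.α y k x)) := Subtype.ext (T.hα y k x)
    rw [this, MulEquiv.symm_apply_apply]
    by_cases h : i = k
    · subst h; simp
    · rw [Pi.mulSingle_eq_of_ne h, Pi.mulSingle_eq_of_ne, map_one]
      simpa using h
  exact DFunLike.congr_fun this s

lemma conj_m (T : Setup G M S0 n) (hM : M.Normal) (y : G) (m : ↥M) (i : Fin n) :
    T.e.symm ⟨y * m * y⁻¹, hM.conj_mem _ m.2 y⟩ (T.act y i) = T.α y i (T.e.symm m i) := by
  have := T.conj_e hM y (T.e.symm m) i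
  simpa using this

/-- Change of coordinates. -/
def twist (T : Setup G M S0 n) (β : Fin n → MulAut S0) : Setup G M S0 n where
  e := (MulEquiv.piCongrRight β).trans T.e
  act := T.act
  α y i := (β (T.act y i))⁻¹ * T.α y i * β i
  hα := by
    intro y i x
    have h : ∀ i x, (MulEquiv.piCongrRight β) (Pi.mulSingle i x) = Pi.mulSingle i (β i x) := by
      intro i x
      ext k
      by_cases h : k = i
      · subst h; simp
      · simp [Pi.mulSingle_eq_of_ne h]
    simp only [MulEquiv.trans_apply, h, T.hα, MulAut.mul_apply, MulAut.apply_inv_self]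

variable [Fintype S0]

/-- The character `λ`. -/
def lam (T : Setup G M S0 n) (D : Datum S0) (J : Finset (Fin n)) (m : ↥M) : ℂ :=
  ∏ i ∈ J, D.χ (T.e.symm m i)

lemma lam_one (T : Setup G M S0 n) (D : Datum S0) (J : Finset (Fin n)) :
    T.lam D J 1 = (Fintype.card D.ι : ℂ) ^ J.card := by
  simp [lam, D.one]

lemma lam_single (T : Setup G M S0 n) (D : Datum S0) (J : Finset (Fin n)) (i : Fin n)
    (hi : i ∈ J) (x : S0) :
    T.lam D J (T.e (Pi.mulSingle i x)) = D.χ x * D.χ 1 ^ (J.card - 1) := by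
  rw [lam, ← Finset.mul_prod_erase _ _ hi, MulEquiv.symm_apply_apply, Pi.mulSingle_eq_same,
    ← Finset.card_erase_of_mem hi]
  congr 1
  apply Finset.prod_eq_pow_card
  intro k hk
  rw [Pi.mulSingle_eq_of_ne (Finset.ne_of_mem_erase hk)]

lemma lam_single' (T : Setup G M S0 n) (D : Datum S0) (J : Finset (Fin n)) (i : Fin n)
    (hi : i ∉ J) (x : S0) :
    T.lam D J (T.e (Pi.mulSingle i x)) = D.χ 1 ^ J.card := by
  rw [lam]
  apply Finset.prod_eq_pow_card
  intro k hk
  rw [MulEquiv.symm_apply_apply, Pi.mulSingle_eq_of_ne]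
  rintro rfl; exact hi hk

lemma mem_inertia (T : Setup G M S0 n) (hM : M.Normal) (D : Datum S0) (J : Finset (Fin n)) (y : G)
    (h1 : ∀ i ∈ J, T.act y i ∈ J) (h2 : ∀ i ∈ J, T.α y i ∈ D.A) :
    y ∈ inertia M hM (T.lam D J) := by
  intro m
  have hJ : J.map (T.act y).toEmbedding = J := by
    apply Finset.eq_of_subset_of_card_le
    · intro k hk
      obtain ⟨i, hi, rfl⟩ := Finset.mem_map.1 hk
      exact h1 i hi
    · simp
  rw [lam]
  nth_rw 1 [← hJ]
  rw [Finset.prod_map]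
  apply Finset.prod_congr rfl
  intro i hi
  simp only [Equiv.coe_toEmbedding]
  rw [T.conj_m hM, D.inv _ (h2 i hi)]

lemma of_mem_inertia (T : Setup G M S0 n) (hM : M.Normal) (D : Datum S0) (J : Finset (Fin n))
    (y : G) (hy : y ∈ inertia M hM (T.lam D J)) (i : Fin n) (hi : i ∈ J) :
    T.act y i ∈ J ∧ T.α y i ∈ D.A := by
  have key : ∀ x, T.lam D J (T.e (Pi.mulSingle (T.act y i) (T.α y i x)))
      = T.lam D J (T.e (Pi.mulSingle i x)) := by
    intro x
    rw [← hy (T.e (Pi.mulSingle i x))]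
    congr 1
    exact Subtype.ext (T.hα y i x).symm
  have h0 : D.χ 1 ^ (J.card - 1) ≠ 0 := pow_ne_zero _ D.one_ne
  have hmem : T.act y i ∈ J := by
    by_contra hc
    obtain ⟨x, hx⟩ := D.hnc
    have e1 := key x
    have e2 := key 1
    rw [T.lam_single' D J _ hc, T.lam_single D J _ hi] at e1 e2
    exact hx (mul_right_cancel₀ h0 (e1.symm.trans e2))
  refine ⟨hmem, D.hfull _ fun x => ?_⟩
  have e1 := key x
  rw [T.lam_single D J _ hmem, T.lam_single D J _ hi] at e1
  exact mul_right_cancel₀ h0 e1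

end Setup


namespace Setup

variable {G : Type} [Group G] {M : Subgroup G} {S0 : Type} [Group S0] {n : ℕ}

lemma act_e (T : Setup G M S0 n) [Nontrivial S0] (s : Fin n → S0) (i : Fin n) :
    T.act (T.e s) i = i ∧ T.α (T.e s) i = MulAut.conj (s i) := by
  have key : ∀ x, (Pi.mulSingle (T.act (T.e s) i) (T.α (T.e s) i x) : Fin n → S0)
      = Pi.mulSingle i (s i * x * (s i)⁻¹) := by
    intro x
    apply T.e.injective
    apply Subtype.ext
    rw [← T.hα]
    have h2 : s * Pi.mulSingle i x * s⁻¹ = Pi.mulSingle i (s i * x * (s i)⁻¹) := by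
      ext k
      by_cases h : k = i
      · subst h; simp
      · simp [Pi.mulSingle_eq_of_ne h]
    rw [← h2]
    simp
  have h1 : T.act (T.e s) i = i := by
    obtain ⟨x, hx⟩ := exists_ne (1 : S0)
    by_contra hne
    have h3 := congrFun (key x) i
    rw [Pi.mulSingle_eq_same, Pi.mulSingle_eq_of_ne (fun h => hne h.symm)] at h3
    apply hx
    have h4 := h3.symm
    rw [mul_inv_eq_one] at h4
    simpa using h4
  refine ⟨h1, ?_⟩
  ext x
  have h3 := key x
  rw [h1] at h3
  exact Pi.mulSingle_injective i h3

variable [Fintype S0]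

lemma lam_norm (T : Setup G M S0 n) [Fintype M] (D : Datum S0) (J : Finset (Fin n)) :
    ∑ m : ↥M, T.lam D J m * T.lam D J m⁻¹ = Nat.card ↥M := by
  classical
  rw [← Equiv.sum_comp T.e.toEquiv]
  have h1 : ∀ s : Fin n → S0, T.lam D J (T.e.toEquiv s) * T.lam D J (T.e.toEquiv s)⁻¹
      = ∏ i, (if i ∈ J then D.χ (s i) * D.χ (s i)⁻¹ else 1) := by
    intro s
    rw [lam, lam, ← Finset.prod_mul_distrib]
    simp [Finset.prod_ite_mem]
  simp only [h1]
  have h2 := Finset.prod_univ_sum (fun _ : Fin n => (Finset.univ : Finset S0))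
    (fun i x => if i ∈ J then D.χ x * D.χ x⁻¹ else 1)
  rw [Fintype.piFinset_univ] at h2
  rw [← h2, ← Nat.card_congr T.e.toEquiv, Nat.card_fun]
  push_cast
  rw [Finset.prod_eq_pow_card (b := (Nat.card S0 : ℂ))]
  · simp
  · intro i _
    by_cases hi : i ∈ J
    · simp only [hi, if_true]; exact D.hnorm
    · simp [hi]

theorem main (T : Setup G M S0 n) [Finite G] (hM : M.Normal) (D : Datum S0)
    (J : Finset (Fin n)) (hJ : J.Nonempty) :
    IsIrrChar ↥M (T.lam D J) ∧ T.lam D J ≠ (fun _ => 1) ∧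
      ExtendsToSubgroup M (inertia M hM (T.lam D J)) (T.lam D J) := by
  classical
  have hnt : Nontrivial S0 := by
    obtain ⟨x, hx⟩ := D.hnc
    exact ⟨x, 1, fun h => hx (by rw [h])⟩
  have hne : T.lam D J ≠ (fun _ => 1) := by
    intro h
    obtain ⟨i, hi⟩ := hJ
    obtain ⟨x, hx⟩ := D.hnc
    have e1 := congrFun h (T.e (Pi.mulSingle i x))
    have e2 := congrFun h (T.e (Pi.mulSingle i 1))
    rw [T.lam_single D J _ hi] at e1 e2
    exact hx (mul_right_cancel₀ (pow_ne_zero _ D.one_ne) (e1.trans e2.symm))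
  set I := inertia M hM (T.lam D J) with hI
  have hMI : M ≤ I := by
    intro m hm
    obtain ⟨s, hs⟩ := T.e.surjective ⟨m, hm⟩
    have hs' : (T.e s : G) = m := by rw [hs]
    rw [← hs']
    apply T.mem_inertia hM
    · intro i hi
      rw [(T.act_e s i).1]; exact hi
    · intro i hi
      rw [(T.act_e s i).2]; exact D.hconj _
  let _ : MulAction ↥I ↥J :=
    { smul := fun y j => ⟨T.act y j, (T.of_mem_inertia hM D J y y.2 j j.2).1⟩
      one_smul := by
        intro j; apply Subtype.ext
        change T.act (1 : G) j = j
        simp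
      mul_smul := by
        intro x y j; apply Subtype.ext
        change T.act ((x : G) * y) j = T.act x (T.act y j)
        simp }
  have hsm : ∀ (y : ↥I) (j : ↥J), ((y • j : ↥J) : Fin n) = T.act y j := fun _ _ => rfl
  obtain ⟨ρ, hρ⟩ := tensor_rep (I := ↥I) (J := ↥J) (A := ↥D.A)
    (fun y j => ⟨T.α y j, (T.of_mem_inertia hM D J y y.2 j j.2).2⟩)
    (by
      intro x y j
      apply Subtype.ext
      exact T.cocycle x y j) D.R
  have htr : ∀ m : ↥M, (ρ (Subgroup.inclusion hMI m)).trace = T.lam D J m := by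
    intro m
    obtain ⟨s, rfl⟩ := T.e.surjective m
    rw [hρ]
    · rw [lam, ← Finset.prod_coe_sort J (fun i => D.χ (T.e.symm (T.e s) i))]
      apply Finset.prod_congr rfl
      intro j _
      rw [MulEquiv.symm_apply_apply, ← D.htr]
      congr 3
      exact (T.act_e s j).2
    · intro j
      apply Subtype.ext
      exact (T.act_e s j).1
  have hS : Schur (ρ.comp (Subgroup.inclusion hMI)) := by
    have := Fintype.ofFinite ↥M
    rw [schur_iff_norm]
    simp only [MonoidHom.comp_apply, htr]
    exact T.lam_norm D J
  refine ⟨?_, hne, ?_⟩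
  · have := irr_of_schur _ hS
    simp only [MonoidHom.comp_apply, htr] at this
    exact this
  · refine ⟨fun h => (ρ h).trace, irr_of_schur _ (schur_of_comp _ _ hS), ?_⟩
    intro x hxM hxH
    exact htr ⟨x, hxM⟩

end Setup


section PSLbasics

variable {F : Type} [Field F]

lemma sq1 {a : F} (h : a ^ 2 = 1) : a = 1 ∨ a = -1 := by
  rw [← one_pow 2] at h
  exact sq_eq_sq_iff_eq_or_eq_neg.1 h

/-- Constructor for `SL₂`. -/
def sl (a b c d : F) (h : a * d - b * c = 1) : SL(2, F) :=
  ⟨!![a, b; c, d], by rw [Matrix.det_fin_two_of]; exact h⟩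

lemma sl_ext {s t : SL(2, F)} (h00 : s 0 0 = t 0 0) (h01 : s 0 1 = t 0 1)
    (h10 : s 1 0 = t 1 0) (h11 : s 1 1 = t 1 1) : s = t := by
  apply Matrix.SpecialLinearGroup.ext
  intro i j
  fin_cases i <;> fin_cases j <;> assumption

lemma sl_det (s : SL(2, F)) : s 0 0 * s 1 1 - s 0 1 * s 1 0 = 1 := by
  have := s.2
  rwa [Matrix.det_fin_two] at this

lemma sl_eta (s : SL(2, F)) : s = sl (s 0 0) (s 0 1) (s 1 0) (s 1 1) (sl_det s) := by
  apply sl_ext <;> rfl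

lemma exists_sl (s : SL(2, F)) : ∃ a b c d, ∃ h : a * d - b * c = 1, s = sl a b c d h :=
  ⟨_, _, _, _, _, sl_eta s⟩

@[simp] lemma sl00 (a b c d : F) (h) : sl a b c d h 0 0 = a := rfl
@[simp] lemma sl01 (a b c d : F) (h) : sl a b c d h 0 1 = b := rfl
@[simp] lemma sl10 (a b c d : F) (h) : sl a b c d h 1 0 = c := rfl
@[simp] lemma sl11 (a b c d : F) (h) : sl a b c d h 1 1 = d := rfl

lemma slm00 (s t : SL(2, F)) : (s * t) 0 0 = s 0 0 * t 0 0 + s 0 1 * t 1 0 := by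
  simp [Matrix.mul_apply, Fin.sum_univ_two]
lemma slm01 (s t : SL(2, F)) : (s * t) 0 1 = s 0 0 * t 0 1 + s 0 1 * t 1 1 := by
  simp [Matrix.mul_apply, Fin.sum_univ_two]
lemma slm10 (s t : SL(2, F)) : (s * t) 1 0 = s 1 0 * t 0 0 + s 1 1 * t 1 0 := by
  simp [Matrix.mul_apply, Fin.sum_univ_two]
lemma slm11 (s t : SL(2, F)) : (s * t) 1 1 = s 1 0 * t 0 1 + s 1 1 * t 1 1 := by
  simp [Matrix.mul_apply, Fin.sum_univ_two]

lemma sl_mul (a b c d : F) (h) (a' b' c' d' : F) (h') :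
    sl a b c d h * sl a' b' c' d' h' = sl (a * a' + b * c') (a * b' + b * d')
      (c * a' + d * c') (c * b' + d * d') (by linear_combination h * (a' * d' - b' * c') + h') := by
  apply sl_ext <;> simp [slm00, slm01, slm10, slm11]

lemma sl_inv (a b c d : F) (h) :
    (sl a b c d h)⁻¹ = sl d (-b) (-c) a (by linear_combination h) := by
  rw [inv_eq_iff_mul_eq_one, sl_mul]
  apply sl_ext <;> simp <;> first | (ring1) | linear_combination h | linear_combination -h

lemma sl_neg (a b c d : F) (h) :
    -(sl a b c d h) = sl (-a) (-b) (-c) (-d) (by linear_combination h) := by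
  apply sl_ext <;> simp

lemma sl_one : (1 : SL(2, F)) = sl 1 0 0 1 (by ring) := by
  apply sl_ext <;> simp

/-- Projection to `PSL₂`. -/
def mkP : SL(2, F) →* PSL(2, F) := QuotientGroup.mk' _

lemma mkP_surj : Function.Surjective (mkP (F := F)) := QuotientGroup.mk'_surjective _

lemma mkP_eq (s t : SL(2, F)) : mkP s = mkP t ↔ t = s ∨ t = -s := by
  have hc : ∀ x : SL(2, F), x ∈ Subgroup.center SL(2, F) ↔ x = 1 ∨ x = -1 := by
    intro x
    rw [Matrix.SpecialLinearGroup.mem_center_iff]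
    constructor
    · rintro ⟨r, hr, hx⟩
      have h00 : x 0 0 = r := by rw [← hx]; simp
      have h01 : x 0 1 = 0 := by rw [← hx]; simp
      have h10 : x 1 0 = 0 := by rw [← hx]; simp
      have h11 : x 1 1 = r := by rw [← hx]; simp
      simp only [Fintype.card_fin] at hr
      rcases sq1 hr with h | h
      · left; apply sl_ext <;> simp [h00, h01, h10, h11, h]
      · right; apply sl_ext <;> simp [h00, h01, h10, h11, h]
    · rintro (rfl | rfl)
      · exact ⟨1, by simp, by simp⟩
      · exact ⟨-1, by simp, by
          ext i j
          fin_cases i <;> fin_cases j <;> simp⟩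
  change QuotientGroup.mk s = (QuotientGroup.mk t : PSL(2, F)) ↔ _
  rw [QuotientGroup.eq, hc, inv_mul_eq_iff_eq_mul, inv_mul_eq_iff_eq_mul]
  simp

lemma mkP_neg (s : SL(2, F)) : mkP (-s) = mkP s := (mkP_eq _ _).2 (Or.inr (by simp))

/-- Upper unitriangular. -/
def uu (b : F) : SL(2, F) := sl 1 b 0 1 (by ring)
/-- Lower unitriangular. -/
def ll (c : F) : SL(2, F) := sl 1 0 c 1 (by ring)
/-- Diagonal. -/
def dd (a : F) (ha : a ≠ 0) : SL(2, F) := sl a 0 0 a⁻¹ (by field_simp; ring)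
/-- Weyl element. -/
def ww : SL(2, F) := sl 0 (-1) 1 0 (by ring)

lemma uu_add (a b : F) : uu (a + b) = uu a * uu b := by
  rw [uu, uu, uu, sl_mul]; apply sl_ext <;> simp; ring
lemma ll_add (a b : F) : ll (a + b) = ll a * ll b := by
  rw [ll, ll, ll, sl_mul]; apply sl_ext <;> simp

lemma sl_gen (H : Subgroup SL(2, F)) (hu : ∀ b, uu b ∈ H) (hl : ∀ c, ll c ∈ H) : H = ⊤ := by
  rw [eq_top_iff]
  have key : ∀ a b c d : F, ∀ h, c ≠ 0 → sl a b c d h ∈ H := by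
    intro a b c d h hc
    have : sl a b c d h = uu ((a - 1) / c) * ll c * uu ((d - 1) / c) := by
      rw [uu, uu, ll, sl_mul, sl_mul]
      apply sl_ext <;> simp <;> field_simp <;> first | (ring1) | linear_combination -h | linear_combination h
    rw [this]
    exact H.mul_mem (H.mul_mem (hu _) (hl _)) (hu _)
  intro s _
  obtain ⟨a, b, c, d, h, rfl⟩ := exists_sl s
  by_cases hc : c = 0
  · subst hc
    have ha : a ≠ 0 := by rintro rfl; simp at h
    have : sl a b 0 d h = ll (-1) * sl a b a (b + d) (by linear_combination h) := by
      rw [ll, sl_mul]; apply sl_ext <;> simp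
    rw [this]
    exact H.mul_mem (hl _) (key _ _ _ _ _ ha)
  · exact key _ _ _ _ _ hc

lemma psl_gen (H : Subgroup PSL(2, F)) (hu : ∀ b, mkP (uu b) ∈ H) (hl : ∀ c, mkP (ll c) ∈ H) :
    H = ⊤ := by
  have := sl_gen (H.comap mkP) hu hl
  rw [eq_top_iff]
  intro x _
  obtain ⟨s, rfl⟩ := mkP_surj x
  have : s ∈ H.comap mkP := by rw [this]; trivial
  exact this

section three
variable [CharP F 3]

lemma three0 : (3 : F) = 0 := by exact_mod_cast CharP.cast_eq_zero F 3

lemma sl_cube (s : SL(2, F)) (ht : (s 0 0 + s 1 1) ^ 2 = 1) : mkP s ^ 3 = 1 := by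
  obtain ⟨a, b, c, d, h, rfl⟩ := exists_sl s
  simp only [sl00, sl11] at ht
  have h3 := three0 (F := F)
  have hh : (1 : SL(2, F)) = sl a b c d h ^ 3 ∨ (1 : SL(2, F)) = - sl a b c d h ^ 3 := by
    have e : sl a b c d h ^ 3 = sl (-(a+d)) 0 0 (-(a+d)) (by linear_combination ht) := by
      rw [pow_succ, pow_two, sl_mul, sl_mul]
      have ht' : (a+d)^2 - 1 = 0 := by linear_combination ht
      apply sl_ext <;> simp
      · linear_combination a * ht - (2 * a + d) * h
      · linear_combination b * ht - b * h
      · linear_combination c * ht - c * h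
      · linear_combination d * ht - (2 * d + a) * h
    rw [e]
    rcases sq1 ht with h | h
    · right; apply sl_ext <;> simp [h]
    · left; apply sl_ext <;> simp [h]
  rw [← map_pow, ← map_one mkP, mkP_eq]
  rcases hh with h | h
  · left; exact h
  · right; exact h

lemma psl_cube [Finite F] (x : PSL(2, F)) (hx : 3 ∣ orderOf x) : x ^ 3 = 1 := by
  obtain ⟨s, rfl⟩ := mkP_surj x
  obtain ⟨k, hk⟩ := hx
  have hpos : 0 < orderOf (mkP s) := orderOf_pos _
  have hy3 : mkP (s ^ k) ^ 3 = 1 := by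
    rw [map_pow, ← pow_mul, mul_comm, ← hk, pow_orderOf_eq_one]
  have hy1 : mkP (s ^ k) ≠ 1 := by
    rw [map_pow]
    intro h
    have := orderOf_dvd_of_pow_eq_one h
    have := Nat.le_of_dvd (by omega) this
    omega
  have hcom : s * s ^ k = s ^ k * s := by rw [← pow_succ, ← pow_succ']
  generalize s ^ k = y at *
  have h3 := three0 (F := F)
  obtain ⟨a, b, c, d, h, rfl⟩ := exists_sl y
  obtain ⟨p, q, r, w, h', rfl⟩ := exists_sl s
  apply sl_cube
  simp only [sl00, sl11]
  rw [sl_mul, sl_mul] at hcom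
  have c1 := congrArg (fun s : SL(2, F) => s 0 0) hcom
  have c2 := congrArg (fun s : SL(2, F) => s 0 1) hcom
  have c3 := congrArg (fun s : SL(2, F) => s 1 0) hcom
  simp only [sl00, sl01, sl10] at c1 c2 c3
  have hns : ¬ (b = 0 ∧ c = 0 ∧ a = d) := by
    rintro ⟨rfl, rfl, rfl⟩
    apply hy1
    rw [← map_one mkP, mkP_eq]
    have : a ^ 2 = 1 := by linear_combination h
    rcases sq1 this with h | h
    · left; apply sl_ext <;> simp [h]
    · right; apply sl_ext <;> simp [h]
  have hty : (a + d) ^ 2 = 1 := by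
    by_contra hne
    rw [← map_pow, ← map_one mkP, mkP_eq] at hy3
    have e : sl a b c d h ^ 3 = sl a b c d h * sl a b c d h * sl a b c d h := by
      rw [pow_succ, pow_two]
    have hne' : (a + d) ^ 2 - 1 ≠ 0 := sub_ne_zero.2 hne
    have k : (sl a b c d h ^ 3) 0 1 = 0 ∧ (sl a b c d h ^ 3) 1 0 = 0 ∧
        (sl a b c d h ^ 3) 0 0 = (sl a b c d h ^ 3) 1 1 := by
      rcases hy3 with h | h
      · rw [← h] 
        simp
      · have : sl a b c d ‹_› ^ 3 = -1 := by rw [h, neg_neg]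
        rw [this]
        simp
    rw [e, sl_mul, sl_mul] at k
    simp only [sl00, sl01, sl10, sl11] at k
    obtain ⟨k1, k2, k3⟩ := k
    apply hns
    refine ⟨?_, ?_, ?_⟩
    · refine ((mul_eq_zero (M₀ := F) (a := (a + d) ^ 2 - 1)).1 ?_).resolve_left hne'
      linear_combination k1 + b * h
    · refine ((mul_eq_zero (M₀ := F) (a := (a + d) ^ 2 - 1)).1 ?_).resolve_left hne'
      linear_combination k2 + c * h
    · apply sub_eq_zero.1
      refine ((mul_eq_zero (M₀ := F) (a := (a + d) ^ 2 - 1)).1 ?_).resolve_left hne'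
      linear_combination k3 + (a - d) * h
  have disc : (a - d) ^ 2 + b * c = 0 := by linear_combination hty - 4 * h - (1 + b * c) * h3
  have goal' : (p - w) ^ 2 + q * r = 0 → (p + w) ^ 2 = 1 := by
    intro h0
    linear_combination h0 + 4 * h' + (1 + q * r) * h3
  apply goal'
  by_cases hb : b = 0
  · by_cases hcc : c = 0
    · exfalso
      apply hns
      refine ⟨hb, hcc, ?_⟩
      rw [hb, hcc] at disc
      have : (a - d) ^ 2 = 0 := by linear_combination disc
      exact sub_eq_zero.1 (pow_eq_zero_iff (two_ne_zero) |>.1 this)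
    · refine ((mul_eq_zero (M₀ := F) (a := c ^ 2)).1 ?_).resolve_left (pow_ne_zero 2 hcc)
      linear_combination -(c * (p - w) + r * (a - d)) * c3 + c * r * c1 + r ^ 2 * disc
  · refine ((mul_eq_zero (M₀ := F) (a := b ^ 2)).1 ?_).resolve_left (pow_ne_zero 2 hb)
    linear_combination (b * (p - w) + q * (a - d)) * c2 - b * q * c1 + q ^ 2 * disc
end three

end PSLbasics


section Perm

variable {S0 X : Type} [Group S0] [Fintype S0] [Fintype X] [DecidableEq X]

/-- reduced permutation representation -/
def redPerm {A : Type} [Group A] [MulAction A X] (x0 : X) :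
    A →* Matrix {x : X // x ≠ x0} {x : X // x ≠ x0} ℂ where
  toFun a := Matrix.of fun x y =>
    (if (x : X) = a • (y : X) then 1 else 0) - (if (x : X) = a • x0 then 1 else 0)
  map_one' := by
    ext x y
    simp only [one_smul, Matrix.of_apply, x.2, if_false, sub_zero, Matrix.one_apply,
      Subtype.ext_iff]
  map_mul' := by
    intro a b
    ext x z
    simp only [Matrix.of_apply, Matrix.mul_apply]
    set h : X → ℂ := fun y => ((if (x : X) = a • y then 1 else 0) - (if (x : X) = a • x0 then 1 else 0))
      * ((if y = b • (z : X) then 1 else 0) - (if y = b • x0 then 1 else 0)) with hh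
    have e1 : ∑ y : {x : X // x ≠ x0}, h y = ∑ y, h y := by
      rw [Fintype.sum_eq_add_sum_subtype_ne h x0]
      simp [hh]
    rw [e1]
    simp only [hh, mul_sub, sub_mul, Finset.sum_sub_distrib, mul_ite, mul_one, mul_zero,
      Finset.sum_ite_eq', Finset.mem_univ, if_true, mul_smul]
    ring

lemma redPerm_trace {A : Type} [Group A] [MulAction A X] (x0 : X) (a : A) :
    (redPerm (X := X) x0 a).trace = (Fintype.card {x : X // a • x = x} : ℂ) - 1 := by
  simp only [Matrix.trace, Matrix.diag, redPerm, MonoidHom.coe_mk, OneHom.coe_mk, Matrix.of_apply]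
  set h : X → ℂ := fun y => (if y = a • y then 1 else 0) - (if y = a • x0 then 1 else 0) with hh
  have e1 : ∑ y : {x : X // x ≠ x0}, h y = ∑ y, h y := by
    rw [Fintype.sum_eq_add_sum_subtype_ne h x0]
    simp [hh]
  rw [e1]
  simp only [hh, Finset.sum_sub_distrib, Finset.sum_ite_eq', Finset.mem_univ, if_true]
  rw [Finset.sum_boole, Fintype.card_subtype]
  simp only [eq_comm]

lemma burnside2 [MulAction S0 X] (x0 x1 : X) (h01 : x0 ≠ x1)
    (h2 : ∀ P Q : X, P ≠ Q → ∃ s : S0, s • P = x0 ∧ s • Q = x1) :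
    ∑ s : S0, ((Fintype.card {x : X // s • x = x} : ℂ) - 1) *
      ((Fintype.card {x : X // s⁻¹ • x = x} : ℂ) - 1) = Nat.card S0 := by
  classical
  have hx : ∀ P : X, ∃ s : S0, s • P = x0 := by
    intro P
    by_cases h : P = x1
    · subst h
      obtain ⟨s, hs, _⟩ := h2 P x0 h01.symm
      exact ⟨s, hs⟩
    · obtain ⟨s, hs, _⟩ := h2 P x1 h
      exact ⟨s, hs⟩
  have hinv : ∀ s : S0, Fintype.card {x : X // s⁻¹ • x = x} = Fintype.card {x : X // s • x = x} := by
    intro s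
    apply Fintype.card_congr
    apply Equiv.subtypeEquivRight
    intro x
    rw [inv_smul_eq_iff, eq_comm]
  have s1 : ∑ s : S0, Fintype.card {x : X // s • x = x} = Fintype.card S0 := by
    have := MulAction.sum_card_fixedBy_eq_card_orbits_mul_card_group S0 X
    rw [show Fintype.card (Quotient (MulAction.orbitRel S0 X)) = 1 from ?_, one_mul] at this
    · rw [← this]; rfl
    · rw [Fintype.card_eq_one_iff]
      refine ⟨Quotient.mk _ x0, ?_⟩
      intro y
      induction y using Quotient.inductionOn with | _ y => ?_
      apply Quotient.sound
      obtain ⟨s, hs⟩ := hx y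
      exact ⟨s⁻¹, by simp [← hs]⟩
  have s2 : ∑ s : S0, (Fintype.card {x : X // s • x = x}) ^ 2 = 2 * Fintype.card S0 := by
    have := MulAction.sum_card_fixedBy_eq_card_orbits_mul_card_group S0 (X × X)
    rw [show Fintype.card (Quotient (MulAction.orbitRel S0 (X × X))) = 2 from ?_] at this
    · rw [← this]
      apply Finset.sum_congr rfl
      intro s _
      rw [pow_two, ← Fintype.card_prod]
      apply Fintype.card_congr
      exact 
        { toFun := fun p => ⟨(p.1.1, p.2.1), Prod.ext p.1.2 p.2.2⟩
          invFun := fun p => (⟨p.1.1, congrArg Prod.fst p.2⟩, ⟨p.1.2, congrArg Prod.snd p.2⟩)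
          left_inv := fun _ => rfl
          right_inv := fun _ => rfl }
    · rw [← Finset.card_univ, Finset.card_eq_two]
      refine ⟨Quotient.mk _ (x0, x0), Quotient.mk _ (x0, x1), ?_, ?_⟩
      · intro h
        obtain ⟨s, hs⟩ := Quotient.exact h
        have a1 := congrArg Prod.fst hs
        have a2 := congrArg Prod.snd hs
        simp only [Prod.smul_mk] at a1 a2
        apply h01
        exact (MulAction.injective s) (a1.trans a2.symm)
      · rw [eq_comm, Finset.eq_univ_iff_forall]
        intro y
        induction y using Quotient.inductionOn with | _ y => ?_
        obtain ⟨P, Q⟩ := y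
        simp only [Finset.mem_insert, Finset.mem_singleton]
        by_cases h : P = Q
        · subst h
          left
          apply Quotient.sound
          obtain ⟨s, hs⟩ := hx P
          exact ⟨s⁻¹, by simp [← hs]⟩
        · right
          apply Quotient.sound
          obtain ⟨s, hs, hs'⟩ := h2 P Q h
          exact ⟨s⁻¹, by simp [← hs, ← hs']⟩
  have s1' : ∑ s : S0, (Fintype.card {x : X // s • x = x} : ℂ) = Fintype.card S0 := by
    exact_mod_cast s1
  have s2' : ∑ s : S0, (Fintype.card {x : X // s • x = x} : ℂ) ^ 2 = 2 * Fintype.card S0 := by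
    exact_mod_cast s2
  simp only [hinv]
  have : ∀ s : S0, ((Fintype.card {x : X // s • x = x} : ℂ) - 1) *
      ((Fintype.card {x : X // s • x = x} : ℂ) - 1) = (Fintype.card {x : X // s • x = x} : ℂ) ^ 2
        - 2 * (Fintype.card {x : X // s • x = x} : ℂ) + 1 := by intro s; ring
  simp only [this, Finset.sum_add_distrib, Finset.sum_sub_distrib, ← Finset.mul_sum, s1', s2']
  simp

/-- The datum attached to a doubly transitive action. -/
def permDatum [MulAction (MulAut S0) X] (x0 x1 : X) (h01 : x0 ≠ x1)
    (h2 : ∀ P Q : X, P ≠ Q → ∃ s : S0, MulAut.conj s • P = x0 ∧ MulAut.conj s • Q = x1)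
    (hnc : ∃ s : S0, ∃ P : X, MulAut.conj s • P ≠ P) : Datum S0 where
  ι := {x : X // x ≠ x0}
  nι := ⟨x1, h01.symm⟩
  A := ⊤
  R := (redPerm (X := X) x0).comp (Subgroup.subtype _)
  χ s := (Fintype.card {x : X // MulAut.conj s • x = x} : ℂ) - 1
  hconj _ := trivial
  htr s := redPerm_trace x0 (MulAut.conj s)
  hfull _ _ := trivial
  hnorm := by
    let _ : MulAction S0 X := MulAction.compHom X (MulAut.conj (G := S0))
    exact burnside2 (S0 := S0) x0 x1 h01 h2
  hnc := by
    obtain ⟨s, P, hs⟩ := hnc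
    refine ⟨s, ?_⟩
    intro h
    have h' : Fintype.card {x : X // MulAut.conj s • x = x} =
        Fintype.card {x : X // MulAut.conj (1 : S0) • x = x} := by exact_mod_cast sub_left_injective h
    have h3 : Fintype.card {x : X // MulAut.conj (1 : S0) • x = x} = Fintype.card X := by
      simp
    rw [h3] at h'
    have := Fintype.card_subtype_lt (p := fun x : X => MulAut.conj s • x = x) hs
    omega

lemma permDatum_card [MulAction (MulAut S0) X] (x0 x1 : X) (h01 h2 hnc) :
    Fintype.card (permDatum (S0 := S0) x0 x1 h01 h2 hnc).ι + 1 = Fintype.card X := by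
  have : Fintype.card (permDatum (S0 := S0) x0 x1 h01 h2 hnc).ι = Fintype.card {x : X // x ≠ x0} :=
    rfl
  rw [this, Fintype.card_subtype_compl, Fintype.card_subtype_eq]
  have : 0 < Fintype.card X := Fintype.card_pos_iff.2 ⟨x0⟩
  omega

end Perm


section PSLSylow

variable {F : Type} [Field F] [Fintype F] [DecidableEq F]

lemma sl_card : Nat.card SL(2, F) = Fintype.card F * (Fintype.card F - 1) * (Fintype.card F + 1) := by
  classical
  let g : (F × Fˣ × F) ⊕ (Fˣ × F) → SL(2, F) := Sum.elim
    (fun p => sl p.1 ((p.1 * p.2.2 - 1) / (p.2.1 : F)) p.2.1 p.2.2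
      (by have := p.2.1.ne_zero; field_simp; ring))
    (fun p => sl p.1 p.2 0 (p.1 : F)⁻¹ (by have := p.1.ne_zero; field_simp; ring))
  have hg : Function.Bijective g := by
    constructor
    · rintro (⟨a, c, d⟩ | ⟨a, b⟩) (⟨a', c', d'⟩ | ⟨a', b'⟩) h
      · have h00 := congrArg (fun s : SL(2, F) => s 0 0) h
        have h10 := congrArg (fun s : SL(2, F) => s 1 0) h
        have h11 := congrArg (fun s : SL(2, F) => s 1 1) h
        simp only [g, Sum.elim_inl, sl00, sl10, sl11] at h00 h10 h11
        rw [h00, Units.ext h10, h11]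
      · have h10 := congrArg (fun s : SL(2, F) => s 1 0) h
        simp [g] at h10
      · have h10 := congrArg (fun s : SL(2, F) => s 1 0) h
        simp only [g, Sum.elim_inl, Sum.elim_inr, sl10] at h10
        exact absurd h10.symm c'.ne_zero
      · have h00 := congrArg (fun s : SL(2, F) => s 0 0) h
        have h01 := congrArg (fun s : SL(2, F) => s 0 1) h
        simp only [g, Sum.elim_inr, sl00, sl01] at h00 h01
        rw [h01, Units.ext h00]
    · intro s
      obtain ⟨a, b, c, d, h, rfl⟩ := exists_sl s
      by_cases hc : c = 0
      · subst hc
        have ha : a ≠ 0 := by rintro rfl; simp at h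
        refine ⟨Sum.inr (Units.mk0 a ha, b), ?_⟩
        apply sl_ext <;> simp [g]
        field_simp
        linear_combination -h
      · refine ⟨Sum.inl (a, Units.mk0 c hc, d), ?_⟩
        apply sl_ext <;> simp [g]
        field_simp
        linear_combination h
  rw [← Nat.card_eq_of_bijective g hg]
  simp only [Nat.card_eq_fintype_card, Fintype.card_sum, Fintype.card_prod, Fintype.card_units]
  ring

variable [CharP F 3]

lemma psl_card : 2 * Nat.card PSL(2, F) =
    Fintype.card F * (Fintype.card F - 1) * (Fintype.card F + 1) := by
  rw [← sl_card, Subgroup.card_eq_card_quotient_mul_card_subgroup (Subgroup.center SL(2, F)),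
    mul_comm]
  congr 1
  have : (Subgroup.center SL(2, F) : Set SL(2, F)) = {1, -1} := by
    ext x
    simp only [SetLike.mem_coe, Set.mem_insert_iff, Set.mem_singleton_iff]
    rw [← mkP_eq, eq_comm, map_one]
    exact (QuotientGroup.eq_one_iff x).symm
  change 2 = Nat.card (Subgroup.center SL(2, F) : Set SL(2, F))
  rw [this, Nat.card_coe_set_eq, Set.ncard_pair]
  intro h
  have := congrArg (fun s : SL(2, F) => s 0 0) h
  simp at this
  have h3 := three0 (F := F)
  have : (1 : F) = 0 := by linear_combination h3 - this
  exact one_ne_zero this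


/-- `U`. -/
def UU : Subgroup PSL(2, F) :=
  (MonoidHom.mk' (M := Multiplicative F) (fun b => mkP (uu b.toAdd))
    (by intro a b; rw [toAdd_mul, uu_add, map_mul])).range
/-- `U⁻`. -/
def LL : Subgroup PSL(2, F) :=
  (MonoidHom.mk' (M := Multiplicative F) (fun b => mkP (ll b.toAdd))
    (by intro a b; rw [toAdd_mul, ll_add, map_mul])).range

lemma mem_UU {x : PSL(2, F)} : x ∈ UU ↔ ∃ b, mkP (uu b) = x := Iff.rfl
lemma mem_LL {x : PSL(2, F)} : x ∈ LL ↔ ∃ b, mkP (ll b) = x := Iff.rfl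

lemma one_ne_neg : (1 : F) ≠ -1 := by
  intro h
  have h3 := three0 (F := F)
  have : (1 : F) = 0 := by linear_combination h3 - h
  exact one_ne_zero this

lemma uu_inj {a b : F} (h : mkP (uu a) = mkP (uu b)) : a = b := by
  rw [mkP_eq] at h
  rcases h with h | h
  · exact (congrArg (fun s : SL(2, F) => s 0 1) h).symm
  · have := congrArg (fun s : SL(2, F) => s 0 0) h
    exact absurd this one_ne_neg

lemma ll_inj {a b : F} (h : mkP (ll a) = mkP (ll b)) : a = b := by
  rw [mkP_eq] at h
  rcases h with h | h
  · exact (congrArg (fun s : SL(2, F) => s 1 0) h).symm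
  · have := congrArg (fun s : SL(2, F) => s 0 0) h
    exact absurd this one_ne_neg

lemma uu_ll {a b : F} (h : mkP (uu a) = mkP (ll b)) : a = 0 := by
  rw [mkP_eq] at h
  rcases h with h | h
  · exact (congrArg (fun s : SL(2, F) => s 0 1) h).symm
  · have := congrArg (fun s : SL(2, F) => s 0 0) h
    exact absurd this one_ne_neg

lemma UU_card : Nat.card (UU (F := F)) = Fintype.card F := by
  rw [← Nat.card_eq_fintype_card]
  refine (Nat.card_eq_of_bijective (fun b : F => (⟨mkP (uu b), b, rfl⟩ : UU (F := F))) ?_).symm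
  constructor
  · intro a b h
    exact uu_inj (congrArg Subtype.val h)
  · rintro ⟨_, b, rfl⟩
    exact ⟨b, rfl⟩

lemma LL_card : Nat.card (LL (F := F)) = Fintype.card F := by
  rw [← Nat.card_eq_fintype_card]
  refine (Nat.card_eq_of_bijective (fun b : F => (⟨mkP (ll b), b, rfl⟩ : LL (F := F))) ?_).symm
  constructor
  · intro a b h
    exact ll_inj (congrArg Subtype.val h)
  · rintro ⟨_, b, rfl⟩
    exact ⟨b, rfl⟩

lemma card_pow : ∃ k, 0 < k ∧ Fintype.card F = 3 ^ k := by
  obtain ⟨k, hk⟩ := FiniteField.card F 3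
  exact ⟨k, k.2, hk.2⟩

lemma card_dvd : 3 ∣ Fintype.card F := by
  obtain ⟨k, hk, h⟩ := card_pow (F := F)
  rw [h]; exact dvd_pow_self _ hk.ne'

lemma index_of_card (H : Subgroup PSL(2, F)) (h : Nat.card H = Fintype.card F) :
    2 * H.index = (Fintype.card F - 1) * (Fintype.card F + 1) := by
  have := psl_card (F := F)
  rw [← H.card_mul_index, h] at this
  have hp : 0 < Fintype.card F := Fintype.card_pos
  apply Nat.eq_of_mul_eq_mul_left hp
  rw [← mul_assoc (Fintype.card F) (Fintype.card F - 1), ← this]; ring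

lemma index_ndvd (H : Subgroup PSL(2, F)) (h : Nat.card H = Fintype.card F) : ¬ 3 ∣ H.index := by
  have h1 := index_of_card H h
  obtain ⟨k, hk⟩ := card_dvd (F := F)
  have hp : 0 < Fintype.card F := Fintype.card_pos
  intro h3
  have : 3 ∣ (Fintype.card F - 1) * (Fintype.card F + 1) := by
    rw [← h1]; exact Dvd.dvd.mul_left h3 2
  rcases (Nat.Prime.dvd_mul Nat.prime_three).1 this with h | h <;> omega

/-- Sylow -/
def US : Sylow 3 PSL(2, F) := IsPGroup.toSylow (P := UU)
  (by obtain ⟨k, _, hk⟩ := card_pow (F := F); exact IsPGroup.of_card (n := k) (UU_card.trans hk))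
  (index_ndvd _ UU_card)
/-- Sylow -/
def LS : Sylow 3 PSL(2, F) := IsPGroup.toSylow (P := LL)
  (by obtain ⟨k, _, hk⟩ := card_pow (F := F); exact IsPGroup.of_card (n := k) (LL_card.trans hk))
  (index_ndvd _ LL_card)

lemma US_coe : (US (F := F) : Subgroup PSL(2, F)) = UU := rfl
lemma LS_coe : (LS (F := F) : Subgroup PSL(2, F)) = LL := rfl

lemma sylow_le {P Q : Sylow 3 PSL(2, F)} (h : (P : Subgroup PSL(2, F)) ≤ Q) : P = Q :=
  Sylow.ext (P.3 Q.2 h).symm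

lemma smul_eq_of {x : PSL(2, F)} {P Q : Sylow 3 PSL(2, F)}
    (h : ∀ y ∈ P, x * y * x⁻¹ ∈ Q) : x • P = Q := by
  apply sylow_le
  rintro _ ⟨y, hy, rfl⟩
  exact h y hy

lemma borel_smul (a b d : F) (h : a * d - b * 0 = 1) : mkP (sl a b 0 d h) • (US (F := F)) = US := by
  apply smul_eq_of
  rintro _ ⟨t, rfl⟩
  refine ⟨a ^ 2 * t.toAdd, ?_⟩
  change mkP (uu (a ^ 2 * t.toAdd)) = mkP _ * mkP (uu t.toAdd) * _
  rw [← map_inv, ← map_mul, ← map_mul, uu, uu, sl_inv, sl_mul, sl_mul]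
  congr 1
  apply sl_ext <;> simp
  · linear_combination -h
  · ring
  · linear_combination -h

lemma ww_smul : mkP (ww (F := F)) • (US (F := F)) = LS := by
  apply smul_eq_of
  rintro _ ⟨t, rfl⟩
  refine ⟨-t.toAdd, ?_⟩
  change mkP (ll (-t.toAdd)) = mkP _ * mkP (uu t.toAdd) * _
  rw [← map_inv, ← map_mul, ← map_mul, uu, ll, ww, sl_inv, sl_mul, sl_mul]
  congr 1
  apply sl_ext <;> simp

lemma sylow_cases (P : Sylow 3 PSL(2, F)) : P = US ∨ ∃ x : F, P = mkP (uu x) • LS := by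
  obtain ⟨y, rfl⟩ := MulAction.exists_smul_eq PSL(2, F) US P
  obtain ⟨s, rfl⟩ := mkP_surj y
  obtain ⟨a, b, c, d, h, rfl⟩ := exists_sl s
  by_cases hc : c = 0
  · subst hc
    left; exact borel_smul _ _ _ _
  · right
    refine ⟨a / c, ?_⟩
    have : sl a b c d h = uu (a / c) * ww * sl c d 0 c⁻¹ (by field_simp; ring) := by
      rw [uu, ww, sl_mul, sl_mul]
      apply sl_ext <;> simp <;> field_simp
      linear_combination -h
    rw [this, map_mul, map_mul, mul_smul, borel_smul, mul_smul, ww_smul]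

lemma uu_US (x : F) : mkP (uu x) • US (F := F) = US := borel_smul _ _ _ _

lemma US_ne : US (F := F) ≠ LS := by
  intro h
  have : mkP (uu 1) ∈ LS (F := F) := by rw [← h]; exact mem_UU.2 ⟨1, rfl⟩
  obtain ⟨b, hb⟩ := mem_LL.1 this
  exact one_ne_zero (uu_ll hb.symm)

lemma uu_LS {x : F} (h : mkP (uu x) • LS (F := F) = LS) : x = 0 := by
  have h1 : mkP (uu x) * mkP (ll 1) * (mkP (uu x))⁻¹ ∈ LS (F := F) := by
    have : mkP (uu x) * mkP (ll 1) * (mkP (uu x))⁻¹ ∈ mkP (uu x) • LS (F := F) :=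
      ⟨mkP (ll 1), mem_LL.2 ⟨1, rfl⟩, rfl⟩
    rwa [h] at this
  obtain ⟨b, hb⟩ := mem_LL.1 h1
  rw [← map_inv, ← map_mul, ← map_mul, mkP_eq, uu, ll, ll, sl_inv, sl_mul, sl_mul] at hb
  have : x * x = 0 := by
    rcases hb with h | h
    · have := congrArg (fun s : SL(2, F) => s 0 1) h
      simp only [sl01, Matrix.SpecialLinearGroup.coe_neg, Matrix.neg_apply] at this
      linear_combination -this
    · have := congrArg (fun s : SL(2, F) => s 0 1) h
      simp only [sl01, Matrix.SpecialLinearGroup.coe_neg, Matrix.neg_apply] at this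
      linear_combination -this
  exact mul_self_eq_zero.1 this

instance : Fintype (Sylow 3 PSL(2, F)) := Fintype.ofFinite _

lemma sylow_card : Fintype.card (Sylow 3 PSL(2, F)) = Fintype.card F + 1 := by
  rw [← Fintype.card_option]
  symm
  apply Fintype.card_of_bijective
    (f := fun o : Option F => o.elim US (fun x => mkP (uu x) • LS))
  constructor
  · rintro (_ | x) (_ | y) h
    · rfl
    · simp only [Option.elim] at h
      rw [← inv_smul_eq_iff, ← map_inv] at h
      have : (uu y)⁻¹ = uu (-y) := by rw [inv_eq_iff_mul_eq_one, ← uu_add, add_neg_cancel, uu, sl_one]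
      rw [this, uu_US] at h
      exact absurd h US_ne
    · simp only [Option.elim] at h
      rw [eq_comm, ← inv_smul_eq_iff, ← map_inv] at h
      have : (uu x)⁻¹ = uu (-x) := by rw [inv_eq_iff_mul_eq_one, ← uu_add, add_neg_cancel, uu, sl_one]
      rw [this, uu_US] at h
      exact absurd h US_ne
    · simp only [Option.elim] at h
      rw [← inv_smul_eq_iff, ← map_inv, ← mul_smul, ← map_mul] at h
      have : (uu y)⁻¹ = uu (-y) := by rw [inv_eq_iff_mul_eq_one, ← uu_add, add_neg_cancel, uu, sl_one]
      rw [this, ← uu_add] at h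
      have := uu_LS h
      congr 1
      linear_combination this
  · intro P
    rcases sylow_cases P with rfl | ⟨x, rfl⟩
    · exact ⟨none, rfl⟩
    · exact ⟨some x, rfl⟩

lemma sylow_two (P Q : Sylow 3 PSL(2, F)) (h : P ≠ Q) :
    ∃ s : PSL(2, F), s • P = US ∧ s • Q = LS := by
  obtain ⟨y, hy⟩ := MulAction.exists_smul_eq PSL(2, F) P US
  rcases sylow_cases (y • Q) with h1 | ⟨x, hx⟩
  · exfalso
    apply h
    rw [← h1] at hy
    exact MulAction.injective y hy
  · refine ⟨mkP (uu (-x)) * y, ?_, ?_⟩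
    · rw [mul_smul, hy, uu_US]
    · rw [mul_smul, hx, ← mul_smul, ← map_mul, ← uu_add, neg_add_cancel]
      have : uu (0 : F) = 1 := by rw [uu, sl_one]
      rw [this, map_one, one_smul]

lemma conj_smul (s : PSL(2, F)) (P : Sylow 3 PSL(2, F)) : MulAut.conj s • P = s • P := rfl

instance : Fintype PSL(2, F) := Fintype.ofFinite _

/-- The Steinberg datum. -/
lemma steinberg : ∃ D : Datum PSL(2, F), D.A = ⊤ ∧ Fintype.card D.ι = Fintype.card F := by
  classical
  have hnc : ∃ s : PSL(2, F), ∃ P : Sylow 3 PSL(2, F), MulAut.conj s • P ≠ P := by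
    refine ⟨mkP (uu 1), LS, ?_⟩
    rw [conj_smul]
    intro h
    exact one_ne_zero (uu_LS h)
  refine ⟨permDatum (S0 := PSL(2, F)) (X := Sylow 3 PSL(2, F)) US LS US_ne sylow_two hnc, rfl, ?_⟩
  have := permDatum_card (S0 := PSL(2, F)) (X := Sylow 3 PSL(2, F)) US LS US_ne sylow_two hnc
  rw [sylow_card] at this
  omega

end PSLSylow


section Gauss

variable {F : Type} [Field F] [Fintype F] [DecidableEq F] [CharP F 3]

lemma exists_psi : ∃ ψ : AddChar F ℂ, ψ.IsPrimitive ∧ ∀ (σ : F ≃+* F) (x : F), ψ (σ x) = ψ x := by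
  let _ : Algebra (ZMod 3) F := ZMod.algebra F 3
  refine ⟨(ZMod.stdAddChar (N := 3)).compAddMonoidHom
    (Algebra.trace (ZMod 3) F).toAddMonoidHom, ?_, ?_⟩
  · apply AddChar.IsPrimitive.of_ne_one
    intro h
    have hs : Function.Surjective (Algebra.trace (ZMod 3) F) := Algebra.trace_surjective _ _
    obtain ⟨x, hx⟩ := hs 1
    have h1 := DFunLike.congr_fun h x
    change ZMod.stdAddChar (N := 3) (Algebra.trace (ZMod 3) F x) = 1 at h1
    rw [hx, ← AddChar.map_zero_eq_one (ZMod.stdAddChar (N := 3))] at h1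
    exact absurd (ZMod.injective_stdAddChar h1) (by decide)
  · intro σ x
    let τ : F ≃ₐ[ZMod 3] F := AlgEquiv.ofRingEquiv (f := σ) (by
      intro r
      have : (σ.toRingHom.comp (algebraMap (ZMod 3) F)) = algebraMap (ZMod 3) F :=
        Subsingleton.elim _ _
      exact RingHom.congr_fun this r)
    change ZMod.stdAddChar (N := 3) (Algebra.trace (ZMod 3) F (τ x))
      = ZMod.stdAddChar (N := 3) (Algebra.trace (ZMod 3) F x)
    rw [Algebra.trace_eq_of_algEquiv τ x]

/-- quadratic character, complex valued -/
def etaC : MulChar F ℂ := (quadraticChar F).ringHomComp (Int.castRingHom ℂ)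

lemma ringChar3 : ringChar F ≠ 2 := by
  rw [ringChar.eq F 3]; norm_num

lemma etaC_quad : (etaC (F := F)).IsQuadratic := (quadraticChar_isQuadratic F).comp _

lemma etaC_ne : (etaC (F := F)) ≠ 1 := by
  rw [etaC, Ne, MulChar.ringHomComp_eq_one_iff]
  · exact quadraticChar_ne_one ringChar3
  · exact Int.cast_injective

lemma eta_sq {x : F} (hx : x ≠ 0) : etaC x * etaC x = 1 := by
  have := quadraticChar_sq_one hx
  rw [← pow_two, etaC, MulChar.ringHomComp_apply, ← map_pow, this]
  simp

lemma eta_inv (x : F) : etaC x⁻¹ = etaC x := by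
  by_cases hx : x = 0
  · simp [hx]
  · have h1 : etaC x * etaC x⁻¹ = 1 := by rw [← map_mul, mul_inv_cancel₀ hx, map_one]
    have h2 := eta_sq hx
    have h3 : etaC x ≠ 0 := left_ne_zero_of_mul_eq_one h1
    exact mul_left_cancel₀ h3 (h1.trans h2.symm)

lemma eta_of_sq {x : F} (hx : x ≠ 0) : etaC (x ^ 2) = 1 := by rw [pow_two, map_mul, eta_sq hx]

lemma eta_cases {x : F} (hx : x ≠ 0) : IsSquare x ∧ etaC x = 1 ∨ etaC x = -1 := by
  by_cases h : IsSquare x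
  · left; refine ⟨h, ?_⟩
    obtain ⟨y, rfl⟩ := h
    rw [← pow_two]
    apply eta_of_sq
    rintro rfl; simp at hx
  · right
    rw [etaC, MulChar.ringHomComp_apply, quadraticChar_neg_one_iff_not_isSquare.2 h]
    simp

variable [hq : Fact (Fintype.card F % 4 = 3)]

lemma eta_neg_one : etaC (-1 : F) = -1 := by
  rw [etaC, MulChar.ringHomComp_apply, quadraticChar_neg_one_iff_not_isSquare.2]
  · simp
  · rw [FiniteField.isSquare_neg_one_iff]; simp [hq.out]

lemma eta_neg (x : F) : etaC (-x) = -etaC x := by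
  rw [← neg_one_mul, map_mul, eta_neg_one]; ring

variable (ψ : AddChar F ℂ)

/-- Gauss sum -/
def gs : ℂ := gaussSum etaC ψ

variable {ψ} (hψ : ψ.IsPrimitive)
include hψ

lemma gs_sq : gs ψ * gs ψ = - (Fintype.card F : ℂ) := by
  rw [← pow_two, gs, gaussSum_sq etaC_ne etaC_quad hψ, eta_neg_one]; ring

lemma gs_ne : gs ψ ≠ 0 := by
  intro h
  have := gs_sq hψ
  rw [h] at this
  simp at this

lemma psi_sum (B : F) : ∑ y, ψ (B * y) = if B = 0 then (Fintype.card F : ℂ) else 0 := by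
  have := AddChar.sum_mulShift B hψ
  simp only [mul_comm B]
  exact_mod_cast this

lemma sq_sum {A : F} (hA : A ≠ 0) : ∑ y, ψ (A * y ^ 2) = etaC A * gs ψ := by
  have h1 : ∀ f : F → ℂ, ∑ y, f (y ^ 2) = ∑ z, (etaC z + 1) * f z := by
    intro f
    rw [← Finset.sum_fiberwise_of_maps_to (g := fun y : F => y ^ 2) (t := Finset.univ)
      (fun _ _ => Finset.mem_univ _)]
    apply Finset.sum_congr rfl
    intro z _
    rw [Finset.sum_congr rfl (g := fun _ => f z)]
    · rw [Finset.sum_const, nsmul_eq_mul]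
      congr 1
      have := quadraticChar_card_sqrts (F := F) ringChar3 z
      have h2 := congrArg (fun n : ℤ => (n : ℂ)) this
      simp only [Int.cast_natCast, Int.cast_add, Int.cast_one] at h2
      rw [etaC, MulChar.ringHomComp_apply, Int.coe_castRingHom, ← h2]
      congr 2
      ext y
      simp
    · intro y hy
      simp only [Finset.mem_filter] at hy
      rw [hy.2]
  rw [h1 (fun z => ψ (A * z))]
  simp only [add_mul, one_mul, Finset.sum_add_distrib]
  rw [psi_sum hψ, if_neg hA, add_zero]
  have := gaussSum_mulShift (etaC (F := F)) ψ (Units.mk0 A hA)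
  rw [gs, ← this, ← mul_assoc, Units.val_mk0, eta_sq hA, one_mul]
  rfl

lemma quad_sum {A : F} (hA : A ≠ 0) (B : F) :
    ∑ y, ψ (A * y ^ 2 + B * y) = ψ (-B ^ 2 / A) * etaC A * gs ψ := by
  rw [mul_assoc, ← sq_sum hψ hA, ← Equiv.sum_comp (Equiv.subRight (B / A)) (fun y => ψ (A * y ^ 2)), Finset.mul_sum]
  apply Finset.sum_congr rfl
  intro y _
  rw [← AddChar.map_add_eq_mul]
  congr 1
  simp only [Equiv.subRight_apply]
  have h3 := three0 (F := F)
  field_simp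
  linear_combination (A * B * y) * h3

end Gauss


section Weil

variable {F : Type} [Field F] [Fintype F] [DecidableEq F] [CharP F 3]
  [hq : Fact (Fintype.card F % 4 = 3)]

/-- Weil kernel -/
def wk (ψ : AddChar F ℂ) (a b c d : F) (x y : F) : ℂ :=
  if c = 0 then (if y = a * x then etaC a * ψ (a * b * x ^ 2) else 0)
  else etaC c * (gs ψ)⁻¹ * ψ ((a * x ^ 2 + x * y + d * y ^ 2) / c)

lemma wk_zero (ψ : AddChar F ℂ) (a b d x y : F) :
    wk ψ a b 0 d x y = if y = a * x then etaC a * ψ (a * b * x ^ 2) else 0 := if_pos rfl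

lemma wk_ne (ψ : AddChar F ℂ) (a b d x y : F) {c : F} (hc : c ≠ 0) :
    wk ψ a b c d x y = etaC c * (gs ψ)⁻¹ * ψ ((a * x ^ 2 + x * y + d * y ^ 2) / c) := if_neg hc

lemma wk_mul {ψ : AddChar F ℂ} (hψ : ψ.IsPrimitive) (a b c d : F) (h : a * d - b * c = 1)
    (a' b' c' d' : F) (h' : a' * d' - b' * c' = 1) (x z : F) :
    ∑ y, wk ψ a b c d x y * wk ψ a' b' c' d' y z =
      wk ψ (a * a' + b * c') (a * b' + b * d') (c * a' + d * c') (c * b' + d * d') x z := by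
  have h3 := three0 (F := F)
  have hg := gs_ne hψ
  by_cases hc : c = 0
  · subst hc
    have had : a * d = 1 := by linear_combination h
    have ha : a ≠ 0 := left_ne_zero_of_mul_eq_one had
    have hd : d ≠ 0 := right_ne_zero_of_mul_eq_one had
    have hda : d = a⁻¹ := eq_inv_of_mul_eq_one_right had
    simp only [wk_zero, ite_mul, zero_mul, Finset.sum_ite_eq', Finset.mem_univ, if_true]
    by_cases hc' : c' = 0
    · subst hc'
      have had' : a' * d' = 1 := by linear_combination h'
      simp only [zero_mul, mul_zero, add_zero, zero_add, wk_zero]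
      by_cases hz : z = a' * (a * x)
      · rw [if_pos hz, if_pos (by rw [hz]; ring)]
        rw [mul_mul_mul_comm, ← map_mul, ← AddChar.map_add_eq_mul]
        congr 2
        linear_combination -a * b * x ^ 2 * had'
      · rw [if_neg hz, if_neg (by intro h; apply hz; rw [h]; ring), mul_zero]
    · have hdc : (0 : F) + d * c' ≠ 0 := by simpa using ⟨hd, hc'⟩
      rw [wk_ne _ _ _ _ _ _ hc', wk_ne _ _ _ _ _ _ hdc]
      have e1 : etaC ((0 : F) + d * c') = etaC a * etaC c' := by
        rw [zero_add, map_mul, hda, eta_inv]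
      rw [e1]
      have e2 : etaC a * ψ (a * b * x ^ 2) * (etaC c' * (gs ψ)⁻¹ *
          ψ ((a' * (a * x) ^ 2 + a * x * z + d' * z ^ 2) / c')) = etaC a * etaC c' * (gs ψ)⁻¹ *
          (ψ (a * b * x ^ 2) * ψ ((a' * (a * x) ^ 2 + a * x * z + d' * z ^ 2) / c')) := by ring
      rw [e2, ← AddChar.map_add_eq_mul]
      congr 2
      have e7 : (0 : F) + d * c' = c' / a := by rw [hda]; field_simp; ring
      rw [e7, hda, zero_add, div_div_eq_mul_div, eq_div_iff hc', add_mul, div_mul_cancel₀ _ hc']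
      field_simp
      ring
  · by_cases hc' : c' = 0
    · subst hc'
      have had' : a' * d' = 1 := by linear_combination h'
      have ha' : a' ≠ 0 := left_ne_zero_of_mul_eq_one had'
      have hda : d' = a'⁻¹ := eq_inv_of_mul_eq_one_right had'
      have hz : ∀ y, (z = a' * y) = (y = d' * z) := by
        intro y
        apply propext
        constructor
        · rintro rfl; linear_combination -y * had'
        · rintro rfl; linear_combination -z * had'
      simp only [wk_zero, hz, mul_ite, mul_zero, Finset.sum_ite_eq', Finset.mem_univ, if_true]
      have hca : c * a' + 0 ≠ 0 := by simpa using ⟨hc, ha'⟩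
      rw [wk_ne _ _ _ _ _ _ hc, wk_ne _ _ _ _ _ _ hca]
      have e2 : etaC c * (gs ψ)⁻¹ * ψ ((a * x ^ 2 + x * (d' * z) + d * (d' * z) ^ 2) / c) *
        (etaC a' * ψ (a' * b' * (d' * z) ^ 2)) = etaC c * etaC a' * (gs ψ)⁻¹ *
        (ψ ((a * x ^ 2 + x * (d' * z) + d * (d' * z) ^ 2) / c) * ψ (a' * b' * (d' * z) ^ 2)) := by
        ring
      rw [e2, ← AddChar.map_add_eq_mul, add_zero, map_mul]
      congr 2
      rw [hda]
      field_simp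
      ring
    · simp only [wk_ne _ _ _ _ _ _ hc, wk_ne _ _ _ _ _ _ hc']
      have e1 : ∀ y, etaC c * (gs ψ)⁻¹ * ψ ((a * x ^ 2 + x * y + d * y ^ 2) / c) *
          (etaC c' * (gs ψ)⁻¹ * ψ ((a' * y ^ 2 + y * z + d' * z ^ 2) / c')) =
          etaC c * etaC c' * (gs ψ)⁻¹ * (gs ψ)⁻¹ * ψ (a * x ^ 2 / c + d' * z ^ 2 / c') *
          ψ ((c * a' + d * c') / (c * c') * y ^ 2 + (x / c + z / c') * y) := by
        intro y
        have : ψ ((a * x ^ 2 + x * y + d * y ^ 2) / c) * ψ ((a' * y ^ 2 + y * z + d' * z ^ 2) / c')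
          = ψ (a * x ^ 2 / c + d' * z ^ 2 / c') *
          ψ ((c * a' + d * c') / (c * c') * y ^ 2 + (x / c + z / c') * y) := by
          rw [← AddChar.map_add_eq_mul, ← AddChar.map_add_eq_mul]
          congr 1
          field_simp
          ring
        linear_combination etaC c * etaC c' * (gs ψ)⁻¹ * (gs ψ)⁻¹ * this
      simp only [e1, ← Finset.mul_sum]
      by_cases hcc : c * a' + d * c' = 0
      · rw [hcc]
        simp only [zero_div, zero_mul, zero_add]
        rw [psi_sum hψ, wk_zero]
        have ha'' : a * a' + b * c' = - c' / c := by
          field_simp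
          linear_combination a * hcc - c' * h
        have hz : (x / c + z / c' = 0) ↔ z = (a * a' + b * c') * x := by
          rw [ha'']
          field_simp
          constructor
          · intro h; linear_combination h
          · intro h; linear_combination h
        by_cases hzz : x / c + z / c' = 0
        · rw [if_pos hzz, if_pos (hz.1 hzz)]
          have hgs := gs_sq hψ
          have e3 : etaC (a * a' + b * c') = - (etaC c * etaC c') := by
            rw [ha'', div_eq_mul_inv, map_mul, eta_inv, eta_neg]; ring
          have e4 : ψ (a * x ^ 2 / c + d' * z ^ 2 / c') =
              ψ ((a * a' + b * c') * (a * b' + b * d') * x ^ 2) := by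
            congr 1
            rw [hz.1 hzz, ha'']
            have ha1 : a' = - d * c' / c := by field_simp; linear_combination hcc
            have hb : b = (a * d - 1) / c := by field_simp; linear_combination -h
            have hb' : b' = (a' * d' - 1) / c' := by field_simp; linear_combination -h'
            rw [hb', ha1, hb]
            field_simp
            ring
          have e5 : (Fintype.card F : ℂ) = - (gs ψ * gs ψ) := by rw [hgs]; ring
          rw [e3, e4, e5]
          field_simp
        · rw [if_neg hzz, if_neg (fun h => hzz (hz.2 h)), mul_zero]
      · have hA : (c * a' + d * c') / (c * c') ≠ 0 := div_ne_zero hcc (mul_ne_zero hc hc')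
        rw [quad_sum hψ hA, wk_ne _ _ _ _ _ _ hcc]
        have e3 : etaC ((c * a' + d * c') / (c * c')) =
            etaC (c * a' + d * c') * (etaC c * etaC c') := by
          rw [div_eq_mul_inv, map_mul, eta_inv, map_mul]
        have e4 : ψ (a * x ^ 2 / c + d' * z ^ 2 / c') *
            ψ (-(x / c + z / c') ^ 2 / ((c * a' + d * c') / (c * c'))) =
            ψ (((a * a' + b * c') * x ^ 2 + x * z + (c * b' + d * d') * z ^ 2)
              / (c * a' + d * c')) := by
          rw [← AddChar.map_add_eq_mul]
          congr 1
          have hcc2 : c * a' + c' * d ≠ 0 := by rwa [mul_comm c' d]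
          field_simp
          linear_combination c' ^ 2 * x ^ 2 * h + c ^ 2 * z ^ 2 * h' - c * c' * x * z * h3
        have e5 := eta_sq hc
        have e6 := eta_sq hc'
        rw [e3, ← e4]
        have hgg : (gs ψ)⁻¹ * gs ψ = 1 := inv_mul_cancel₀ hg
        generalize ψ (a * x ^ 2 / c + d' * z ^ 2 / c') = P
        generalize ψ (-(x / c + z / c') ^ 2 / ((c * a' + d * c') / (c * c'))) = Q
        generalize etaC (c * a' + d * c') = η
        linear_combination (η * P * Q * (gs ψ)⁻¹) * (etaC c ^ 2 * etaC c' ^ 2 * hgg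
          + etaC c' ^ 2 * e5 + e6)

end Weil


section HalfWeil

variable {F : Type} [Field F] [Fintype F] [DecidableEq F] [CharP F 3]
  [hq : Fact (Fintype.card F % 4 = 3)]

/-- nonzero squares -/
def QQ (F : Type) [Field F] : Type := {x : F // x ≠ 0 ∧ IsSquare x}

instance : Fintype (QQ F) := @Fintype.ofFinite _ (inferInstanceAs (Finite {x : F // x ≠ 0 ∧ IsSquare x}))
instance : DecidableEq (QQ F) := inferInstanceAs (DecidableEq {x : F // x ≠ 0 ∧ IsSquare x})
instance : Nonempty (QQ F) := ⟨⟨1, one_ne_zero, 1, by ring⟩⟩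

lemma QQ_eta (x : QQ F) : etaC x.1 = 1 := by
  obtain ⟨x, hx, y, rfl⟩ := x
  change etaC (y * y) = 1
  rw [← pow_two]
  apply eta_of_sq
  rintro rfl; simp at hx

lemma QQ_neg (x y : QQ F) : x.1 ≠ - y.1 := by
  intro h
  have := QQ_eta x
  rw [h, eta_neg, QQ_eta] at this
  norm_num at this

lemma sq_or_neg {x : F} (hx : x ≠ 0) : IsSquare x ∨ IsSquare (-x) := by
  rcases eta_cases hx with h | h
  · left; exact h.1
  · rcases eta_cases (neg_ne_zero.2 hx) with h' | h'
    · right; exact h'.1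
    · rw [eta_neg, h] at h'; norm_num at h'

lemma QQ_bij : Function.Bijective (fun o : Option (QQ F ⊕ QQ F) =>
    (o.elim 0 (Sum.elim (fun x => x.1) (fun x => - x.1)) : F)) := by
  constructor
  · rintro (_ | x | x) (_ | y | y) h
    · rfl
    · exact absurd h.symm y.2.1
    · exact absurd h.symm (neg_ne_zero.2 y.2.1)
    · exact absurd h x.2.1
    · exact congrArg (fun x => some (Sum.inl x)) (Subtype.ext h)
    · exact absurd h (QQ_neg x y)
    · exact absurd h (neg_ne_zero.2 x.2.1)
    · exact absurd h.symm (QQ_neg y x)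
    · exact congrArg (fun x => some (Sum.inr x)) (Subtype.ext (neg_injective h))
  · intro y
    by_cases hy : y = 0
    · exact ⟨none, hy.symm⟩
    · rcases sq_or_neg hy with h | h
      · exact ⟨some (Sum.inl ⟨y, hy, h⟩), rfl⟩
      · exact ⟨some (Sum.inr ⟨-y, neg_ne_zero.2 hy, h⟩), neg_neg y⟩

lemma QQ_sum (E : F → ℂ) : ∑ y, E y = E 0 + ∑ y : QQ F, (E y.1 + E (-y.1)) := by
  rw [← (QQ_bij (F := F)).sum_comp E, Fintype.sum_option, Fintype.sum_sum_type,
    Finset.sum_add_distrib]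
  rfl

lemma QQ_card : Fintype.card F = 1 + 2 * Fintype.card (QQ F) := by
  rw [← Fintype.card_of_bijective (QQ_bij (F := F)), Fintype.card_option, Fintype.card_sum]
  ring

lemma wk_neg (ψ : AddChar F ℂ) (a b c d x y : F) : wk ψ a b c d (-x) (-y) = wk ψ a b c d x y := by
  simp only [wk, neg_sq, neg_mul, neg_neg, mul_neg, neg_inj]

lemma wk_neg' (ψ : AddChar F ℂ) (a b c d x y : F) : wk ψ a b c d (-x) y = wk ψ a b c d x (-y) := by
  rw [← wk_neg, neg_neg]

/-- half Weil representation of `SL₂` -/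
def hw {ψ : AddChar F ℂ} (hψ : ψ.IsPrimitive) : SL(2, F) →* Matrix (QQ F) (QQ F) ℂ where
  toFun s := Matrix.of fun x y => wk ψ (s 0 0) (s 0 1) (s 1 0) (s 1 1) x.1 y.1 -
    wk ψ (s 0 0) (s 0 1) (s 1 0) (s 1 1) x.1 (-y.1)
  map_one' := by
    ext x y
    simp only [Matrix.SpecialLinearGroup.coe_one, Matrix.of_apply, Matrix.one_apply]
    have h1 : ¬ (-y.1 = x.1) := fun h => QQ_neg x y h.symm
    have h2 : (y.1 = x.1) ↔ x = y := by rw [eq_comm]; exact Subtype.ext_iff.symm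
    simp [wk, h1, h2]
  map_mul' := by
    intro s t
    ext x z
    simp only [Matrix.of_apply, Matrix.mul_apply, slm00, slm01, slm10, slm11]
    rw [← wk_mul hψ _ _ _ _ (sl_det s) _ _ _ _ (sl_det t),
      ← wk_mul hψ _ _ _ _ (sl_det s) _ _ _ _ (sl_det t), ← Finset.sum_sub_distrib, QQ_sum]
    have h0 : wk ψ (t 0 0) (t 0 1) (t 1 0) (t 1 1) 0 (-z.1) =
        wk ψ (t 0 0) (t 0 1) (t 1 0) (t 1 1) 0 z.1 := by
      rw [← wk_neg', neg_zero]
    rw [h0, sub_self, zero_add]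
    apply Finset.sum_congr rfl
    intro y _
    rw [wk_neg', wk_neg', neg_neg]
    ring

/-- half Weil representation of `PSL₂` -/
def hwP {ψ : AddChar F ℂ} (hψ : ψ.IsPrimitive) : PSL(2, F) →* Matrix (QQ F) (QQ F) ℂ :=
  QuotientGroup.lift _ (hw hψ) (by
    intro s hs
    have : mkP s = mkP 1 := by rw [map_one]; exact (QuotientGroup.eq_one_iff s).2 hs
    rw [eq_comm, mkP_eq] at this
    rw [MonoidHom.mem_ker]
    rcases this with rfl | rfl
    · exact map_one _
    · ext x y
      simp only [hw, MonoidHom.coe_mk, OneHom.coe_mk, Matrix.of_apply, Matrix.one_apply]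
      have h1 : ¬ (y.1 = - x.1) := QQ_neg y x
      have h2 : (y.1 = x.1) ↔ x = y := by rw [eq_comm]; exact Subtype.ext_iff.symm
      simp [wk, h1, h2, eta_neg_one]
      split_ifs <;> simp)

lemma hwP_mk {ψ : AddChar F ℂ} (hψ : ψ.IsPrimitive) (s : SL(2, F)) : hwP hψ (mkP s) = hw hψ s := rfl

lemma hw_uu {ψ : AddChar F ℂ} (hψ : ψ.IsPrimitive) (b : F) :
    hw hψ (uu b) = Matrix.diagonal (fun x : QQ F => ψ (b * x.1 ^ 2)) := by
  ext x y
  have h1 : ¬ (-y.1 = x.1) := fun h => QQ_neg x y h.symm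
  have h2 : (y.1 = x.1) ↔ x = y := by rw [eq_comm]; exact Subtype.ext_iff.symm
  simp [hw, wk, uu, h1, h2, Matrix.diagonal_apply]

lemma hw_dd {ψ : AddChar F ℂ} (hψ : ψ.IsPrimitive) (a : QQ F) (x y : QQ F) :
    hw hψ (dd a.1 a.2.1) x y = if y.1 = a.1 * x.1 then 1 else 0 := by
  have h1 : ¬ (-y.1 = a.1 * x.1) := by
    intro h
    have h2 := congrArg etaC h
    rw [eta_neg, map_mul, QQ_eta, QQ_eta, QQ_eta] at h2
    norm_num at h2
  simp [hw, wk, dd, h1, QQ_eta]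

lemma hw_schur {ψ : AddChar F ℂ} (hψ : ψ.IsPrimitive) : Schur (hwP hψ) := by
  intro X hX
  have hd : ∀ x y : QQ F, x ≠ y → X x y = 0 := by
    intro x y hxy
    have hne : y.1 ^ 2 - x.1 ^ 2 ≠ 0 := by
      intro h
      have : (y.1 - x.1) * (y.1 + x.1) = 0 := by linear_combination h
      rcases mul_eq_zero.1 this with h | h
      · exact hxy (Subtype.ext (sub_eq_zero.1 h).symm)
      · exact QQ_neg y x (by linear_combination h)
    by_contra hX0
    apply hψ hne
    ext b
    rw [AddChar.mulShift_apply, AddChar.one_apply]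
    have h1 := congrFun (congrFun (hX (mkP (uu b))) x) y
    rw [hwP_mk, hw_uu, Matrix.mul_diagonal, Matrix.diagonal_mul] at h1
    have h2 : ψ (b * y.1 ^ 2) = ψ (b * x.1 ^ 2) := mul_left_cancel₀ hX0 (by linear_combination h1)
    have h3 : (y.1 ^ 2 - x.1 ^ 2) * b = b * y.1 ^ 2 + -(b * x.1 ^ 2) := by ring
    rw [h3, AddChar.map_add_eq_mul, h2, ← AddChar.map_add_eq_mul]
    simp
  let o : QQ F := ⟨1, one_ne_zero, 1, by ring⟩
  refine ⟨X o o, ?_⟩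
  ext x y
  by_cases hxy : x = y
  · subst hxy
    have h1 := congrFun (congrFun (hX (mkP (dd x.1 x.2.1))) o) x
    rw [hwP_mk, Matrix.mul_apply, Matrix.mul_apply, Finset.sum_eq_single o,
      Finset.sum_eq_single x] at h1
    · simp only [hw_dd] at h1
      simp [o] at h1
      simp [h1, o]
    · intro z _ hz
      rw [hd z x hz, mul_zero]
    · simp
    · intro z _ hz
      rw [hd o z hz.symm, zero_mul]
    · simp
  · rw [hd x y hxy]
    simp [hxy]

lemma hw_tr {ψ : AddChar F ℂ} (hψ : ψ.IsPrimitive) :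
    (hwP hψ (mkP (uu 1))).trace ≠ (hwP hψ (mkP (uu (-1)))).trace := by
  intro h
  rw [hwP_mk, hwP_mk, hw_uu, hw_uu, Matrix.trace_diagonal, Matrix.trace_diagonal] at h
  have h1 := sq_sum hψ (one_ne_zero (α := F))
  have h2 := sq_sum hψ (neg_ne_zero.2 (one_ne_zero (α := F)))
  rw [QQ_sum] at h1 h2
  simp only [neg_sq, ← two_mul, ← Finset.mul_sum] at h1 h2
  rw [eta_neg_one] at h2
  rw [map_one] at h1
  apply gs_ne hψ
  simp at h1 h2 h
  rw [← h] at h2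
  linear_combination (h2 - h1) / 2

end HalfWeil

section AutPSL

variable {F : Type} [Field F]

/-- automorphism of `PSL` from one of `SL` -/
def pa : MulAut SL(2, F) →* MulAut PSL(2, F) where
  toFun a := QuotientGroup.congr _ _ a (Subgroup.characteristic_iff_map_eq.1 inferInstance a)
  map_one' := by
    ext x
    obtain ⟨s, rfl⟩ := mkP_surj x
    rfl
  map_mul' a b := by
    ext x
    obtain ⟨s, rfl⟩ := mkP_surj x
    rfl

lemma pa_mk (a : MulAut SL(2, F)) (s : SL(2, F)) : pa a (mkP s) = mkP (a s) := rfl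

/-- field automorphism on `SL` -/
def fS : RingAut F →* MulAut SL(2, F) where
  toFun σ :=
    { toFun := fun s => sl (σ (s 0 0)) (σ (s 0 1)) (σ (s 1 0)) (σ (s 1 1)) (by
        rw [← map_mul, ← map_mul, ← map_sub, sl_det, map_one])
      invFun := fun s => sl (σ.symm (s 0 0)) (σ.symm (s 0 1)) (σ.symm (s 1 0)) (σ.symm (s 1 1)) (by
        rw [← map_mul, ← map_mul, ← map_sub, sl_det, map_one])
      left_inv := fun s => by apply sl_ext <;> simp
      right_inv := fun s => by apply sl_ext <;> simp
      map_mul' := fun s t => by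
        rw [sl_mul]
        apply sl_ext <;> simp only [slm00, slm01, slm10, slm11, sl00, sl01, sl10, sl11, map_add, map_mul] }
  map_one' := by
    ext1 s
    apply sl_ext <;> rfl
  map_mul' a b := by
    ext1 s
    apply sl_ext <;> rfl

/-- diagonal automorphism on `SL` -/
def dS : MulAut SL(2, F) where
  toFun := fun s => sl (s 0 0) (-(s 0 1)) (-(s 1 0)) (s 1 1) (by linear_combination sl_det s)
  invFun := fun s => sl (s 0 0) (-(s 0 1)) (-(s 1 0)) (s 1 1) (by linear_combination sl_det s)
  left_inv := fun s => by apply sl_ext <;> simp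
  right_inv := fun s => by apply sl_ext <;> simp
  map_mul' := fun s t => by
        rw [sl_mul]
        apply sl_ext <;> simp only [slm00, slm01, slm10, slm11, sl00, sl01, sl10, sl11] <;> ring

/-- field automorphism on `PSL` -/
def fa : RingAut F →* MulAut PSL(2, F) := pa.comp fS
/-- diagonal automorphism on `PSL` -/
def dl : MulAut PSL(2, F) := pa dS

lemma fa_mk (σ : RingAut F) (s : SL(2, F)) : fa σ (mkP s) = mkP (fS σ s) := rfl
lemma dl_mk (s : SL(2, F)) : dl (mkP s) = mkP (dS s) := rfl

lemma fS_uu (σ : RingAut F) (b : F) : fS σ (uu b) = uu (σ b) := by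
  apply sl_ext <;> simp [fS, uu]
lemma fS_ll (σ : RingAut F) (b : F) : fS σ (ll b) = ll (σ b) := by
  apply sl_ext <;> simp [fS, ll]
lemma dS_uu (b : F) : dS (uu b) = uu (-b) := by
  apply sl_ext <;> simp [dS, uu]
lemma dS_ll (b : F) : dS (ll b) = ll (-b) := by
  apply sl_ext <;> simp [dS, ll]

lemma dl_sq : (dl : MulAut PSL(2, F)) * dl = 1 := by
  rw [dl, ← map_mul]
  have : (dS : MulAut SL(2, F)) * dS = 1 := by
    ext1 s
    apply sl_ext <;> simp [dS]
  rw [this, map_one]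

lemma dl_fa (σ : RingAut F) : dl * fa σ = fa σ * dl := by
  rw [dl]
  change pa dS * pa (fS σ) = pa (fS σ) * pa dS
  rw [← map_mul, ← map_mul]
  congr 1
  ext1 s
  apply sl_ext <;> simp [dS, fS]

/-- The group `PΣL` mapped to automorphisms -/
def toA : PSL(2, F) ⋊[fa] RingAut F →* MulAut PSL(2, F) :=
  SemidirectProduct.lift MulAut.conj fa (by
    intro σ
    ext x y
    simp)

lemma toA_mk (x : PSL(2, F)) (σ : RingAut F) : toA ⟨x, σ⟩ = MulAut.conj x * fa σ := rfl

lemma toA_dl (p : PSL(2, F) ⋊[fa] RingAut F) : dl * toA p * dl ∈ (toA (F := F)).range := by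
  obtain ⟨x, σ⟩ := p
  refine ⟨⟨dl x, σ⟩, ?_⟩
  rw [toA_mk, toA_mk]
  rw [mul_assoc, mul_assoc (MulAut.conj x), ← dl_fa, ← mul_assoc (MulAut.conj x), ← mul_assoc]
  congr 1
  ext y
  have : ∀ z : PSL(2, F), dl (dl z) = z := fun z => DFunLike.congr_fun dl_sq z
  simp [this]

variable [Fintype F] [DecidableEq F] [CharP F 3]

lemma two_ne : (2 : F) ≠ 0 := by
  intro h
  have h3 := three0 (F := F)
  exact one_ne_zero (α := F) (by linear_combination h3 - h)

lemma toA_inj : Function.Injective (toA (F := F)) := by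
  rw [injective_iff_map_eq_one]
  rintro ⟨x, σ⟩ h
  rw [toA_mk] at h
  obtain ⟨s, rfl⟩ := mkP_surj x
  have hu := DFunLike.congr_fun h (mkP (uu 1))
  have hl := DFunLike.congr_fun h (mkP (ll 1))
  rw [MulAut.mul_apply, fa_mk, fS_uu, MulAut.conj_apply, ← map_inv, ← map_mul, ← map_mul, map_one,
    MulAut.one_apply, mkP_eq] at hu
  rw [MulAut.mul_apply, fa_mk, fS_ll, MulAut.conj_apply, ← map_inv, ← map_mul, ← map_mul, map_one,
    MulAut.one_apply, mkP_eq] at hl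
  obtain ⟨a, b, c, d, hdet, rfl⟩ := exists_sl s
  rw [sl_inv, uu, sl_mul, sl_mul, sl_neg] at hu
  rw [sl_inv, ll, sl_mul, sl_mul, sl_neg] at hl
  have h2 := two_ne (F := F)
  have hc : c = 0 := by
    rcases hu with hu | hu
    · have := congrArg (fun s : SL(2, F) => s 1 0) hu
      simp only [sl10] at this
      have : c * c = 0 := by linear_combination this
      simpa using this
    · exfalso
      have h0 := congrArg (fun s : SL(2, F) => s 0 0) hu
      have h1 := congrArg (fun s : SL(2, F) => s 1 1) hu
      simp only [sl00, sl11] at h0 h1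
      apply h2
      have : (2 : F) * 2 = 0 := by linear_combination h0 + h1 - 2 * hdet
      simpa using this
  have hb : b = 0 := by
    rcases hl with hu | hu
    · have := congrArg (fun s : SL(2, F) => s 0 1) hu
      simp only [sl01] at this
      have : b * b = 0 := by linear_combination this
      simpa using this
    · exfalso
      have h0 := congrArg (fun s : SL(2, F) => s 0 0) hu
      have h1 := congrArg (fun s : SL(2, F) => s 1 1) hu
      simp only [sl00, sl11] at h0 h1
      apply h2
      have : (2 : F) * 2 = 0 := by linear_combination h0 + h1 - 2 * hdet
      simpa using this
  subst hc hb
  have ha : a ^ 2 = 1 := by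
    rcases hu with hu | hu
    · have := congrArg (fun s : SL(2, F) => s 0 1) hu
      simp only [sl01] at this
      linear_combination -this
    · exfalso
      have h0 := congrArg (fun s : SL(2, F) => s 0 0) hu
      simp only [sl00] at h0
      apply h2
      linear_combination h0 - hdet
  have hs : mkP (sl a 0 0 d hdet) = 1 := by
    rw [← map_one mkP, eq_comm, mkP_eq]
    rcases sq1 ha with rfl | rfl
    · left; rw [sl_one]; apply sl_ext <;> simp
      linear_combination hdet
    · right; rw [sl_one, sl_neg]; apply sl_ext <;> simp
      linear_combination -hdet
  rw [hs, map_one, one_mul] at h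
  ext1
  · exact hs
  · ext b
    have := DFunLike.congr_fun h (mkP (uu b))
    rw [fa_mk, fS_uu] at this
    exact uu_inj this

lemma cube_inv {a c : F} (ha : a ≠ 0) (hc : c ≠ 0) (h : (mkP (uu a) * mkP (ll c)) ^ 3 = 1) :
    a * c = -1 := by
  rw [← map_mul, ← map_pow, ← map_one mkP, eq_comm, mkP_eq, uu, ll, sl_mul, pow_succ, pow_two,
    sl_mul, sl_mul, sl_one, sl_neg] at h
  have h01 : a * ((a * c - 1) ^ 2 - 1) = 0 := by
    have h3 := three0 (F := F)
    rcases h with h | h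
    all_goals
      have := congrArg (fun s : SL(2, F) => s 0 1) h
      simp only [sl01] at this
      linear_combination this - (2 * a ^ 2 * c + a) * h3
  have h2 : a * c * (a * c - 2) = 0 := by
    have := (mul_eq_zero.1 h01).resolve_left ha
    linear_combination this
  have := (mul_eq_zero.1 h2).resolve_left (mul_ne_zero ha hc)
  linear_combination this + three0 (F := F)

lemma cube_of {a c : F} (h : a * c = -1) : (mkP (uu a) * mkP (ll c)) ^ 3 = 1 := by
  rw [← map_mul, sl_cube]
  rw [uu, ll, sl_mul]
  simp
  rw [h]
  norm_num

lemma aut_core (α : MulAut PSL(2, F)) (hU : ∀ b, ∃ b', α (mkP (uu b)) = mkP (uu b'))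
    (hL : ∀ b, ∃ b', α (mkP (ll b)) = mkP (ll b')) (h1 : α (mkP (uu 1)) = mkP (uu 1)) :
    ∃ σ, α = fa σ := by
  choose φ hφ using hU
  choose φ' hφ' using hL
  have add : ∀ a b, φ (a + b) = φ a + φ b := by
    intro a b
    apply uu_inj
    rw [← hφ, uu_add, map_mul, map_mul, hφ, hφ, uu_add, map_mul]
  have add' : ∀ a b, φ' (a + b) = φ' a + φ' b := by
    intro a b
    apply ll_inj
    rw [← hφ', ll_add, map_mul, map_mul, hφ', hφ', ll_add, map_mul]
  have inj : Function.Injective φ := by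
    intro a b h
    apply uu_inj
    apply α.injective
    rw [hφ, hφ, h]
  have inj' : Function.Injective φ' := by
    intro a b h
    apply ll_inj
    apply α.injective
    rw [hφ', hφ', h]
  have z : φ 0 = 0 := by have := add 0 0; simpa using this
  have z' : φ' 0 = 0 := by have := add' 0 0; simpa using this
  have neg' : ∀ a, φ' (-a) = - φ' a := by
    intro a
    have := add' a (-a)
    rw [add_neg_cancel, z'] at this
    linear_combination -this
  have neg : ∀ a, φ (-a) = - φ a := by
    intro a
    have := add a (-a)
    rw [add_neg_cancel, z] at this
    linear_combination -this
  have one : φ 1 = 1 := uu_inj (by rw [← hφ, h1])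
  have nz : ∀ {a}, a ≠ 0 → φ a ≠ 0 := fun {a} ha h => ha (inj (by rw [h, z]))
  have nz' : ∀ {a}, a ≠ 0 → φ' a ≠ 0 := fun {a} ha h => ha (inj' (by rw [h, z']))
  have key : ∀ {a}, a ≠ 0 → φ' a⁻¹ = (φ a)⁻¹ := by
    intro a ha
    have h1 : a * (-a⁻¹) = -1 := by field_simp
    have h2 := congrArg α (cube_of h1)
    rw [map_pow, map_mul, hφ, hφ', map_one] at h2
    have h3 := cube_inv (nz ha) (nz' (neg_ne_zero.2 (inv_ne_zero ha))) h2
    rw [neg'] at h3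
    exact eq_inv_of_mul_eq_one_right (by linear_combination -h3)
  have sq : ∀ a, φ (a ^ 2) = φ a ^ 2 := by
    intro a
    by_cases ha : a = 0
    · subst ha; simp [z]
    by_cases ha1 : a = 1
    · subst ha1; simp [one]
    have ha2 : 1 - a ≠ 0 := fun h => ha1 (by linear_combination -h)
    have h1 : a⁻¹ + (1 - a)⁻¹ = (a * (1 - a))⁻¹ := by field_simp; ring
    have h2 := congrArg φ' h1
    have h3 : φ (1 - a) = 1 - φ a := by rw [sub_eq_add_neg, add, neg, one]; ring
    have h4 : φ (a * (1 - a)) = φ a - φ (a ^ 2) := by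
      rw [show a * (1 - a) = a + -(a ^ 2) by ring, add, neg]; ring
    have n1 := nz ha
    have n2 := nz ha2
    have n3 := nz (mul_ne_zero ha ha2)
    rw [add', key ha, key ha2, key (mul_ne_zero ha ha2)] at h2
    rw [h3] at n2 h2
    rw [h4] at n3 h2
    field_simp at h2
    linear_combination -h2
  have mul : ∀ a b, φ (a * b) = φ a * φ b := by
    intro a b
    have h1 := sq (a + b)
    rw [show (a + b) ^ 2 = a ^ 2 + b ^ 2 + (a * b + a * b) by ring, add, add, add, add, sq, sq] at h1
    apply mul_left_cancel₀ (two_ne (F := F))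
    linear_combination h1
  let σ0 : F →+* F :=
    { toFun := φ, map_one' := one, map_mul' := mul, map_zero' := z, map_add' := add }
  let σ : RingAut F := RingEquiv.ofBijective σ0 ⟨inj, Finite.surjective_of_injective inj⟩
  have hσ : ∀ b, σ b = φ b := fun b => rfl
  have hσ' : ∀ b, σ b = φ' b := by
    intro b
    by_cases hb : b = 0
    · subst hb; rw [z', map_zero]
    · have := key (inv_ne_zero hb)
      rw [inv_inv] at this
      rw [this, ← hσ, map_inv₀, inv_inv]
  refine ⟨σ, ?_⟩
  have := psl_gen (MonoidHom.eqLocus α.toMonoidHom (fa σ).toMonoidHom) (fun b => ?_) (fun b => ?_)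
  · ext x
    have : x ∈ (MonoidHom.eqLocus α.toMonoidHom (fa σ).toMonoidHom) := by rw [this]; trivial
    exact this
  · change α _ = fa σ _
    rw [hφ, fa_mk, fS_uu, hσ]
  · change α _ = fa σ _
    rw [hφ', fa_mk, fS_ll, hσ']

lemma aut_sq (α : MulAut PSL(2, F)) (hU : ∀ b, ∃ b', α (mkP (uu b)) = mkP (uu b'))
    (hL : ∀ b, ∃ b', α (mkP (ll b)) = mkP (ll b')) (z : F) (hz : z ≠ 0)
    (h1 : α (mkP (uu 1)) = mkP (uu (z * z))) :
    α ∈ (toA (F := F)).range := by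
  have hu : ∀ b, MulAut.conj (mkP (dd z⁻¹ (inv_ne_zero hz))) (mkP (uu b)) =
      mkP (uu (b * (z * z)⁻¹)) := by
    intro b
    rw [MulAut.conj_apply, ← map_inv, ← map_mul, ← map_mul, dd, sl_inv, uu, sl_mul, sl_mul]
    congr 1
    apply sl_ext <;> simp [uu] <;> field_simp
  have hl : ∀ b, MulAut.conj (mkP (dd z⁻¹ (inv_ne_zero hz))) (mkP (ll b)) =
      mkP (ll (b * (z * z))) := by
    intro b
    rw [MulAut.conj_apply, ← map_inv, ← map_mul, ← map_mul, dd, sl_inv, ll, sl_mul, sl_mul]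
    congr 1
    apply sl_ext <;> simp [ll] <;> field_simp
  obtain ⟨σ, hσ⟩ := aut_core (MulAut.conj (mkP (dd z⁻¹ (inv_ne_zero hz))) * α)
    (by
      intro b
      obtain ⟨b', hb⟩ := hU b
      exact ⟨_, by rw [MulAut.mul_apply, hb, hu]⟩)
    (by
      intro b
      obtain ⟨b', hb⟩ := hL b
      exact ⟨_, by rw [MulAut.mul_apply, hb, hl]⟩)
    (by rw [MulAut.mul_apply, h1, hu, mul_inv_cancel₀ (mul_ne_zero hz hz)])
  refine ⟨⟨(mkP (dd z⁻¹ (inv_ne_zero hz)))⁻¹, σ⟩, ?_⟩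
  rw [toA_mk, ← hσ, map_inv, inv_mul_cancel_left]

variable [hq : Fact (Fintype.card F % 4 = 3)]

lemma aut_all (α : MulAut PSL(2, F)) :
    α ∈ (toA (F := F)).range ∨ α * dl ∈ (toA (F := F)).range := by
  obtain ⟨s, h1, h2⟩ := sylow_two (α • US (F := F)) (α • LS (F := F)) (fun h => US_ne (smul_left_cancel α h))
  have hc : MulAut.conj s ∈ (toA (F := F)).range := ⟨⟨s, 1⟩, by rw [toA_mk, map_one, mul_one]⟩
  rw [← conj_smul, smul_smul] at h1 h2
  have hU : ∀ b, ∃ b', (MulAut.conj s * α) (mkP (uu b)) = mkP (uu b') := by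
    intro b
    have : (MulAut.conj s * α) (mkP (uu b)) ∈ (MulAut.conj s * α) • (US (F := F)) :=
      ⟨mkP (uu b), ⟨b, rfl⟩, rfl⟩
    rw [h1] at this
    obtain ⟨b', h⟩ := this
    exact ⟨b', h.symm⟩
  have hL : ∀ b, ∃ b', (MulAut.conj s * α) (mkP (ll b)) = mkP (ll b') := by
    intro b
    have : (MulAut.conj s * α) (mkP (ll b)) ∈ (MulAut.conj s * α) • (LS (F := F)) :=
      ⟨mkP (ll b), ⟨b, rfl⟩, rfl⟩
    rw [h2] at this
    obtain ⟨b', h⟩ := this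
    exact ⟨b', h.symm⟩
  obtain ⟨t, ht⟩ := hU 1
  have ht0 : t ≠ 0 := by
    rintro rfl
    have h0 : mkP (uu (0 : F)) = 1 := by
      have := uu_add (0 : F) 0
      rw [add_zero] at this
      have := congrArg mkP this
      rw [map_mul] at this
      simpa using this
    rw [h0] at ht
    have h3 := (MulEquiv.map_eq_one_iff _).1 ht
    rw [← h0] at h3
    exact one_ne_zero (uu_inj h3)
  rcases sq_or_neg ht0 with ⟨z, hz⟩ | ⟨z, hz⟩
  · left
    have := aut_sq _ hU hL z (by rintro rfl; simp at hz; exact ht0 hz) (by rw [ht, hz])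
    exact (Subgroup.mul_mem_cancel_left _ hc).1 this
  · right
    have := aut_sq (MulAut.conj s * α * dl)
      (by intro b; rw [MulAut.mul_apply, dl_mk, dS_uu]; exact hU _)
      (by intro b; rw [MulAut.mul_apply, dl_mk, dS_ll]; exact hL _)
      z (by rintro rfl; simp at hz; exact ht0 hz) (by
        rw [MulAut.mul_apply, dl_mk, dS_uu, ← hz]
        have h0 : ∀ a : F, mkP (uu (-a)) = (mkP (uu a))⁻¹ := by
          intro a
          rw [eq_inv_iff_mul_eq_one, ← map_mul, ← uu_add, neg_add_cancel, ← map_one mkP]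
          congr 1
          apply sl_ext <;> simp [uu]
        rw [h0, map_inv, ht, h0])
    rw [mul_assoc] at this
    exact (Subgroup.mul_mem_cancel_left _ hc).1 this

lemma aut_two (α : MulAut PSL(2, F)) : α * α ∈ (toA (F := F)).range := by
  rcases aut_all α with h | h
  · exact Subgroup.mul_mem _ h h
  · obtain ⟨p, hp⟩ := h
    have h1 : α = toA p * dl := by rw [hp, mul_assoc, dl_sq, mul_one]
    rw [h1, mul_assoc, ← mul_assoc dl]
    exact Subgroup.mul_mem _ ⟨p, rfl⟩ (toA_dl p)

end AutPSL

section HalfWeilDatum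

variable {F : Type} [Field F] [Fintype F] [DecidableEq F] [CharP F 3]
  [hq : Fact (Fintype.card F % 4 = 3)]

/-- Galois action on nonzero squares -/
def qs : RingAut F →* Equiv.Perm (QQ F) where
  toFun σ :=
    { toFun := fun x => ⟨σ x.1, by simpa using x.2.1, x.2.2.map σ⟩
      invFun := fun x => ⟨σ.symm x.1, by simpa using x.2.1, x.2.2.map σ.symm⟩
      left_inv := fun x => Subtype.ext (by simp)
      right_inv := fun x => Subtype.ext (by simp) }
  map_one' := rfl
  map_mul' a b := rfl

lemma qs_coe (σ : RingAut F) (x : QQ F) : (qs σ x).1 = σ x.1 := rfl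

/-- Permutation matrices -/
def Fm : RingAut F →* Matrix (QQ F) (QQ F) ℂ where
  toFun σ := Matrix.of fun x y => if x = qs σ y then 1 else 0
  map_one' := by
    ext x y
    simp [Matrix.one_apply]
  map_mul' a b := by
    ext x y
    simp [Matrix.mul_apply]

lemma eta_inv_aut (σ : RingAut F) (a : F) : etaC (σ a) = etaC a := by
  by_cases ha : a = 0
  · simp [ha]
  · rcases eta_cases ha with h | h
    · obtain ⟨⟨y, rfl⟩, h⟩ := h
      have hy : y ≠ 0 := by rintro rfl; simp at ha
      rw [h, map_mul, ← pow_two, eta_of_sq]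
      simpa using hy
    · rcases sq_or_neg ha with h' | h'
      · obtain ⟨y, rfl⟩ := h'
        have hy : y ≠ 0 := by rintro rfl; simp at ha
        rw [map_mul, ← pow_two, ← pow_two, eta_of_sq hy, eta_of_sq]
        simpa using hy
      · obtain ⟨y, hy⟩ := h'
        have : a = -(y * y) := by rw [← hy, neg_neg]
        have hy : y ≠ 0 := by rintro rfl; simp at this; exact ha this
        rw [this, map_neg, eta_neg, eta_neg, map_mul, ← pow_two, ← pow_two, eta_of_sq hy, eta_of_sq]
        simpa using hy

lemma wk_aut {ψ : AddChar F ℂ} (hσ : ∀ (σ : F ≃+* F) x, ψ (σ x) = ψ x) (σ : RingAut F)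
    (a b c d x y : F) : wk ψ (σ a) (σ b) (σ c) (σ d) (σ x) (σ y) = wk ψ a b c d x y := by
  simp only [wk]
  by_cases hc : c = 0
  · rw [if_pos hc, if_pos (by rw [hc, map_zero])]
    by_cases h : y = a * x
    · rw [if_pos h, if_pos (by rw [h, map_mul]), eta_inv_aut, ← map_mul, ← map_pow, ← map_mul, hσ]
    · rw [if_neg h, if_neg (by rw [← map_mul]; exact fun h' => h (σ.injective h'))]
  · rw [if_neg hc, if_neg (by simpa using hc), eta_inv_aut]
    simp only [← map_mul, ← map_pow, ← map_add, ← map_div₀]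
    rw [hσ]

lemma hw_aut {ψ : AddChar F ℂ} (hψ : ψ.IsPrimitive) (hσ : ∀ (σ : F ≃+* F) x, ψ (σ x) = ψ x)
    (σ : RingAut F) (x : PSL(2, F)) : hwP hψ (fa σ x) * Fm σ = Fm σ * hwP hψ x := by
  obtain ⟨s, rfl⟩ := mkP_surj x
  rw [fa_mk, hwP_mk, hwP_mk]
  ext x z
  obtain ⟨y, rfl⟩ := (qs σ).surjective x
  simp only [Matrix.mul_apply, Fm, MonoidHom.coe_mk, OneHom.coe_mk, Matrix.of_apply, mul_ite,
    mul_one, mul_zero, ite_mul, one_mul, zero_mul, Finset.sum_ite_eq', Finset.mem_univ, if_true,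
    EmbeddingLike.apply_eq_iff_eq, Finset.sum_ite_eq]
  simp only [hw, MonoidHom.coe_mk, OneHom.coe_mk, Matrix.of_apply, fS, MulEquiv.coe_mk,
    Equiv.coe_fn_mk, sl00, sl01, sl10, sl11, qs_coe, ← map_neg, wk_aut hσ]

lemma conj_toA (x : PSL(2, F)) : toA ⟨x, 1⟩ = MulAut.conj x := by rw [toA_mk, map_one, mul_one]

/-- extended half Weil rep -/
def hwA {ψ : AddChar F ℂ} (hψ : ψ.IsPrimitive) (hσ : ∀ (σ : F ≃+* F) x, ψ (σ x) = ψ x) :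
    PSL(2, F) ⋊[fa] RingAut F →* (Matrix (QQ F) (QQ F) ℂ)ˣ :=
  SemidirectProduct.lift (hwP hψ).toHomUnits Fm.toHomUnits (by
    intro σ
    apply MonoidHom.ext
    intro x
    have h := hw_aut hψ hσ σ x
    change (hwP hψ).toHomUnits (fa σ x) = Fm.toHomUnits σ * (hwP hψ).toHomUnits x * (Fm.toHomUnits σ)⁻¹
    rw [eq_mul_inv_iff_mul_eq]
    ext1
    exact h)

lemma halfWeil : ∃ D : Datum PSL(2, F), (∀ α : MulAut PSL(2, F), α * α ∈ D.A) ∧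
    Fintype.card F = 1 + 2 * Fintype.card D.ι := by
  obtain ⟨ψ, hψ, hσ⟩ := exists_psi (F := F)
  let E := MonoidHom.ofInjective (toA_inj (F := F))
  have hc : ∀ x : PSL(2, F), E ⟨x, 1⟩ = ⟨MulAut.conj x, ⟨⟨x, 1⟩, conj_toA x⟩⟩ := by
    intro x
    exact Subtype.ext (conj_toA x)
  refine ⟨{ ι := QQ F, A := toA.range,
            R := (Units.coeHom _).comp ((hwA hψ hσ).comp E.symm.toMonoidHom)
            χ := fun x => (hwP hψ x).trace
            hconj := fun x => ⟨⟨x, 1⟩, conj_toA x⟩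
            htr := ?_
            hfull := ?_
            hnorm := (schur_iff_norm _).1 (hw_schur hψ)
            hnc := ?_ }, aut_two, QQ_card⟩
  · intro x
    rw [← hc]
    simp only [MonoidHom.comp_apply, MulEquiv.coe_toMonoidHom, MulEquiv.symm_apply_apply, Units.coeHom_apply]
    change (hwP hψ x * Fm 1).trace = _
    rw [map_one, mul_one]
  · intro α h
    rcases aut_all α with h1 | ⟨p, h1⟩
    · exact h1
    · exfalso
      have h2 := h (dl (mkP (uu 1)))
      have h3 : α (dl (mkP (uu 1))) = toA p (mkP (uu 1)) := by rw [h1]; rfl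
      have h4 : ∀ x, (hwP hψ (toA p x)).trace = (hwP hψ x).trace := by
        intro x
        obtain ⟨y, σ⟩ := p
        have h5 := hw_aut hψ hσ σ x
        have h6 : Fm σ * Fm σ⁻¹ = 1 := by rw [← map_mul, mul_inv_cancel, map_one]
        have h7 : Fm σ⁻¹ * Fm σ = 1 := by rw [← map_mul, inv_mul_cancel, map_one]
        have h8 : hwP hψ (fa σ x) = Fm σ * hwP hψ x * Fm σ⁻¹ := by
          rw [← h5, Matrix.mul_assoc, h6, Matrix.mul_one]
        rw [toA_mk, MulAut.mul_apply, MulAut.conj_apply, map_mul, Matrix.trace_mul_comm, ← map_mul,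
          inv_mul_cancel_left, h8, Matrix.trace_mul_comm, ← Matrix.mul_assoc, h7, Matrix.one_mul]
      rw [h3, h4, dl_mk, dS_uu] at h2
      exact hw_tr hψ h2
  · by_contra! h
    exact hw_tr hψ ((h _).trans (h _).symm)

end HalfWeilDatum

section SetupExists

lemma pi_aut {n : ℕ} {S0 : Type} [Group S0] [Finite S0] [IsSimpleGroup S0]
    (hna : ∃ x y : S0, x * y ≠ y * x) (a : MulAut (Fin n → S0)) (i : Fin n) :
    ∃ (j : Fin n) (α : MulAut S0), ∀ x, a (Pi.mulSingle i x) = Pi.mulSingle j (α x) := by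
  let f : Fin n → S0 →* S0 := fun j =>
    (Pi.evalMonoidHom _ j).comp (a.toMonoidHom.comp (MonoidHom.mulSingle (fun _ => S0) i))
  have hf : ∀ j x, f j x = a (Pi.mulSingle i x) j := fun j x => rfl
  have hcj : ∀ (w : Fin n → S0) x, ∃ z, a (Pi.mulSingle i z) = w * a (Pi.mulSingle i x) * w⁻¹ := by
    intro w x
    obtain ⟨v, rfl⟩ := a.surjective w
    refine ⟨v i * x * (v i)⁻¹, ?_⟩
    rw [← map_inv, ← map_mul, ← map_mul]
    congr 1
    ext k
    by_cases hk : k = i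
    · subst hk; simp
    · simp [Pi.mulSingle_eq_of_ne hk]
  have hn : ∀ j, (f j).range.Normal := by
    intro j
    constructor
    rintro _ ⟨x, rfl⟩ t
    obtain ⟨z, hz⟩ := hcj (Pi.mulSingle j t) x
    refine ⟨z, ?_⟩
    rw [hf, hz]
    simp [hf]
  obtain ⟨x0, y0, hxy⟩ := hna
  have hx0 : x0 ≠ 1 := by rintro rfl; simp at hxy
  have hex : ∃ j, (f j).range ≠ ⊥ := by
    by_contra! h
    apply hx0
    have h1 : a (Pi.mulSingle i x0) = 1 := by
      ext j
      have : f j x0 ∈ (f j).range := ⟨x0, rfl⟩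
      rw [h j] at this
      exact this
    have h2 := (MulEquiv.map_eq_one_iff a).1 h1
    have := congrFun h2 i
    simpa using this
  have hb : ∀ j, (f j).range ≠ ⊥ → Function.Bijective (f j) := by
    intro j hj
    have hs : Function.Surjective (f j) := by
      rw [← MonoidHom.range_eq_top]
      exact ((hn j).eq_bot_or_eq_top).resolve_left hj
    exact ⟨Finite.injective_iff_surjective.2 hs, hs⟩
  obtain ⟨j, hj⟩ := hex
  have huniq : ∀ k, k ≠ j → (f k).range = ⊥ := by
    intro k hk
    by_contra hk'
    obtain ⟨x, hx⟩ := (hb j hj).2 x0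
    obtain ⟨z, hz⟩ := hcj (Pi.mulSingle j y0) x
    have h1 : f k z = f k x := by
      rw [hf, hz, hf]
      simp [Pi.mulSingle_eq_of_ne hk]
    have h2 := (hb k hk').1 h1
    subst h2
    have h3 := congrFun hz j
    simp only [Pi.mul_apply, Pi.inv_apply, Pi.mulSingle_eq_same, ← hf, hx] at h3
    apply hxy
    rw [eq_mul_inv_iff_mul_eq] at h3
    exact h3
  refine ⟨j, MulEquiv.ofBijective (f j) (hb j hj), ?_⟩
  intro x
  ext k
  by_cases hk : k = j
  · subst hk
    simp [hf]
  · rw [Pi.mulSingle_eq_of_ne hk, ← hf]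
    have : f k x ∈ (f k).range := ⟨x, rfl⟩
    rw [huniq k hk] at this
    exact this

lemma setup_of_e {G : Type} [Group G] {M : Subgroup G} (hM : M.Normal) {n : ℕ} {S0 : Type} [Group S0]
    [Finite S0] [IsSimpleGroup S0] (hna : ∃ x y : S0, x * y ≠ y * x) (e : (Fin n → S0) ≃* ↥M) :
    Nonempty (Setup G M S0 n) := by
  have h : ∀ (y : G) (i : Fin n), ∃ (j : Fin n) (α : MulAut S0), ∀ x,
      y * (e (Pi.mulSingle i x) : G) * y⁻¹ = e (Pi.mulSingle j (α x)) := by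
    intro y i
    obtain ⟨j, α, h⟩ := pi_aut hna ((e.trans (MulAut.conjNormal y)).trans e.symm) i
    refine ⟨j, α, ?_⟩
    intro x
    rw [← h]
    simp
  choose j α h using h
  have hne : ∀ {i i' : Fin n} {x x' : S0}, x ≠ 1 →
      (e (Pi.mulSingle i x) : G) = e (Pi.mulSingle i' x') → i = i' := by
    intro i i' x x' hx hh
    have h1 := e.injective (Subtype.ext hh)
    by_contra hc
    have h2 := congrFun h1 i
    rw [Pi.mulSingle_eq_same, Pi.mulSingle_eq_of_ne hc] at h2
    exact hx h2
  obtain ⟨x0, hx0⟩ := exists_ne (1 : S0)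
  have hx : ∀ a : MulAut S0, a x0 ≠ 1 := fun a h => hx0 ((MulEquiv.map_eq_one_iff a).1 h)
  have h1 : ∀ i, j 1 i = i := by
    intro i
    apply hne (hx (α 1 i)) (x' := x0)
    rw [← h]; simp
  have h2 : ∀ y z i, j (y * z) i = j y (j z i) := by
    intro y z i
    apply hne (hx (α (y * z) i)) (x' := α y (j z i) (α z i x0))
    rw [← h, ← h, ← h]; group
  let J : G →* Function.End (Fin n) :=
    { toFun := j
      map_one' := funext h1
      map_mul' := fun y z => funext (h2 y z) }
  exact ⟨{ e := e, act := J.toHomPerm, α := α, hα := h }⟩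

lemma e_exists {G : Type} [Group G] {M : Subgroup G} {n : ℕ} {S0 : Type} [Group S0]
    (S : Fin n → Subgroup G)
    (hiso : ∀ i, Nonempty (↥(S i) ≃* S0))
    (hcomm : Pairwise fun i j => ∀ x y : G, x ∈ S i → y ∈ S j → Commute x y)
    (hinj : Function.Injective (Subgroup.noncommPiCoprod hcomm))
    (hrange : (Subgroup.noncommPiCoprod hcomm).range = M) :
    Nonempty ((Fin n → S0) ≃* ↥M) := by
  have t := fun i => (hiso i).some
  exact ⟨((MulEquiv.piCongrRight t).symm.trans (MonoidHom.ofInjective hinj)).trans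
    (MulEquiv.subgroupCongr hrange)⟩

lemma perfect_S0 {G : Type} [Group G] {M : Subgroup G} (hM : M.Normal)
    (hMuniq : ∀ N : Subgroup G, N.Normal → N ≠ ⊥ → M ≤ N) {n : ℕ} [NeZero n] {S0 : Type} [Group S0]
    (hna : ∃ x y : S0, x * y ≠ y * x) (e : (Fin n → S0) ≃* ↥M)
    {H : Type} [CommMonoid H] (f : S0 →* H) (x : S0) : f x = 1 := by
  have h1 : M ≤ ⁅M, M⁆ := by
    apply hMuniq _ inferInstance
    intro h
    obtain ⟨x, y, hxy⟩ := hna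
    apply hxy
    rw [Subgroup.commutator_eq_bot_iff_le_centralizer] at h
    have h3 := (Subgroup.mem_centralizer_iff.1 (h (e (Pi.mulSingle 0 x)).2)) _ (e (Pi.mulSingle 0 y)).2
    have h4 : e (Pi.mulSingle 0 y) * e (Pi.mulSingle 0 x) = e (Pi.mulSingle 0 x) * e (Pi.mulSingle 0 y) :=
      Subtype.ext h3
    rw [← map_mul, ← map_mul] at h4
    have := congrFun (e.injective h4) 0
    simpa using this.symm
  let F : ↥M →* Hˣ := (f.toHomUnits).comp ((Pi.evalMonoidHom _ 0).comp e.symm.toMonoidHom)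
  have h2 : ⁅M, M⁆ ≤ F.ker.map M.subtype := by
    rw [Subgroup.commutator_le]
    intro a ha b hb
    refine ⟨(⟨a, ha⟩ : ↥M) * ⟨b, hb⟩ * (⟨a, ha⟩ : ↥M)⁻¹ * (⟨b, hb⟩ : ↥M)⁻¹, ?_, rfl⟩
    change F _ = 1
    rw [map_mul, map_mul, map_mul, map_inv, map_inv, mul_right_comm, mul_inv_cancel_right,
      mul_inv_cancel]
  obtain ⟨m, hm, hm'⟩ := h2 (h1 (e (Pi.mulSingle 0 x)).2)
  have h3 : m = e (Pi.mulSingle 0 x) := Subtype.ext hm'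
  rw [h3] at hm
  have h4 : F (e (Pi.mulSingle 0 x)) = 1 := hm
  have h5 := congrArg (fun u : Hˣ => (u : H)) h4
  simpa [F] using h5

end SetupExists

section Final

lemma sq_quot {B : Type} [Group B] (A : Subgroup B) (hsq : ∀ b : B, b * b ∈ A) :
    ∃ (Q : Type) (_ : CommGroup Q) (q : B →* Q), Function.Surjective q ∧ (∀ b, q b = 1 ↔ b ∈ A) ∧
      ∀ z : Q, z * z = 1 := by
  have hn : A.Normal := by
    constructor
    intro a ha x
    have h1 := A.mul_mem (A.mul_mem (hsq (x * a)) (hsq (a⁻¹ * x⁻¹ * a))) (A.inv_mem (hsq a))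
    have h2 : x * a * x⁻¹ = (x * a) * (x * a) * (a⁻¹ * x⁻¹ * a * (a⁻¹ * x⁻¹ * a)) * (a * a)⁻¹ * a := by
      group
    rw [h2]
    exact A.mul_mem h1 ha
  have h2 : ∀ z : B ⧸ A, z * z = 1 := by
    intro z
    obtain ⟨b, rfl⟩ := QuotientGroup.mk_surjective z
    exact (QuotientGroup.eq_one_iff (b * b)).2 (hsq b)
  have hinv : ∀ z : B ⧸ A, z⁻¹ = z := fun z => inv_eq_of_mul_eq_one_right (h2 z)
  have hc : ∀ y z : B ⧸ A, y * z = z * y := by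
    intro y z
    rw [← hinv (y * z), mul_inv_rev, hinv, hinv]
  refine ⟨B ⧸ A, { (inferInstance : Group (B ⧸ A)) with mul_comm := hc }, QuotientGroup.mk' A,
    QuotientGroup.mk'_surjective A, fun b => QuotientGroup.eq_one_iff b, h2⟩

lemma twist_exists {G : Type} [Group G] {M : Subgroup G} {S0 : Type} [Group S0] {n : ℕ}
    (T : Setup G M S0 n) (A : Subgroup (MulAut S0)) (hsq : ∀ b : MulAut S0, b * b ∈ A)
    (k y : G) (N : ℕ) (hN : Odd N) (hk : k ^ N = y * y) (hy : ∀ i, T.act y i = i) :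
    ∃ β, ∀ i, (T.twist β).α k i ∈ A := by
  obtain ⟨Q, _, q, hs, hq, h2⟩ := sq_quot A hsq
  let c : G → Fin n → Q := fun x i => q (T.α x i)
  have hc : ∀ x y i, c (x * y) i = c x (T.act y i) * c y i := by
    intro x y i
    simp only [c, T.cocycle, map_mul]
  have c1 : ∀ i, c 1 i = 1 := by
    intro i
    have := hc 1 1 i
    simpa using this
  have cN : ∀ i, c (k ^ N) i = 1 := by
    intro i
    rw [hk, hc, hy, h2]
  let b : Fin n → Q := fun i => ∏ j ∈ Finset.range N, c (k ^ j) i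
  choose β hβ using fun i => hs (b i)
  refine ⟨β, fun i => ?_⟩
  rw [← hq]
  change q ((β (T.act k i))⁻¹ * T.α k i * β i) = 1
  rw [map_mul, map_mul, map_inv, hβ, hβ]
  change (b (T.act k i))⁻¹ * c k i * b i = 1
  have h3 : b (T.act k i) * c k i ^ N = b i := by
    have e1 : b (T.act k i) * c k i ^ N = ∏ j ∈ Finset.range N, c (k ^ (j + 1)) i := by
      simp only [b, pow_succ k, hc, Finset.prod_mul_distrib, Finset.prod_const, Finset.card_range]
    rw [e1]
    have := Finset.prod_range_succ (fun j => c (k ^ j) i) N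
    rw [Finset.prod_range_succ', cN, pow_zero, c1, mul_one, mul_one] at this
    exact this
  obtain ⟨t, ht⟩ := hN
  have h4 : c k i ^ N = c k i := by
    rw [ht, pow_succ, pow_mul, pow_two, h2, one_pow, one_mul]
  rw [h4] at h3
  rw [← h3, mul_assoc, mul_comm (b _) (c k i), ← mul_assoc (c k i), h2, one_mul, inv_mul_cancel]

variable {F : Type} [Field F] [Fintype F] [DecidableEq F] [CharP F 3]
  [hq : Fact (Fintype.card F % 4 = 3)]

lemma psl_na : ∃ x y : PSL(2, F), x * y ≠ y * x := by
  refine ⟨mkP (uu 1), mkP (ll 1), ?_⟩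
  rw [← map_mul, ← map_mul, Ne, mkP_eq, uu, ll, sl_mul, sl_mul, sl_neg]
  rintro (h | h)
  · have := congrArg (fun s : SL(2, F) => s 0 0) h
    simp at this
  · have := congrArg (fun s : SL(2, F) => s 0 1) h
    simp at this
    exact one_ne_neg this

lemma four_le (hp : ∀ (f : PSL(2, F) →* ℂ) x, f x = 1) : 4 ≤ Fintype.card F := by
  by_contra hlt
  have h3 : Fintype.card F = 3 := by have := hq.1; omega
  have h1 : Fintype.card (QQ F) = 1 := by have := QQ_card (F := F); omega
  obtain ⟨ψ, hψ, -⟩ := exists_psi (F := F)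
  have h2 : ∀ x, (hwP hψ x).trace = 1 := by
    intro x
    have := hp (Matrix.detMonoidHom.comp (hwP hψ)) x
    rw [← this]
    obtain ⟨i⟩ : Nonempty (QQ F) := inferInstance
    have hsub : Subsingleton (QQ F) := Fintype.card_le_one_iff_subsingleton.1 h1.le
    change _ = (hwP hψ x).det
    rw [Matrix.det_eq_elem_of_card_eq_one h1 i, Matrix.trace, Fintype.sum_subsingleton _ i]
    rfl
  exact hw_tr hψ ((h2 _).trans (h2 _).symm)

/-- the 3'-part of the order of `PSL₂(q)` -/
def EE (F : Type) [Fintype F] : ℕ := (Fintype.card F - 1) * (Fintype.card F + 1) / 2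

lemma EE_two : 2 * EE F = (Fintype.card F - 1) * (Fintype.card F + 1) := by
  rw [EE]
  apply Nat.mul_div_cancel'
  have := hq.1
  exact Dvd.dvd.mul_left (by omega) _

lemma EE_ndvd : ¬ 3 ∣ EE F := by
  intro h
  have h1 := EE_two (F := F)
  have h2 := card_dvd (F := F)
  have h3 : 0 < Fintype.card F := Fintype.card_pos
  obtain ⟨c, hc⟩ := h
  obtain ⟨d, hd⟩ := h2
  rw [hc, hd] at h1
  obtain ⟨d, rfl⟩ : ∃ d', d = d' + 1 := ⟨d - 1, by omega⟩
  have h4 : 3 * (d + 1) - 1 = 3 * d + 2 := by omega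
  rw [h4] at h1
  ring_nf at h1
  omega

lemma psl_card2 : Nat.card PSL(2, F) = Fintype.card F * EE F := by
  have h1 := EE_two (F := F)
  have h2 := psl_card (F := F)
  have : 2 * Nat.card PSL(2, F) = 2 * (Fintype.card F * EE F) := by
    rw [h2, mul_left_comm, h1]; ring
  omega

lemma ord_EE (x : PSL(2, F)) (hx : ¬ 3 ∣ orderOf x) : x ^ EE F = 1 := by
  rw [← orderOf_dvd_iff_pow_eq_one]
  have h1 : orderOf x ∣ Fintype.card F * EE F := by
    rw [← psl_card2]; exact orderOf_dvd_natCard x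
  obtain ⟨k, -, hk⟩ := card_pow (F := F)
  rw [hk] at h1
  refine Nat.Coprime.dvd_of_dvd_mul_left ?_ h1
  exact Nat.Coprime.pow_right k ((Nat.Prime.coprime_iff_not_dvd Nat.prime_three).2 hx).symm

lemma ord_3EE (x : PSL(2, F)) : x ^ (3 * EE F) = 1 := by
  by_cases hx : 3 ∣ orderOf x
  · rw [pow_mul, psl_cube x hx, one_pow]
  · rw [mul_comm, pow_mul, ord_EE x hx, one_pow]

theorem final_aux {G : Type} [Group G] [Finite G] {M : Subgroup G} (hM : M.Normal)
    {n : ℕ} [NeZero n] (T : Setup G M PSL(2, F) n) (g m : G) (hm : m ∈ M) (hgm : g * m * g⁻¹ = m) :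
    ∃ (lam : ↥M → ℂ) (h : ℕ), h ≤ n ∧ IsIrrChar ↥M lam ∧ lam ≠ (fun _ => 1) ∧
      ExtendsToSubgroup M (inertia M hM lam) lam ∧
      g ^ (2 ^ h) ∈ inertia M hM lam ∧
      ∃ k : ℕ, (Nat.card ↥M : ℂ) =
        ((2 : ℂ) ^ h * (orderOf m : ℂ)) * (k : ℂ) * lam 1 := by
  classical
  have hcard : Nat.card ↥M = (Fintype.card F * EE F) ^ n := by
    rw [← Nat.card_congr T.e.toEquiv, Nat.card_fun, psl_card2]; simp
  have hmp : ∀ N : ℕ, (∀ i, T.e.symm ⟨m, hm⟩ i ^ N = 1) → m ^ N = 1 := by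
    intro N h
    have h1 : (⟨m, hm⟩ : ↥M) ^ N = 1 := by
      apply T.e.symm.injective
      rw [map_pow, map_one]
      ext1 i
      exact h i
    exact congrArg Subtype.val h1
  have ho3 : orderOf m ∣ 3 * EE F := by
    rw [orderOf_dvd_iff_pow_eq_one]
    exact hmp _ fun i => ord_3EE _
  have hn0 : 0 < n := Nat.pos_of_ne_zero (NeZero.ne n)
  by_cases hc : ∃ J : Finset (Fin n), J.Nonempty ∧ (∀ i ∈ J, T.act g i ∈ J) ∧
      (¬ 3 ∣ orderOf m ∨ J ≠ Finset.univ)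
  · obtain ⟨J, hJ, hJg, hJ3⟩ := hc
    obtain ⟨D, hA, hD⟩ := steinberg (F := F)
    obtain ⟨h1, h2, h3⟩ := T.main hM D J hJ
    refine ⟨T.lam D J, 0, Nat.zero_le _, h1, h2, h3, ?_, ?_⟩
    · rw [pow_zero, pow_one]
      apply T.mem_inertia hM D J g hJg
      intro i _
      rw [hA]; trivial
    · have hJn : J.card ≤ n := by simpa using Finset.card_le_univ J
      have hJ0 : 0 < J.card := hJ.card_pos
      have hd : orderOf m ∣ EE F ^ J.card * (Fintype.card F * EE F) ^ (n - J.card) := by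
        rcases hJ3 with h | h
        · have : orderOf m ∣ EE F := by
            refine Nat.Coprime.dvd_of_dvd_mul_left ?_ ho3
            exact ((Nat.Prime.coprime_iff_not_dvd Nat.prime_three).2 h).symm
          exact Dvd.dvd.mul_right (this.trans (dvd_pow_self _ hJ0.ne')) _
        · have hlt : J.card < n := by
            have := Finset.card_lt_univ_of_notMem (s := J) (x := (by
              have : ∃ x, x ∉ J := by
                by_contra! hh
                exact h (Finset.eq_univ_iff_forall.2 hh)
              exact this.choose)) (by
              have : ∃ x, x ∉ J := by
                by_contra! hh
                exact h (Finset.eq_univ_iff_forall.2 hh)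
              exact this.choose_spec)
            simpa using this
          apply Dvd.dvd.mul_left
          refine (ho3.trans (Nat.mul_dvd_mul_right card_dvd _)).trans (dvd_pow_self _ ?_)
          omega
      obtain ⟨k, hk⟩ := hd
      refine ⟨k, ?_⟩
      rw [T.lam_one, hD, hcard]
      have : (Fintype.card F * EE F) ^ n = orderOf m * k * Fintype.card F ^ J.card := by
        rw [← hk]
        conv_lhs => rw [← Nat.add_sub_cancel' hJn, pow_add, mul_pow]
        ring
      rw [this]
      push_cast
      ring
  · push Not at hc
    have h3 : 3 ∣ orderOf m :=
      (hc Finset.univ Finset.univ_nonempty (fun i _ => Finset.mem_univ _)).1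
    have hJ : ∀ J : Finset (Fin n), J.Nonempty → (∀ i ∈ J, T.act g i ∈ J) → J = Finset.univ :=
      fun J h1 h2 => (hc J h1 h2).2
    have hst : ∀ i, T.e.symm ⟨m, hm⟩ (T.act g i) = T.α g i (T.e.symm ⟨m, hm⟩ i) := by
      intro i
      have := T.conj_m hM g ⟨m, hm⟩ i
      simpa only [hgm] using this
    have ho : orderOf m ∣ 3 := by
      rw [orderOf_dvd_iff_pow_eq_one]
      apply hmp
      have := hJ (Finset.univ.filter fun i => T.e.symm ⟨m, hm⟩ i ^ 3 = 1) ?_ ?_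
      · intro i
        have hi : i ∈ (Finset.univ.filter fun i => T.e.symm ⟨m, hm⟩ i ^ 3 = 1) := by
          rw [this]; exact Finset.mem_univ i
        exact (Finset.mem_filter.1 hi).2
      · by_contra hne
        rw [Finset.not_nonempty_iff_eq_empty, Finset.filter_eq_empty_iff] at hne
        apply EE_ndvd (F := F)
        refine h3.trans ?_
        rw [orderOf_dvd_iff_pow_eq_one]
        apply hmp
        intro i
        apply ord_EE
        intro h
        exact hne (Finset.mem_univ i) (psl_cube _ h)
      · intro i hi
        simp only [Finset.mem_filter, Finset.mem_univ, true_and] at hi ⊢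
        rw [hst, ← map_pow, hi, map_one]
    have hcyc : (T.act g).IsCycleOn (Finset.univ : Finset (Fin n)) := by
      refine ⟨by simp [(T.act g).bijective], ?_⟩
      intro x _ y _
      have := hJ (Finset.univ.filter fun z => (T.act g).SameCycle x z) ⟨x, by simpa using Equiv.Perm.SameCycle.refl _ x⟩ (by
        intro i hi
        simpa using hi)
      have hy : y ∈ (Finset.univ.filter fun z => (T.act g).SameCycle x z) := by
        rw [this]; exact Finset.mem_univ y
      exact (Finset.mem_filter.1 hy).2
    have hgn : ∀ i, T.act (g ^ n) i = i := by
      intro i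
      have := hcyc.pow_card_apply (Finset.mem_univ i)
      rw [map_pow]
      simpa using this
    obtain ⟨D, hA, hD⟩ := halfWeil (F := F)
    obtain ⟨a, n', hn', hnn⟩ := Nat.exists_eq_two_pow_mul_odd hn0.ne'
    obtain ⟨β, hβ⟩ := twist_exists T D.A hA (g ^ (2 ^ (a + 1))) (g ^ n) n' hn' (by
      rw [← pow_mul, ← pow_add, hnn]
      congr 1
      ring) hgn
    have hh : a + 1 ≤ n := by
      have h1 : a < 2 ^ a := Nat.lt_two_pow_self
      have h2 : 2 ^ a ≤ n := Nat.le_of_dvd hn0 ⟨n', hnn⟩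
      omega
    obtain ⟨h1, h2, h3⟩ := (T.twist β).main hM D Finset.univ Finset.univ_nonempty
    refine ⟨_, a + 1, hh, h1, h2, h3, ?_, ?_⟩
    · exact (T.twist β).mem_inertia hM D Finset.univ _ (fun i _ => Finset.mem_univ _) (fun i _ => hβ i)
    · rw [Setup.lam_one, hcard, Finset.card_univ, Fintype.card_fin]
      have hd : 2 ^ (a + 1) * orderOf m ∣ (Fintype.card F * (Fintype.card F + 1)) ^ n := by
        rw [mul_pow, mul_comm]
        apply Nat.mul_dvd_mul
        · exact ho.trans (card_dvd.trans (dvd_pow_self _ hn0.ne'))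
        · refine (pow_dvd_pow 2 hh).trans (pow_dvd_pow_of_dvd ?_ n)
          have := hq.1
          omega
      obtain ⟨k, hk⟩ := hd
      have hE : EE F = (Fintype.card F + 1) * Fintype.card D.ι := by
        have := EE_two (F := F)
        have h5 : Fintype.card F - 1 = 2 * Fintype.card D.ι := by omega
        rw [h5, mul_assoc] at this
        rw [mul_comm]
        omega
      refine ⟨k, ?_⟩
      have : (Fintype.card F * EE F) ^ n = 2 ^ (a + 1) * orderOf m * k * Fintype.card D.ι ^ n := by
        rw [← hk, hE, ← mul_pow, mul_assoc]
      rw [this]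
      push_cast
      ring

end Final

theorem monolithic_lemma_psl (G : Type) [Group G] [Fintype G]
    (M : Subgroup G) [hMn : M.Normal] (hMne : M ≠ ⊥)
    (hMuniq : ∀ N : Subgroup G, N.Normal → N ≠ ⊥ → M ≤ N)
    (f : ℕ) (hfodd : Odd f) (hfpos : 0 < f)
    (n : ℕ) [NeZero n] (S : Fin n → Subgroup G)
    (hiso : ∀ i, Nonempty (↥(S i) ≃* PSL(2, GaloisField 3 f)))
    (hcomm : Pairwise fun i j => ∀ x y : G, x ∈ S i → y ∈ S j → Commute x y)
    (hinj : Function.Injective (Subgroup.noncommPiCoprod hcomm))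
    (hrange : (Subgroup.noncommPiCoprod hcomm).range = M)
    (g : G) (r : ℕ) (hr : r = orderOf (QuotientGroup.mk g : G ⧸ M)) :
    ∃ (lam : ↥M → ℂ) (h : ℕ), h ≤ n ∧ IsIrrChar ↥M lam ∧ lam ≠ (fun _ => 1) ∧
      ExtendsToSubgroup M (inertia M hMn lam) lam ∧
      g ^ (2 ^ h) ∈ inertia M hMn lam ∧
      ∃ k : ℕ, (Nat.card ↥M : ℂ) =
        ((2 : ℂ) ^ h * (orderOf (g ^ r) : ℂ)) * (k : ℂ) * lam 1 := by
  classical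
  letI : Fintype (GaloisField 3 f) := Fintype.ofFinite _
  have hcF : Fintype.card (GaloisField 3 f) = 3 ^ f := by
    rw [← Nat.card_eq_fintype_card, GaloisField.card 3 f hfpos.ne']
  haveI : Fact (Fintype.card (GaloisField 3 f) % 4 = 3) := ⟨by
    obtain ⟨t, rfl⟩ := hfodd
    rw [hcF, pow_succ, pow_mul, Nat.mul_mod, Nat.pow_mod]
    norm_num⟩
  obtain ⟨e⟩ := e_exists S hiso hcomm hinj hrange
  have h4 := four_le (F := GaloisField 3 f) (fun φ x => perfect_S0 hMn hMuniq psl_na e φ x)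
  haveI : IsSimpleGroup PSL(2, GaloisField 3 f) :=
    Matrix.ProjectiveSpecialLinearGroup.rank_two_simple (by rwa [Nat.card_eq_fintype_card])
  obtain ⟨T⟩ := setup_of_e hMn psl_na e
  apply final_aux hMn T g (g ^ r)
  · rw [← QuotientGroup.eq_one_iff, hr]
    exact pow_orderOf_eq_one (QuotientGroup.mk g : G ⧸ M)
  · rw [← pow_succ', pow_succ, mul_inv_cancel_right]
end
end

section
/- Let G be a finite group, g an element of G, and M a normal subgroup of G which is the internal direct product M = S_1 × ⋯ × S_n of subgroups S_1, …, S_n that are permuted transitively by conjugation by g (that is, for each i there is j with S_i^g = S_j, and the cyclic group ⟨g⟩ acts transitively on {S_1, …, S_n}). Let r be the order of gM in G/M, so that g^r ∈ M, and write g^r = s_1 ⋯ s_n with s_i ∈ S_i. Then all the elements s_1, …, s_n have the same order; in particular, the order of g^r equals the order of s_1. -/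
open scoped MatrixGroups

noncomputable section

/-- If `M = S₁ × ⋯ × Sₙ` is a normal subgroup of `G`, an internal direct product of
subgroups permuted transitively by conjugation by `g`, `r` is the order of `gM` in `G/M`,
and `g^r = s₁ ⋯ sₙ` with `s i ∈ S i`, then all the `s i` have the same order and the order
of `g^r` equals each of these orders. -/
theorem orders_of_components_eq (G : Type) [Group G] [Fintype G]
    (g : G) (M : Subgroup G) [hMn : M.Normal]
    (n : ℕ) (S : Fin n → Subgroup G)
    (hcomm : Pairwise fun i j => ∀ x y : G, x ∈ S i → y ∈ S j → Commute x y)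
    (hinj : Function.Injective (Subgroup.noncommPiCoprod hcomm))
    (hrange : (Subgroup.noncommPiCoprod hcomm).range = M)
    (hperm : ∀ i : Fin n, ∃ j : Fin n, (S i).map (MulAut.conj g).toMonoidHom = S j)
    (htrans : ∀ i j : Fin n, ∃ m : ℕ, (S i).map (MulAut.conj (g ^ m)).toMonoidHom = S j)
    (r : ℕ) (hr : r = orderOf (QuotientGroup.mk g : G ⧸ M))
    (hgr : g ^ r ∈ M)
    (s : Fin n → G) (hs : ∀ i, s i ∈ S i) (hprod : g ^ r = (List.ofFn s).prod) :
    (∀ i j : Fin n, orderOf (s i) = orderOf (s j)) ∧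
    ∀ i : Fin n, orderOf (g ^ r) = orderOf (s i) := by
  classical
  have hpermm : ∀ (m : ℕ) (i : Fin n), ∃ j : Fin n,
      (S i).map (MulAut.conj (g ^ m)).toMonoidHom = S j := by
    intro m
    induction m with
    | zero =>
      intro i
      refine ⟨i, ?_⟩
      ext z
      simp [Subgroup.mem_map]
    | succ m ih =>
      intro i
      obtain ⟨j, hj⟩ := hperm i
      obtain ⟨k, hk⟩ := ih j
      refine ⟨k, ?_⟩
      rw [← hk, ← hj, Subgroup.map_map]
      congr 1
      ext z
      simp [pow_succ, mul_assoc]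
  set φ := Subgroup.noncommPiCoprod hcomm with hφ
  let x : ∀ i, S i := fun i => ⟨s i, hs i⟩
  have hx : φ x = g ^ r := by
    rw [hprod, List.ofFn_eq_map, hφ, Subgroup.noncommPiCoprod_apply]
    have hc : (↑(List.finRange n).toFinset : Set (Fin n)).Pairwise
        (Function.onFun Commute s) := by
      intro a _ b _ hab
      exact hcomm hab _ _ (hs a) (hs b)
    rw [← Finset.noncommProd_toFinset (List.finRange n) s hc (List.nodup_finRange n)]
    refine Finset.noncommProd_congr ?_ ?_ _
    · ext a; simp
    · intro a _; rfl
  have hsingle : ∀ (k : Fin n) (y : S k), φ (Pi.mulSingle k y) = y := by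
    intro k y
    exact Subgroup.noncommPiCoprod_mulSingle k y
  have hmemN : ∀ (j k : Fin n), k ≠ j → ∀ z ∈ S k,
      z ∈ (Pi.evalMonoidHom (fun i => S i) j).ker.map φ := by
    intro j k hkj z hz
    refine ⟨Pi.mulSingle k ⟨z, hz⟩, ?_, hsingle k ⟨z, hz⟩⟩
    simp [MonoidHom.mem_ker, Pi.mulSingle_eq_of_ne hkj.symm]
  have hdisj : ∀ (i k : Fin n), k ≠ i → S k = S i → ∀ z ∈ S i, z = 1 := by
    intro i k hki hS z hz
    obtain ⟨y, hy, hyz⟩ := hmemN i k hki z (hS ▸ hz)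
    have h1 : y = Pi.mulSingle i ⟨z, hz⟩ := hinj (hyz.trans (hsingle i ⟨z, hz⟩).symm)
    have h2 : y i = 1 := hy
    rw [h1, Pi.mulSingle_eq_same] at h2
    exact congrArg Subtype.val h2
  have hdvd : ∀ i j : Fin n, orderOf (s j) ∣ orderOf (s i) := by
    intro i j
    obtain ⟨m, hm⟩ := htrans i j
    by_cases htriv : ∀ z ∈ S j, z = 1
    · rw [htriv _ (hs j)]; simp
    set c := (MulAut.conj (g ^ m)).toMonoidHom with hcdef
    have hcinj : Function.Injective c := (MulAut.conj (g ^ m)).injective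
    set t := orderOf (s i) with ht
    have hcomap : φ (x ^ t) ∈ ((Pi.evalMonoidHom (fun i => S i) j).ker.map φ).comap c := by
      rw [hφ, Subgroup.noncommPiCoprod_apply]
      refine Subgroup.noncommProd_mem _ _ ?_
      intro k _
      rw [← hφ]
      by_cases hki : k = i
      · subst hki
        have : ((x ^ t) k : G) = 1 := pow_orderOf_eq_one (s k)
        rw [this]; exact one_mem _
      · obtain ⟨k', hk'⟩ := hpermm m k
        have hne : k' ≠ j := by
          rintro rfl
          have hS : S k = S i := Subgroup.map_injective hcinj (hk'.trans hm.symm)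
          apply htriv
          intro z hz
          rw [← hm] at hz
          obtain ⟨w, hw, rfl⟩ := hz
          rw [hdisj i k hki hS w hw, map_one]
        refine hmemN j k' hne _ ?_
        rw [← hk']
        exact ⟨_, ((x ^ t) k).2, rfl⟩
    have hfix : c (φ (x ^ t)) = φ (x ^ t) := by
      rw [map_pow, hx, ← pow_mul]
      simp only [hcdef, MulEquiv.coe_toMonoidHom, MulAut.conj_apply]
      rw [(Commute.pow_pow_self g m (r * t)).eq, mul_inv_cancel_right]
    rw [Subgroup.mem_comap, hfix] at hcomap
    obtain ⟨y, hy, hyx⟩ := hcomap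
    have h1 : y = x ^ t := hinj hyx
    have h2 : y j = 1 := hy
    rw [h1] at h2
    exact orderOf_dvd_of_pow_eq_one (congrArg Subtype.val h2)
  refine ⟨fun i j => Nat.dvd_antisymm (hdvd j i) (hdvd i j), fun i => ?_⟩
  rw [← hx, orderOf_injective φ hinj]
  apply Nat.dvd_antisymm
  · apply orderOf_dvd_of_pow_eq_one
    funext j
    apply Subtype.ext
    exact orderOf_dvd_iff_pow_eq_one.mp (hdvd i j)
  · apply orderOf_dvd_of_pow_eq_one
    have := congrFun (pow_orderOf_eq_one x) i
    exact congrArg Subtype.val this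
end
end

section
/- Let G be a finite group, M a non-abelian minimal normal subgroup of G, and C = C_G(M) its centralizer. Let λ be a non-principal irreducible complex character of M, I = I_G(λ) its inertia subgroup, and suppose λ has an extension λ̂ to I with C ∩ I ≤ ker λ̂. Suppose M ≤ I, let ξ be an irreducible character of I/M, regarded via inflation as a character of I, and set χ = (λ̂ · ξ)^G. Then χ is an irreducible character of G, and cod(χ) is a multiple of the product cod_{I/M}(ξ) · (|M|/λ(1)), where cod_{I/M}(ξ) = |I/M : ker ξ| / ξ(1) is the codegree of ξ computed in I/M. -/
open scoped MatrixGroups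

noncomputable section

theorem aux_ms_bound (s : Multiset ℂ) (h : ∀ z ∈ s, ‖z‖ = 1) : ‖s.sum‖ ≤ s.card := by
  induction s using Multiset.induction with
  | empty => simp
  | cons a s ih =>
    have h1 := ih (fun z hz => h z (Multiset.mem_cons_of_mem hz))
    have h2 := h a (Multiset.mem_cons_self a s)
    rw [Multiset.sum_cons, Multiset.card_cons]
    push_cast
    linarith [norm_add_le a s.sum]

theorem aux_ms_eq (s : Multiset ℂ) (h : ∀ z ∈ s, ‖z‖ = 1) (hs : s.sum.re = s.card) :
    ∀ z ∈ s, z = 1 := by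
  induction s using Multiset.induction with
  | empty => simp
  | cons a s ih =>
    have h0 : ∀ z ∈ s, ‖z‖ = 1 := (fun z hz => h z (Multiset.mem_cons_of_mem hz))
    have h1 := aux_ms_bound s h0
    have h2 := h a (Multiset.mem_cons_self a s)
    rw [Multiset.sum_cons, Multiset.card_cons] at hs
    push_cast at hs
    rw [Complex.add_re] at hs
    have h3 := Complex.re_le_norm a
    have h4 := Complex.re_le_norm s.sum
    have h5 : a.re = 1 := by linarith
    have h6 : a = 1 := by
      have := Complex.sq_norm a
      rw [Complex.normSq_apply, h2, h5] at this
      apply Complex.ext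
      · simpa using h5
      · have : a.im * a.im = 0 := by linarith
        simpa using this
    intro z hz
    rcases Multiset.mem_cons.1 hz with rfl | hz
    · exact h6
    · exact ih h0 (by linarith) z hz

theorem aux_roots {V : Type*} [AddCommGroup V] [Module ℂ V] [FiniteDimensional ℂ V]
    (f : Module.End ℂ V) (k : ℕ) (hk : 0 < k) (hf : f ^ k = 1) :
    ∀ z ∈ f.charpoly.roots, ‖z‖ = 1 := by
  intro z hz
  have h1 : f.HasEigenvalue z := by
    rw [Module.End.hasEigenvalue_iff_isRoot_charpoly]
    exact Polynomial.isRoot_of_mem_roots hz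
  obtain ⟨v, hv⟩ := h1.exists_hasEigenvector
  have h2 := hv.pow_apply k
  rw [hf] at h2
  have h3 : z ^ k = 1 := by
    have : (z ^ k - 1) • v = 0 := by
      rw [sub_smul, ← h2]; simp
    rcases smul_eq_zero.1 this with h | h
    · exact sub_eq_zero.1 h
    · exact absurd h hv.2
  exact Complex.norm_eq_one_of_pow_eq_one h3 hk.ne'

theorem aux_trace_sum {V : Type*} [AddCommGroup V] [Module ℂ V] [FiniteDimensional ℂ V]
    (f : Module.End ℂ V) : LinearMap.trace ℂ V f = f.charpoly.roots.sum := by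
  let b := Module.finBasis ℂ V
  rw [← LinearMap.charpoly_toMatrix f b, ← Matrix.trace_eq_sum_roots_charpoly,
    LinearMap.trace_eq_matrix_trace ℂ b]

theorem aux_card_roots {V : Type*} [AddCommGroup V] [Module ℂ V] [FiniteDimensional ℂ V]
    (f : Module.End ℂ V) : f.charpoly.roots.card = Module.finrank ℂ V := by
  rw [IsAlgClosed.card_roots_eq_natDegree, LinearMap.charpoly_natDegree]

theorem aux_trace_bound {V : Type*} [AddCommGroup V] [Module ℂ V] [FiniteDimensional ℂ V]
    (f : Module.End ℂ V) (k : ℕ) (hk : 0 < k) (hf : f ^ k = 1) :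
    ‖LinearMap.trace ℂ V f‖ ≤ Module.finrank ℂ V := by
  rw [aux_trace_sum, ← aux_card_roots f]
  exact aux_ms_bound _ (aux_roots f k hk hf)

theorem aux_trace_eq {V : Type*} [AddCommGroup V] [Module ℂ V] [FiniteDimensional ℂ V]
    (f : Module.End ℂ V) (k : ℕ) (hk : 0 < k) (hf : f ^ k = 1)
    (ht : LinearMap.trace ℂ V f = Module.finrank ℂ V) : f = 1 := by
  have h1 := aux_ms_eq f.charpoly.roots (aux_roots f k hk hf) (by
    rw [← aux_trace_sum, ht, aux_card_roots]; simp)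
  have hss : f.IsSemisimple := by
    apply Module.End.isSemisimple_of_squarefree_aeval_eq_zero (p := Polynomial.X ^ k - 1)
    · apply Polynomial.Separable.squarefree
      exact (Polynomial.X_pow_sub_one_separable_iff).2 (by exact_mod_cast hk.ne')
    · simp [hf]
  have h2 : ∀ z, f.HasEigenvalue z → z = 1 := by
    intro z hz
    rw [Module.End.hasEigenvalue_iff_isRoot_charpoly] at hz
    exact h1 z ((Polynomial.mem_roots f.charpoly_monic.ne_zero).2 hz)
  have h3 := Module.End.iSup_maxGenEigenspace_eq_top f
  have h4 : f.eigenspace 1 = ⊤ := by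
    rw [eq_top_iff, ← h3]
    refine iSup_le fun z => ?_
    rw [hss.isFinitelySemisimple.maxGenEigenspace_eq_eigenspace]
    by_cases hz : f.HasEigenvalue z
    · rw [h2 z hz]
    · have : f.eigenspace z = ⊥ := by
        by_contra h
        exact hz h
      rw [this]; exact bot_le
  ext v
  have : v ∈ f.eigenspace 1 := h4 ▸ Submodule.mem_top
  rw [Module.End.mem_eigenspace_iff] at this
  simpa using this

section
variable {G : Type} [Group G] [Finite G] {V : Type} [AddCommGroup V] [Module ℂ V]
  [FiniteDimensional ℂ V] (ρ : Representation ℂ G V)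

theorem aux_char_norm (g : G) : ‖ρ.character g‖ ≤ Module.finrank ℂ V := by
  refine aux_trace_bound (ρ g) (Nat.card G) Nat.card_pos ?_
  rw [← map_pow, pow_card_eq_one', map_one]

theorem aux_char_ker (g : G) : ρ.character g = ρ.character 1 ↔ g ∈ MonoidHom.ker ρ := by
  constructor
  · intro h
    rw [Representation.char_one] at h
    refine aux_trace_eq (ρ g) (Nat.card G) Nat.card_pos ?_ h
    rw [← map_pow, pow_card_eq_one', map_one]
  · intro h
    have : ρ g = 1 := h
    simp [Representation.character, this]
end

theorem aux_trace_pi {ι W : Type*} [Fintype ι] [DecidableEq ι] [AddCommGroup W] [Module ℂ W]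
    [FiniteDimensional ℂ W] (T : (ι → W) →ₗ[ℂ] (ι → W)) :
    LinearMap.trace ℂ _ T = ∑ i, LinearMap.trace ℂ W
      (LinearMap.proj i ∘ₗ T ∘ₗ LinearMap.single ℂ (fun _ => W) i) := by
  have h : T = ∑ i, LinearMap.single ℂ (fun _ => W) i ∘ₗ (LinearMap.proj i ∘ₗ T) := by
    ext j w i
    simp [Finset.sum_apply, Pi.single_apply]
  conv_lhs => rw [h]
  rw [map_sum]
  refine Finset.sum_congr rfl fun i _ => ?_
  rw [LinearMap.trace_comp_comm']
  rfl

/-- trace of X ↦ P X Q -/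
theorem aux_trace_hom {V W : Type*} [AddCommGroup V] [Module ℂ V] [FiniteDimensional ℂ V]
    [AddCommGroup W] [Module ℂ W] [FiniteDimensional ℂ W] (P : V →ₗ[ℂ] V) (Q : W →ₗ[ℂ] W) :
    LinearMap.trace ℂ (W →ₗ[ℂ] V) (LinearMap.llcomp ℂ W V V P ∘ₗ LinearMap.lcomp ℂ V Q) =
      LinearMap.trace ℂ V P * LinearMap.trace ℂ W Q := by
  rw [mul_comm, ← LinearMap.trace_transpose' Q, ← LinearMap.trace_tensorProduct',
    ← LinearMap.trace_conj' _ (dualTensorHomEquiv ℂ W V)]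
  congr 1
  rw [LinearEquiv.conj_apply, LinearEquiv.eq_comp_toLinearMap_symm]
  ext φ v w
  simp [Module.Dual.transpose]

theorem aux_coind_char {G : Type} [Group G] [Fintype G] (I : Subgroup G)
    {W : Type} [AddCommGroup W] [Module ℂ W]
    [FiniteDimensional ℂ W] (ρ : Representation ℂ I W) (F : G → ℂ)
    (hF : ∀ x : I, F x = ρ.character x) (hF' : ∀ x : G, x ∉ I → F x = 0) (a : G) :
    (Representation.coind I.subtype ρ).character a =
      (Nat.card I : ℂ)⁻¹ * ∑ x : G, F (x * a * x⁻¹) := by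
  classical
  have hI0 : (Nat.card I : ℂ) ≠ 0 := by exact_mod_cast Nat.card_pos.ne'
  let T : (G → W) →ₗ[ℂ] (G → W) := (Nat.card I : ℂ)⁻¹ • ∑ h : I,
    LinearMap.pi (fun x => ρ h⁻¹ ∘ₗ LinearMap.proj ((h : G) * x * a))
  have hTapp : ∀ f x, T f x = (Nat.card I : ℂ)⁻¹ • ∑ h : I, ρ h⁻¹ (f ((h : G) * x * a)) := by
    intro f x
    simp [T, LinearMap.sum_apply, Finset.sum_apply]
  have hmem : ∀ f, T f ∈ Representation.coindV I.subtype ρ := by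
    intro f g x
    rw [hTapp, hTapp, map_smul, map_sum]
    congr 1
    refine Fintype.sum_equiv (Equiv.mulRight g) _ _ fun h => ?_
    simp [mul_assoc, ← Module.End.mul_apply, ← map_mul]
  have hres : Representation.coind I.subtype ρ a = T.restrict (fun f _ => hmem f) := by
    ext f x
    change f.1 (x * a) = T f.1 x
    rw [hTapp]
    have : ∀ h : I, ρ h⁻¹ (f.1 ((h : G) * x * a)) = f.1 (x * a) := by
      intro h
      have := f.2 h (x * a)
      rw [Subgroup.coe_subtype, ← mul_assoc] at this
      rw [this, ← Module.End.mul_apply, ← map_mul]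
      simp
    simp only [this, Finset.sum_const, Finset.card_univ, ← Nat.card_eq_fintype_card]
    rw [← Nat.cast_smul_eq_nsmul ℂ, smul_smul, inv_mul_cancel₀ hI0, one_smul]
  rw [Representation.character, hres, LinearMap.trace_restrict_eq_of_forall_mem _ _ hmem,
    aux_trace_pi, Finset.mul_sum]
  refine Finset.sum_congr rfl fun x _ => ?_
  have : LinearMap.proj x ∘ₗ T ∘ₗ LinearMap.single ℂ (fun _ => W) x =
      (Nat.card I : ℂ)⁻¹ • ∑ h : I, if (h : G) * x * a = x then ρ h⁻¹ else 0 := by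
    ext w
    simp only [LinearMap.comp_apply, LinearMap.proj_apply, hTapp, LinearMap.smul_apply,
      LinearMap.sum_apply, LinearMap.single_apply]
    congr 1
    refine Finset.sum_congr rfl fun h _ => ?_
    split_ifs with h1
    · rw [h1]; simp
    · simp [Pi.single_apply, h1]
  rw [this, map_smul, map_sum, smul_eq_mul]
  congr 1
  by_cases hx : x * a * x⁻¹ ∈ I
  · rw [hF ⟨_, hx⟩, Finset.sum_eq_single (⟨_, hx⟩ : I)⁻¹]
    · rw [if_pos (by simp [mul_assoc])]
      simp [Representation.character]
    · intro h _ hne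
      rw [if_neg, map_zero]
      intro h1
      apply hne
      rw [eq_inv_iff_mul_eq_one]
      ext
      simp only [Subgroup.coe_mul, Subgroup.coe_one]
      rw [← mul_assoc, ← mul_assoc, h1]; simp
    · simp
  · rw [hF' _ hx]
    refine Finset.sum_eq_zero fun h _ => ?_
    rw [if_neg, map_zero]
    intro h1
    apply hx
    have : x * a * x⁻¹ = (h : G)⁻¹ := by
      rw [mul_inv_eq_iff_eq_mul, eq_inv_mul_iff_mul_eq, ← mul_assoc, h1]
    rw [this]; exact (h⁻¹).2

theorem aux_irr_rep {G : Type} [Group G] [Fintype G] {χ : G → ℂ} (h : IsIrrChar G χ) :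
    ∃ V : FDRep ℂ G, CategoryTheory.Simple V ∧ (∀ g, Representation.character V.ρ g = χ g) ∧
      (∀ g, V.character g = χ g) ∧
      ∑ g : G, χ g * χ g⁻¹ = Nat.card G := by
  obtain ⟨V, hV, hχ⟩ := h
  refine ⟨V, hV, hχ, hχ, ?_⟩
  have := (FDRep.simple_iff_char_is_norm_one V).1 hV
  simpa only [hχ] using this

theorem aux_irr_of_norm {G : Type} [Group G] [Fintype G] {V : Type} [AddCommGroup V] [Module ℂ V]
    [FiniteDimensional ℂ V] (ρ : Representation ℂ G V) (χ : G → ℂ) (hχ : ∀ g, ρ.character g = χ g)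
    (h : ∑ g : G, χ g * χ g⁻¹ = Nat.card G) :
    CategoryTheory.Simple (FDRep.of ρ) ∧ ∀ g, (FDRep.of ρ).character g = χ g := by
  have h1 : ∀ g, (FDRep.of ρ).character g = χ g := hχ
  refine ⟨?_, h1⟩
  rw [FDRep.simple_iff_char_is_norm_one]
  simpa only [h1] using h

section
variable {M : Type} [Group M] [Fintype M] {V W : Type} [AddCommGroup V] [Module ℂ V]
    [FiniteDimensional ℂ V] [AddCommGroup W] [Module ℂ W]
    [FiniteDimensional ℂ W] (ρ : Representation ℂ M V) (σ : Representation ℂ M W)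

/-- The averaged intertwining map. -/
def auxAvg (X : W →ₗ[ℂ] V) : Representation.IntertwiningMap σ ρ where
  toLinearMap := ∑ m : M, ρ m ∘ₗ X ∘ₗ σ m⁻¹
  isIntertwining' g := by
    ext w
    simp only [LinearMap.comp_apply, LinearMap.sum_apply, map_sum]
    refine Fintype.sum_equiv (Equiv.mulLeft g⁻¹) _ _ fun m => ?_
    simp [← Module.End.mul_apply, ← map_mul]

theorem aux_dim : (Nat.card M : ℂ)⁻¹ * ∑ m : M, ρ.character m * σ.character m⁻¹ =
    Module.finrank ℂ (Representation.IntertwiningMap σ ρ) := by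
  have := invertibleOfNonzero (NeZero.ne (Nat.card M : ℂ))
  exact Representation.card_inv_mul_sum_char_mul_char_eq_finrank σ ρ

/-- The operator. -/
def auxOp (A : V →ₗ[ℂ] V) (B : W →ₗ[ℂ] W) : (W →ₗ[ℂ] V) →ₗ[ℂ] (W →ₗ[ℂ] V) :=
  ∑ m : M, LinearMap.llcomp ℂ W V V (A ∘ₗ ρ m) ∘ₗ LinearMap.lcomp ℂ V (σ m⁻¹ ∘ₗ B)

theorem auxOp_apply (A : V →ₗ[ℂ] V) (B : W →ₗ[ℂ] W) (X : W →ₗ[ℂ] V) :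
    auxOp ρ σ A B X = A ∘ₗ (auxAvg ρ σ X).toLinearMap ∘ₗ B := by
  ext w
  simp [auxOp, auxAvg, LinearMap.sum_apply]

theorem auxOp_trace (A : V →ₗ[ℂ] V) (B : W →ₗ[ℂ] W) :
    LinearMap.trace ℂ _ (auxOp ρ σ A B) =
    ∑ m : M, LinearMap.trace ℂ V (A ∘ₗ ρ m) * LinearMap.trace ℂ W (σ m⁻¹ ∘ₗ B) := by
  simp only [auxOp, map_sum, aux_trace_hom]

theorem aux_schur_zero (h : ∑ m : M, ρ.character m * σ.character m⁻¹ = 0)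
    (A : V →ₗ[ℂ] V) (B : W →ₗ[ℂ] W) :
    ∑ m : M, LinearMap.trace ℂ V (A ∘ₗ ρ m) * LinearMap.trace ℂ W (σ m⁻¹ ∘ₗ B) = 0 := by
  have h1 := aux_dim ρ σ
  rw [h, mul_zero] at h1
  have h2 : Module.finrank ℂ (Representation.IntertwiningMap σ ρ) = 0 := by exact_mod_cast h1.symm
  have : FiniteDimensional ℂ (Representation.IntertwiningMap σ ρ) := inferInstance
  have h3 : ∀ f : Representation.IntertwiningMap σ ρ, f = 0 :=
    fun f => @Subsingleton.elim _ (Module.finrank_zero_iff.1 h2) f 0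
  rw [← auxOp_trace]
  have : auxOp ρ σ A B = 0 := by
    ext1 X
    rw [auxOp_apply, h3 (auxAvg ρ σ X)]
    ext w
    simp
  rw [this, map_zero]

theorem aux_schur_one (h : ∑ m : M, ρ.character m * ρ.character m⁻¹ = Nat.card M)
    (A B : V →ₗ[ℂ] V) (hAB : A ∘ₗ B = LinearMap.id) :
    ∑ m : M, LinearMap.trace ℂ V (A ∘ₗ ρ m) * LinearMap.trace ℂ V (ρ m⁻¹ ∘ₗ B) = Nat.card M := by
  have hM0 : (Nat.card M : ℂ) ≠ 0 := by exact_mod_cast Nat.card_pos.ne'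
  have h1 := aux_dim ρ ρ
  rw [h, inv_mul_cancel₀ hM0] at h1
  have h2 : Module.finrank ℂ (Representation.IntertwiningMap ρ ρ) = 1 := by exact_mod_cast h1.symm
  let e : Representation.IntertwiningMap ρ ρ :=
    { toLinearMap := LinearMap.id, isIntertwining' := fun g => rfl }
  have he : e ≠ 0 := by
    intro he
    have hz : ∀ f : Representation.IntertwiningMap ρ ρ, f = 0 := by
      intro f
      apply Representation.IntertwiningMap.ext
      ext v
      have h5 : e v = 0 := by rw [he]; rfl
      have h6 : v = 0 := h5
      rw [h6, map_zero, map_zero]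
    have := Module.finrank_zero_iff (R := ℂ).2
      (⟨fun f g => (hz f).trans (hz g).symm⟩ : Subsingleton (Representation.IntertwiningMap ρ ρ))
    omega
  have h3 := (finrank_eq_one_iff_of_nonzero' e he).1 h2
  have h4 : auxOp ρ ρ A B = auxOp ρ ρ LinearMap.id LinearMap.id := by
    ext1 X
    rw [auxOp_apply, auxOp_apply]
    obtain ⟨c, hc⟩ := h3 (auxAvg ρ ρ X)
    have h7 : (auxAvg ρ ρ X).toLinearMap = c • LinearMap.id := by
      rw [← hc]; rfl
    rw [h7, LinearMap.smul_comp, LinearMap.comp_smul, LinearMap.id_comp, hAB]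
    rfl
  rw [← auxOp_trace, h4, auxOp_trace]
  exact h
end

theorem aux_sum_quot {H : Type} [Group H] [Fintype H] (N : Subgroup H) [Fintype (H ⧸ N)]
    (f : H ⧸ N → ℂ) :
    ∑ a : H, f (QuotientGroup.mk a) = Nat.card N * ∑ q, f q := by
  classical
  rw [← Finset.sum_fiberwise_of_maps_to (s := Finset.univ) (t := Finset.univ)
    (g := fun a : H => (QuotientGroup.mk a : H ⧸ N)) (fun _ _ => Finset.mem_univ _), Finset.mul_sum]
  refine Finset.sum_congr rfl fun q _ => ?_
  rw [Finset.sum_congr rfl (g := fun _ => f q) (by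
    intro a ha
    rw [(Finset.mem_filter.1 ha).2]), Finset.sum_const, nsmul_eq_mul]
  congr 1
  have := QuotientGroup.card_preimage_mk N {q}
  rw [show Nat.card ({q} : Set (H ⧸ N)) = 1 by simp, mul_one] at this
  rw [← this, Nat.card_eq_fintype_card, Fintype.card_subtype]
  norm_cast
  congr 1
  ext x; simp

theorem aux_avg_sum {H : Type} [Group H] [Fintype H] (N : Subgroup H) [Fintype N] (f : H → ℂ) :
    (Nat.card N : ℂ) * ∑ a : H, f a = ∑ a : H, ∑ m : N, f (a * m) := by
  rw [Finset.sum_comm]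
  have : ∀ m : N, ∑ a : H, f (a * m) = ∑ a : H, f a := fun m =>
    Fintype.sum_equiv (Equiv.mulRight (m : H)) _ _ fun _ => rfl
  simp only [this, Finset.sum_const, Finset.card_univ, Nat.card_eq_fintype_card, nsmul_eq_mul]

theorem aux_conj_zero {G : Type} [Group G] [Fintype G] (M : Subgroup G) [hMn : M.Normal]
    [Fintype M]
    (lam : M → ℂ) (hlam : IsIrrChar M lam) (y : G) (hy : y ∉ inertia M hMn lam) :
    ∑ m : M, lam m * lam (MulAut.conjNormal y m⁻¹) = 0 := by
  obtain ⟨V, hV, h1, h2, h3⟩ := aux_irr_rep hlam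
  let c : M ≃* M := MulAut.conjNormal y
  let ρ : Representation ℂ M V := V.ρ.comp c.toMonoidHom
  obtain ⟨hW, hWc⟩ := aux_irr_of_norm ρ (fun m => lam (c m)) (fun m => h1 (c m)) (by
    rw [← h3]
    refine Fintype.sum_equiv c.toEquiv _ _ fun m => ?_
    simp)
  have := invertibleOfNonzero (NeZero.ne (Nat.card M : ℂ))
  have h4 := FDRep.char_orthonormal V (FDRep.of ρ)
  rw [if_neg] at h4
  · simp only [h2, hWc] at h4
    have hM0 : (Nat.card M : ℂ)⁻¹ ≠ 0 := inv_ne_zero (by exact_mod_cast Nat.card_pos.ne')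
    exact (mul_eq_zero.1 h4).resolve_left hM0
  · rintro ⟨i⟩
    apply hy
    intro m
    have := congrFun (FDRep.char_iso i) m
    rw [h2, hWc] at this
    exact this.symm

theorem aux_ne_zero {G : Type} [Group G] [Fintype G] {χ : G → ℂ} (h : IsIrrChar G χ) :
    χ 1 ≠ 0 := by
  obtain ⟨V, hV, h1, h2, h3⟩ := aux_irr_rep h
  intro h0
  rw [← h1, Representation.char_one] at h0
  have h4 : Module.finrank ℂ V = 0 := by exact_mod_cast h0
  have h5 : ∀ g, χ g = 0 := by
    intro g
    have := aux_char_norm V.ρ g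
    rw [h4, h1] at this
    simpa using this
  simp only [h5, mul_zero, Finset.sum_const_zero] at h3
  have : (Nat.card G : ℂ) ≠ 0 := by exact_mod_cast Nat.card_pos.ne'
  exact this h3.symm

/-- The key computation in the reduction: `M` a non-abelian minimal normal subgroup of `G`,
`C = C_G(M)`, `λ` a non-principal irreducible character of `M`, `I = I_G(λ)`, `λ̂` an
extension of `λ` to `I` with `C ∩ I ≤ ker λ̂`, `ξ ∈ Irr(I/M)` inflated to `I`, and
`χ = (λ̂ ξ)^G` (given by the induction formula).  Then `χ` is irreducible and `cod(χ)`
is a multiple of `cod_{I/M}(ξ) · (|M|/λ(1))` (stated multiplicatively). -/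
theorem induced_gallagher_codegree (G : Type) [Group G] [Fintype G]
    (M : Subgroup G) [hMn : M.Normal] (hMne : M ≠ ⊥)
    (hMmin : ∀ N : Subgroup G, N.Normal → N ≤ M → N = ⊥ ∨ N = M)
    (hMnonab : ∃ a b : ↥M, a * b ≠ b * a)
    (lam : ↥M → ℂ) (hlam : IsIrrChar ↥M lam) (hlamnp : lam ≠ (fun _ => 1))
    (I : Subgroup G) (hI : I = inertia M hMn lam) (hMI : M ≤ I)
    [hquot : (M.subgroupOf I).Normal]
    (lamhat : ↥I → ℂ) (hlamhat : IsIrrChar ↥I lamhat)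
    (hlamhatres : ∀ (x : G) (hxM : x ∈ M) (hxI : x ∈ I),
      lamhat ⟨x, hxI⟩ = lam ⟨x, hxM⟩)
    (hlamhatker : ∀ x : ↥I, (x : G) ∈ Subgroup.centralizer (M : Set G) →
      lamhat x = lamhat 1)
    (ξ : (↥I ⧸ M.subgroupOf I) → ℂ) (hξ : IsIrrChar (↥I ⧸ M.subgroupOf I) ξ)
    (F : G → ℂ)
    (hF : ∀ x : ↥I, F x = lamhat x * ξ (QuotientGroup.mk x))
    (hF' : ∀ x : G, x ∉ I → F x = 0)
    (χ : G → ℂ)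
    (hind : ∀ a : G, χ a = (Nat.card ↥I : ℂ)⁻¹ * ∑ x : G, F (x * a * x⁻¹)) :
    IsIrrChar G χ ∧
    ∃ k : ℕ,
      (Fintype.card G : ℂ) *
          (Nat.card {y : ↥I ⧸ M.subgroupOf I | ξ y = ξ 1} : ℂ) * ξ 1 * lam 1 =
        (k : ℂ) * (Nat.card (↥I ⧸ M.subgroupOf I) : ℂ) * (Nat.card ↥M : ℂ) *
          (Nat.card {x : G | χ x = χ 1} : ℂ) * χ 1 := by
  classical
  obtain ⟨VL, hVL, hL1, hL2, hL3⟩ := aux_irr_rep hlamhat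
  obtain ⟨VX, hVX, hX1, hX2, hX3⟩ := aux_irr_rep hξ
  obtain ⟨V0, hV0, h01, h02, h03⟩ := aux_irr_rep hlam
  let ρ : Representation ℂ I VL := VL.ρ
  let τ : Representation ℂ I VX := VX.ρ.comp (QuotientGroup.mk' (M.subgroupOf I))
  let ρM : Representation ℂ M VL := ρ.comp (Subgroup.inclusion hMI)
  have hρM : ∀ m, ρM.character m = lam m := fun m => by
    have h1 : ρM.character m = lamhat (Subgroup.inclusion hMI m) := hL1 _
    rw [h1]
    exact hlamhatres m.1 m.2 _
  let θ : Representation ℂ I (TensorProduct ℂ VL VX) := ρ.tprod τ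
  have hθ : ∀ x, θ.character x = lamhat x * ξ (QuotientGroup.mk x) := fun x => by
    have h1 := congrFun (Representation.char_tensor ρ τ) x
    have h2 : ρ.character x = lamhat x := hL1 x
    have h3 : τ.character x = ξ (QuotientGroup.mk x) := hX1 _
    rw [Pi.mul_apply, h2, h3] at h1
    exact h1
  have hFθ : ∀ x : I, F x = θ.character x := fun x => by rw [hF, hθ]
  let π := Representation.coind I.subtype θ
  have hπ : ∀ a, π.character a = χ a := fun a => by
    rw [hind]; exact aux_coind_char I θ F hFθ hF' a
  have hI0 : (Nat.card I : ℂ) ≠ 0 := by exact_mod_cast Nat.card_pos.ne'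
  have hM0 : (Nat.card M : ℂ) ≠ 0 := by exact_mod_cast Nat.card_pos.ne'
  have hcardM : Nat.card (M.subgroupOf I) = Nat.card M :=
    Nat.card_congr (Subgroup.subgroupOfEquivOfLe hMI).toEquiv
  have hcardI : Nat.card I = Nat.card (I ⧸ M.subgroupOf I) * Nat.card M := by
    rw [← hcardM]; exact Subgroup.card_eq_card_quotient_mul_card_subgroup _
  have hMtr : ∀ (a : G) (m : M), a * m ∈ I ↔ a ∈ I := fun a m =>
    Subgroup.mul_mem_cancel_right _ (hMI m.2)
  have hFam : ∀ (a : I) (m : M), F (a * m) =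
      LinearMap.trace ℂ VL (ρ a ∘ₗ ρM m) * ξ (QuotientGroup.mk a) := by
    intro a m
    have h1 := hF (a * Subgroup.inclusion hMI m)
    have h2 : (QuotientGroup.mk (a * Subgroup.inclusion hMI m) : I ⧸ M.subgroupOf I) =
        QuotientGroup.mk a := by
      rw [QuotientGroup.mk_mul_of_mem]
      rw [Subgroup.mem_subgroupOf]; exact m.2
    rw [h2] at h1
    refine h1.trans ?_
    congr 1
    rw [← hL1]
    change LinearMap.trace ℂ VL (ρ _) = _
    rw [map_mul]
    rfl
  have hFma : ∀ (a : I) (m : M), F (m * a) =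
      LinearMap.trace ℂ VL (ρM m ∘ₗ ρ a) * ξ (QuotientGroup.mk a) := by
    intro a m
    have h1 := hF (Subgroup.inclusion hMI m * a)
    have h2 : (QuotientGroup.mk (Subgroup.inclusion hMI m * a) : I ⧸ M.subgroupOf I) =
        QuotientGroup.mk a := by
      rw [QuotientGroup.mk_mul, (QuotientGroup.eq_one_iff _).2, one_mul]
      rw [Subgroup.mem_subgroupOf]; exact m.2
    rw [h2] at h1
    refine h1.trans ?_
    congr 1
    rw [← hL1]
    change LinearMap.trace ℂ VL (ρ _) = _
    rw [map_mul]
    rfl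
  -- norm computation
  have hout : ∀ y : G, y ∉ I → ∑ a : G, F a * F (y * a⁻¹ * y⁻¹) = 0 := by
    intro y hy
    have h1 := aux_avg_sum M (fun a => F a * F (y * a⁻¹ * y⁻¹))
    have h2 : ∑ a : G, ∑ m : M, F (a * m) * F (y * (a * m)⁻¹ * y⁻¹) = 0 := by
      refine Finset.sum_eq_zero fun a _ => ?_
      by_cases ha : a ∈ I
      · by_cases hb : y * a⁻¹ * y⁻¹ ∈ I
        · let σ : Representation ℂ M VL := ρM.comp (MulAut.conjNormal y : M ≃* M).toMonoidHom
          have h3 := aux_schur_zero ρM σ (by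
            rw [← aux_conj_zero M lam hlam y (by rw [← hI]; exact hy)]
            refine Finset.sum_congr rfl fun m _ => ?_
            rw [hρM]
            congr 1
            exact hρM _) (ρ ⟨a, ha⟩) (ρ ⟨_, hb⟩)
          have h4 : ∀ m : M, F (a * m) * F (y * (a * m)⁻¹ * y⁻¹) =
              (LinearMap.trace ℂ VL (ρ ⟨a, ha⟩ ∘ₗ ρM m) *
                LinearMap.trace ℂ VL (σ m⁻¹ ∘ₗ ρ ⟨_, hb⟩)) *
              (ξ (QuotientGroup.mk ⟨a, ha⟩) * ξ (QuotientGroup.mk ⟨_, hb⟩)) := by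
            intro m
            have h5 := hFam ⟨a, ha⟩ m
            have h6 := hFma ⟨_, hb⟩ (MulAut.conjNormal y m⁻¹)
            have h7 : y * (a * m)⁻¹ * y⁻¹ =
                ((MulAut.conjNormal y m⁻¹ : M) : G) * (y * a⁻¹ * y⁻¹) := by
              rw [MulAut.conjNormal_apply]; push_cast; group
            rw [h7, h6, h5]
            change _ * (LinearMap.trace ℂ VL (σ m⁻¹ ∘ₗ _) * _) = _
            ring
          simp only [h4]
          rw [← Finset.sum_mul, h3, zero_mul]
        · refine Finset.sum_eq_zero fun m _ => ?_
          rw [hF' (y * (a * m)⁻¹ * y⁻¹), mul_zero]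
          intro h
          apply hb
          have h7 : y * (a * m)⁻¹ * y⁻¹ =
                ((MulAut.conjNormal y m⁻¹ : M) : G) * (y * a⁻¹ * y⁻¹) := by
              rw [MulAut.conjNormal_apply]; push_cast; group
          rw [h7] at h
          exact (Subgroup.mul_mem_cancel_left _ (hMI (MulAut.conjNormal y m⁻¹ : M).2)).1 h
      · refine Finset.sum_eq_zero fun m _ => ?_
        rw [hF' (a * m) (fun h => ha ((hMtr a m).1 h)), zero_mul]
    rw [h2] at h1
    exact (mul_eq_zero.1 h1).resolve_left hM0
  have hin1 : ∑ a : G, F a * F a⁻¹ = Nat.card I := by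
    have h1 := aux_avg_sum M (fun a => F a * F a⁻¹)
    have h2 : ∑ a : G, ∑ m : M, F (a * m) * F (a * m)⁻¹ =
        ∑ a : I, (Nat.card M : ℂ) * (ξ (QuotientGroup.mk a) * ξ (QuotientGroup.mk a)⁻¹) := by
      rw [← Finset.sum_subset (Finset.subset_univ (Finset.univ.filter (· ∈ I)))]
      · rw [Finset.sum_subtype (p := (· ∈ I)) _ (by simp)]
        refine Finset.sum_congr rfl fun a _ => ?_
        have h4 : ∀ m : M, F (a * m) * F (a * m)⁻¹ =
              (LinearMap.trace ℂ VL (ρ a ∘ₗ ρM m) *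
                LinearMap.trace ℂ VL (ρM m⁻¹ ∘ₗ ρ a⁻¹)) *
              (ξ (QuotientGroup.mk a) * ξ (QuotientGroup.mk a)⁻¹) := by
          intro m
          have h5 := hFam a m
          have h6 := hFma a⁻¹ m⁻¹
          have h7 : ((a : G) * m)⁻¹ = ((m⁻¹ : M) : G) * ((a⁻¹ : I) : G) := by
            push_cast; group
          rw [h7, h6, h5, QuotientGroup.mk_inv]
          ring
        simp only [h4]
        rw [← Finset.sum_mul, aux_schur_one ρM (by simpa only [hρM] using h03)]
        rw [← Module.End.mul_eq_comp, ← map_mul, mul_inv_cancel, map_one]; rfl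
      · intro a _ ha
        refine Finset.sum_eq_zero fun m _ => ?_
        rw [hF' (a * m) (fun h => ha (by simpa using (hMtr a m).1 h)), zero_mul]
    rw [h2, ← Finset.mul_sum] at h1
    have h3 := mul_left_cancel₀ hM0 h1
    rw [h3]
    have h4 := aux_sum_quot (M.subgroupOf I) (fun q => ξ q * ξ q⁻¹)
    refine h4.trans ?_
    rw [hX3, hcardI, hcardM]
    push_cast; ring
  have hin : ∀ y : G, y ∈ I → ∑ a : G, F a * F (y * a⁻¹ * y⁻¹) = Nat.card I := by
    intro y hy
    rw [← hin1]
    refine Finset.sum_congr rfl fun a _ => ?_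
    congr 1
    by_cases ha : a⁻¹ ∈ I
    · rw [hFθ ⟨_, ha⟩, ← Representation.char_conj θ ⟨_, ha⟩ ⟨y, hy⟩]
      exact hFθ (⟨y, hy⟩ * ⟨_, ha⟩ * ⟨y, hy⟩⁻¹)
    · rw [hF' _ ha, hF']
      intro h
      apply ha
      rw [Subgroup.mul_mem_cancel_right _ (I.inv_mem hy), Subgroup.mul_mem_cancel_left _ hy] at h
      exact h
  have hall : ∑ y : G, ∑ a : G, F a * F (y * a⁻¹ * y⁻¹) = (Nat.card I : ℂ) * Nat.card I := by
    have : ∀ y : G, ∑ a : G, F a * F (y * a⁻¹ * y⁻¹) = if y ∈ I then (Nat.card I : ℂ) else 0 := by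
      intro y
      split_ifs with h
      · exact hin y h
      · exact hout y h
    simp only [this]
    rw [← Finset.sum_filter, Finset.sum_const, nsmul_eq_mul]
    congr 2
    rw [← Fintype.card_subtype, Nat.card_eq_fintype_card]
  have hnorm : ∑ a : G, χ a * χ a⁻¹ = Nat.card G := by
    have h1 : ∀ a, χ a * χ a⁻¹ = (Nat.card I : ℂ)⁻¹ * (Nat.card I : ℂ)⁻¹ *
        ∑ x : G, ∑ y : G, F (x * a * x⁻¹) * F (y * a⁻¹ * y⁻¹) := by
      intro a
      rw [hind, hind, ← Finset.sum_mul_sum]; ring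
    simp only [h1]
    rw [← Finset.mul_sum, Finset.sum_comm]
    have h2 : ∀ x : G, ∑ a : G, ∑ y : G, F (x * a * x⁻¹) * F (y * a⁻¹ * y⁻¹) =
        (Nat.card I : ℂ) * Nat.card I := by
      intro x
      rw [← hall, Finset.sum_comm]
      refine Fintype.sum_equiv (Equiv.mulRight x⁻¹) _ _ fun y => ?_
      refine Fintype.sum_equiv (MulAut.conj x).toEquiv _ _ fun a => ?_
      simp only [MulEquiv.toEquiv_eq_coe, EquivLike.coe_coe, MulAut.conj_apply,
        Equiv.coe_mulRight]
      congr 2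
      group
    simp only [h2, Finset.sum_const, Finset.card_univ, ← Nat.card_eq_fintype_card, nsmul_eq_mul]
    field_simp
  refine ⟨⟨FDRep.of π, aux_irr_of_norm π χ hπ hnorm⟩, ?_⟩
  -- the kernel
  have hF1 : F 1 = lam 1 * ξ 1 := by
    have h1 := hF 1
    have h2 := hlamhatres 1 M.one_mem I.one_mem
    rw [Subgroup.coe_one] at h1
    rw [h1]
    congr 1
  have hF1d : F 1 = Module.finrank ℂ (TensorProduct ℂ VL VX) := by
    rw [← Representation.char_one θ, ← hFθ]; rfl
  have hlam1 : lam 1 = Module.finrank ℂ V0 := by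
    rw [← h01]; exact Representation.char_one _
  have hlam0 : lam 1 ≠ 0 := by
    exact aux_ne_zero hlam
  have hξ0 : ξ 1 ≠ 0 := by
    exact aux_ne_zero hξ
  have hχ1 : χ 1 = (Nat.card I : ℂ)⁻¹ * (Nat.card G * F 1) := by
    rw [hind]
    simp [Nat.card_eq_fintype_card]
  have hFbound : ∀ x, ‖F x‖ ≤ Module.finrank ℂ (TensorProduct ℂ VL VX) := by
    intro x
    by_cases hx : x ∈ I
    · rw [hFθ ⟨x, hx⟩]; exact aux_char_norm θ _
    · rw [hF' x hx, norm_zero]; exact Nat.cast_nonneg _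
  have hker : ∀ x, χ x = χ 1 → F x = F 1 := by
    intro x hx
    rw [hχ1, hind] at hx
    have h1 := mul_left_cancel₀ (inv_ne_zero hI0) hx
    have h2 : ∑ y : G, ((F 1).re - (F (y * x * y⁻¹)).re) = 0 := by
      have h0 := congrArg Complex.re h1
      rw [Complex.re_sum] at h0
      rw [Finset.sum_sub_distrib, h0]
      simp [Nat.card_eq_fintype_card]
    have h3 : ∀ z, (F z).re ≤ (F 1).re := by
      intro z
      refine (Complex.re_le_norm _).trans ((hFbound z).trans ?_)
      rw [hF1d]; simp
    have h4 := (Finset.sum_eq_zero_iff_of_nonneg (fun y _ => sub_nonneg.2 (h3 _))).1 h2 1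
      (Finset.mem_univ _)
    simp only [one_mul, inv_one, mul_one] at h4
    have h5 : (F x).re = Module.finrank ℂ (TensorProduct ℂ VL VX) := by
      rw [← sub_eq_zero.1 h4, hF1d]; simp
    have h6 : ‖F x‖ = (F x).re := le_antisymm (h5 ▸ hFbound x) (Complex.re_le_norm _)
    have h7 : (F x).im = 0 := by
      have := Complex.sq_norm (F x)
      rw [Complex.normSq_apply, h6] at this
      have : (F x).im * (F x).im = 0 := by linarith
      simpa using this
    rw [hF1d]
    apply Complex.ext
    · rw [h5]; simp
    · rw [h7]; simp
  have hkI : ∀ x, χ x = χ 1 → x ∈ I := by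
    intro x hx
    by_contra h
    have := hker x hx
    rw [hF' x h, hF1] at this
    exact mul_ne_zero hlam0 hξ0 this.symm
  have hkN : ∀ x, χ x = χ 1 ↔ x ∈ MonoidHom.ker π := by
    intro x
    rw [← hπ, ← hπ]
    exact aux_char_ker π x
  let N : Subgroup G := MonoidHom.ker π
  have hNM : N ⊓ M = ⊥ := by
    rcases hMmin (N ⊓ M) inferInstance inf_le_right with h | h
    · exact h
    · exfalso
      apply hlamnp
      have h1 : ∀ m : M, lam m = lam 1 := by
        intro m
        have hm : (m : G) ∈ N := (h.symm ▸ m.2 : (m : G) ∈ N ⊓ M).1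
        have h2 := hker m ((hkN m).2 hm)
        have h3 := hFam 1 m
        rw [Subgroup.coe_one, one_mul, h2, hF1, map_one] at h3
        have h4 : LinearMap.trace ℂ VL ((1 : Module.End ℂ VL) ∘ₗ ρM m) = lam m := hρM m
        rw [h4] at h3
        exact (mul_right_cancel₀ hξ0 h3).symm
      simp only [h1] at h03
      rw [Finset.sum_const, Finset.card_univ, ← Nat.card_eq_fintype_card, nsmul_eq_mul] at h03
      have h5 : lam 1 * lam 1 = 1 := by
        apply mul_left_cancel₀ hM0
        rw [h03, mul_one]
      have h6 : lam 1 = 1 := by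
        rw [hlam1] at h5 ⊢
        have h7 : Module.finrank ℂ V0 * Module.finrank ℂ V0 = 1 := by exact_mod_cast h5
        have := Nat.eq_one_of_mul_eq_one_right h7
        rw [this]; simp
      funext m
      rw [h1, h6]
  have hkξ : ∀ x (hx : x ∈ N), ξ (QuotientGroup.mk ⟨x, hkI x ((hkN x).2 hx)⟩) = ξ 1 := by
    intro x hx
    have hxI := hkI x ((hkN x).2 hx)
    have h1 := hker x ((hkN x).2 hx)
    have hc : x ∈ Subgroup.centralizer (M : Set G) := by
      rw [Subgroup.mem_centralizer_iff]
      intro m hm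
      have := Subgroup.commute_of_normal_of_disjoint N M inferInstance hMn
        (disjoint_iff.2 hNM) x m hx hm
      exact this.symm
    have h2 := hlamhatker ⟨x, hxI⟩ hc
    rw [hF ⟨x, hxI⟩, h2, hF1, show lamhat 1 = lam 1 from
      hlamhatres 1 M.one_mem I.one_mem] at h1
    exact mul_left_cancel₀ hlam0 h1
  let K : Subgroup (I ⧸ M.subgroupOf I) := MonoidHom.ker VX.ρ
  have hK : ∀ q, ξ q = ξ 1 ↔ q ∈ K := by
    intro q
    rw [← hX1, ← hX1]
    exact aux_char_ker _ q
  have hNI : N ≤ I := fun x hx => hkI x ((hkN x).2 hx)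
  let f : N →* K := ((QuotientGroup.mk' (M.subgroupOf I)).comp (Subgroup.inclusion hNI)).codRestrict K
    (fun x => (hK _).1 (hkξ x.1 x.2))
  have hf : Function.Injective f := by
    rw [injective_iff_map_eq_one]
    intro x hx
    have h1 : (QuotientGroup.mk (Subgroup.inclusion hNI x) : I ⧸ M.subgroupOf I) = 1 :=
      congrArg Subtype.val hx
    rw [QuotientGroup.eq_one_iff, Subgroup.mem_subgroupOf] at h1
    have h2 : (x : G) ∈ N ⊓ M := ⟨x.2, h1⟩
    rw [hNM, Subgroup.mem_bot] at h2
    exact Subtype.ext h2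
  obtain ⟨k, hk⟩ := Subgroup.card_dvd_of_injective f hf
  refine ⟨k, ?_⟩
  have e1 : Nat.card {y : I ⧸ M.subgroupOf I | ξ y = ξ 1} = Nat.card K :=
    Nat.card_congr (Equiv.subtypeEquivRight hK)
  have e2 : Nat.card {x : G | χ x = χ 1} = Nat.card N :=
    Nat.card_congr (Equiv.subtypeEquivRight hkN)
  rw [e1, e2, hk, hχ1, hF1, hcardI, Nat.card_eq_fintype_card (α := G)]
  have hQ0 : (Nat.card (I ⧸ M.subgroupOf I) : ℂ) ≠ 0 := by exact_mod_cast Nat.card_pos.ne'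
  push_cast
  field_simp
end
end

section
/- Let G be a finite group with trivial Fitting subgroup, let E = M_1 × ⋯ × M_k be the socle of G, the internal direct product of the (necessarily non-abelian) minimal normal subgroups M_1, …, M_k of G, and for each j let V_j be the product of all M_ℓ with ℓ ≠ j. Suppose that for each j there is an irreducible character λ_j of M_j such that the character λ_j × 1_{V_j} of E has an extension λ̂_j to the subgroup I = ⋂_{s=1}^k I_G(λ_s). Then the pointwise product ψ = ∏_{s=1}^k λ̂_s is an irreducible character of I extending λ = λ_1 × ⋯ × λ_k ∈ Irr(E), and I = I_G(λ). -/
open scoped MatrixGroups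

noncomputable section

open CategoryTheory in
theorem aux_simple_of_res {H K : Type} [Group H] [Finite H] [Group K] [Fintype K] (f : K →* H)
    (V : FDRep ℂ H)
    (h : ∑ g : K, V.character (f g) * V.character (f g⁻¹) = Fintype.card K) : Simple V := by
  classical
  let W : FDRep ℂ K := (Action.res (FGModuleCat ℂ) f).obj V
  have hW : ∀ g, W.character g = V.character (f g) := fun g => rfl
  have hs : Simple W := by
    rw [FDRep.simple_iff_char_is_norm_one]
    simpa [hW] using h
  have h1 : Module.finrank ℂ (W ⟶ W) = 1 := by
    rwa [← FDRep.simple_iff_end_is_rank_one]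
  rw [FDRep.simple_iff_end_is_rank_one]
  let L : (V ⟶ V) →ₗ[ℂ] (W ⟶ W) :=
    (Action.res (FGModuleCat ℂ) f).mapLinearMap ℂ
  have hL : Function.Injective L := by
    intro a b hab
    have := congrArg Action.Hom.hom hab
    exact Action.Hom.ext this
  have hle := LinearMap.finrank_le_finrank_of_injective hL
  have hpos : 0 < Module.finrank ℂ (V ⟶ V) := by
    have : Nontrivial (V ⟶ V) := by
      refine ⟨⟨𝟙 V, 0, fun h0 => ?_⟩⟩
      apply Simple.not_isZero W
      rw [Limits.IsZero.iff_id_eq_zero]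
      have h2 : L (𝟙 V) = L 0 := by rw [h0]
      rw [map_zero] at h2
      exact h2
    exact Module.finrank_pos
  omega

open CategoryTheory MonoidalCategory in
theorem aux_prod_char {H : Type} [Group H] (k : ℕ) (χ : Fin k → H → ℂ)
    (h : ∀ j, ∃ V : FDRep ℂ H, ∀ g, V.character g = χ j g) :
    ∃ V : FDRep ℂ H, ∀ g, V.character g = ∏ j, χ j g := by
  induction k with
  | zero =>
    refine ⟨FDRep.of (1 : H →* (ℂ →ₗ[ℂ] ℂ)), fun g => ?_⟩
    simp [FDRep.character]
  | succ n ih =>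
    obtain ⟨V, hV⟩ := h 0
    obtain ⟨W, hW⟩ := ih (fun j => χ j.succ) (fun j => h j.succ)
    refine ⟨V ⊗ W, fun g => ?_⟩
    rw [FDRep.char_tensor, Fin.prod_univ_succ, Pi.mul_apply, hV, hW]

theorem aux_norm {H : Type} [Group H] [Fintype H] (χ : H → ℂ) (h : IsIrrChar H χ) :
    ∑ g : H, χ g * χ g⁻¹ = Fintype.card H := by
  obtain ⟨V, hs, hV⟩ := h
  have := (FDRep.simple_iff_char_is_norm_one V).1 hs
  simpa [hV] using this

theorem aux_one_ne {H : Type} [Group H] (χ : H → ℂ) (h : IsIrrChar H χ) : χ 1 ≠ 0 := by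
  obtain ⟨V, hs, hV⟩ := h
  rw [← hV, FDRep.char_one]
  intro h0
  have h0 : Module.finrank ℂ V = 0 := by exact_mod_cast h0
  have hsub : Subsingleton V := Module.finrank_zero_iff.1 h0
  apply CategoryTheory.Simple.not_isZero V
  rw [CategoryTheory.Limits.IsZero.iff_id_eq_zero]
  apply Action.Hom.ext
  ext x
  exact Subsingleton.elim (α := V) _ _

theorem aux_conj {H : Type} [Group H] (χ : H → ℂ) (h : IsIrrChar H χ) (a b : H) :
    χ (a * b * a⁻¹) = χ b := by
  obtain ⟨V, hs, hV⟩ := h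
  rw [← hV, ← hV, FDRep.char_conj]

/-- `G` has trivial Fitting subgroup and socle `E = M₁ × ⋯ × M_k`, an internal direct
product of the minimal normal subgroups of `G`.  If for each `j` the character
`μ j = λ j × 1` of `E` (where `λ j ∈ Irr(M j)`) has an extension `λ̂ j` to
`I = ⋂ⱼ I_G(λ j)`, then `ψ = ∏ⱼ λ̂ j` is an irreducible character of `I` extending
`Λ = λ₁ × ⋯ × λ_k ∈ Irr(E)`, and `I = I_G(Λ)`. -/
theorem product_extension_of_socle_characters (G : Type) [Group G] [Fintype G]
    (hFitting : ∀ N : Subgroup G, N.Normal → Group.IsNilpotent ↥N → N = ⊥)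
    (k : ℕ) (M : Fin k → Subgroup G)
    (hMnorm : ∀ j, (M j).Normal)
    (hMne : ∀ j, M j ≠ ⊥)
    (hMmin : ∀ j, ∀ N : Subgroup G, N.Normal → N ≤ M j → N = ⊥ ∨ N = M j)
    (hMall : ∀ N : Subgroup G, N.Normal → N ≠ ⊥ →
      (∀ N' : Subgroup G, N'.Normal → N' ≤ N → N' = ⊥ ∨ N' = N) → ∃ j, N = M j)
    (E : Subgroup G) (hEn : E.Normal)
    (hcomm : Pairwise fun i j => ∀ x y : G, x ∈ M i → y ∈ M j → Commute x y)
    (hinj : Function.Injective (Subgroup.noncommPiCoprod hcomm))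
    (hrange : (Subgroup.noncommPiCoprod hcomm).range = E)
    (lam : ∀ j, ↥(M j) → ℂ) (hlam : ∀ j, IsIrrChar ↥(M j) (lam j))
    (μ : ∀ _ : Fin k, ↥E → ℂ) (hμirr : ∀ j, IsIrrChar ↥E (μ j))
    (hμ : ∀ (j : Fin k) (x : ∀ l, ↥(M l)) (hx : Subgroup.noncommPiCoprod hcomm x ∈ E),
      μ j ⟨Subgroup.noncommPiCoprod hcomm x, hx⟩ = lam j (x j))
    (I : Subgroup G) (hI : I = ⨅ j, inertia (M j) (hMnorm j) (lam j))
    (lamhat : ∀ _ : Fin k, ↥I → ℂ)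
    (hlamhatirr : ∀ j, IsIrrChar ↥I (lamhat j))
    (hlamhatres : ∀ (j : Fin k) (x : G) (hxE : x ∈ E) (hxI : x ∈ I),
      lamhat j ⟨x, hxI⟩ = μ j ⟨x, hxE⟩)
    (Λ : ↥E → ℂ)
    (hΛ : ∀ (x : ∀ l, ↥(M l)) (hx : Subgroup.noncommPiCoprod hcomm x ∈ E),
      Λ ⟨Subgroup.noncommPiCoprod hcomm x, hx⟩ = ∏ j, lam j (x j)) :
    IsIrrChar ↥I (fun a => ∏ j, lamhat j a) ∧
    (∀ (x : G) (hxE : x ∈ E) (hxI : x ∈ I),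
      (∏ j, lamhat j ⟨x, hxI⟩) = Λ ⟨x, hxE⟩) ∧
    inertia E hEn Λ = I := by
  classical
  set Φ := Subgroup.noncommPiCoprod hcomm with hΦ
  have hmem : ∀ x, Φ x ∈ E := fun x => hrange ▸ ⟨x, rfl⟩
  have hsurj : ∀ e ∈ E, ∃ x, Φ x = e := by
    intro e he
    rw [← hrange] at he
    exact he
  have hMI : ∀ i, M i ≤ I := by
    intro i x hx
    rw [hI, Subgroup.mem_iInf]
    intro j m
    by_cases hij : i = j
    · subst hij
      exact aux_conj (lam i) (hlam i) ⟨x, hx⟩ m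
    · have hc : x * m = m * x := hcomm hij x m hx m.2
      congr 1
      apply Subtype.ext
      show x * m * x⁻¹ = m
      rw [hc, mul_inv_cancel_right]
  have hEI : E ≤ I := by
    rw [← hrange, Subgroup.noncommPiCoprod_range]
    exact iSup_le hMI
  have hres : ∀ (x : ∀ l, ↥(M l)) (hxI : Φ x ∈ I),
      (∏ j, lamhat j ⟨Φ x, hxI⟩) = ∏ j, lam j (x j) := by
    intro x hxI
    refine Finset.prod_congr rfl fun j _ => ?_
    rw [hlamhatres j _ (hmem x), hμ]
  refine ⟨?_, ?_, ?_⟩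
  · obtain ⟨V, hV⟩ := aux_prod_char k lamhat
      (fun j => (hlamhatirr j).imp fun V h => h.2)
    refine ⟨V, ?_, hV⟩
    let f : (∀ l, ↥(M l)) →* ↥I := Φ.codRestrict I (fun x => hEI (hmem x))
    have hf : ∀ x, V.character (f x) = ∏ j, lam j (x j) := by
      intro x
      rw [hV]
      exact hres x _
    apply aux_simple_of_res f V
    simp_rw [hf, ← Finset.prod_mul_distrib, Pi.inv_apply]
    rw [← Fintype.prod_sum (fun j (y : ↥(M j)) => lam j y * lam j y⁻¹)]
    rw [Fintype.card_pi, Nat.cast_prod]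
    exact Finset.prod_congr rfl fun j _ => aux_norm _ (hlam j)
  · intro x hxE hxI
    obtain ⟨y, rfl⟩ := hsurj x hxE
    rw [hres, hΛ]
  · have hconj : ∀ (g : G) (x : ∀ l, ↥(M l)),
        Φ (fun l => ⟨g * x l * g⁻¹, (hMnorm l).conj_mem _ (x l).2 g⟩) = g * Φ x * g⁻¹ := by
      intro g x
      have h := Finset.map_noncommProd Finset.univ (fun l => (x l : G))
        (fun i _ j _ hij => hcomm hij _ _ (x i).2 (x j).2) (MulAut.conj g)
      rw [hΦ, Subgroup.noncommPiCoprod_apply, Subgroup.noncommPiCoprod_apply]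
      exact h.symm
    have hL : ∀ (g : G) (x : ∀ l, ↥(M l)) (h : g * Φ x * g⁻¹ ∈ E),
        Λ ⟨g * Φ x * g⁻¹, h⟩ =
          ∏ j, lam j ⟨g * x j * g⁻¹, (hMnorm j).conj_mem _ (x j).2 g⟩ := by
      intro g x h
      rw [← hΛ _ (hmem _)]
      congr 1
      exact Subtype.ext (hconj g x).symm
    ext g
    rw [hI, Subgroup.mem_iInf]
    constructor
    · intro hg j m
      have h1 := hg ⟨Φ (Pi.mulSingle j m), hmem _⟩
      rw [hL, hΛ, ← Finset.mul_prod_erase _ _ (Finset.mem_univ j),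
        ← Finset.mul_prod_erase Finset.univ (fun i => lam i ((Pi.mulSingle j m : ∀ l, ↥(M l)) i))
          (Finset.mem_univ j)] at h1
      have h2 : ∀ i ∈ Finset.univ.erase j,
          lam i ⟨g * (Pi.mulSingle j m : ∀ l, ↥(M l)) i * g⁻¹,
            (hMnorm i).conj_mem _ (Subtype.prop _) g⟩ = lam i 1 := by
        intro i hi
        congr 1
        apply Subtype.ext
        simp [Pi.mulSingle_eq_of_ne (Finset.ne_of_mem_erase hi)]
      have h3 : ∀ i ∈ Finset.univ.erase j,
          lam i ((Pi.mulSingle j m : ∀ l, ↥(M l)) i) = lam i 1 := by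
        intro i hi
        rw [Pi.mulSingle_eq_of_ne (Finset.ne_of_mem_erase hi)]
      rw [Finset.prod_congr rfl h2, Finset.prod_congr rfl h3] at h1
      have h4 := mul_right_cancel₀
        (Finset.prod_ne_zero_iff.2 fun i _ => aux_one_ne _ (hlam i)) h1
      simpa using h4
    · intro hg e
      obtain ⟨e, he⟩ := e
      obtain ⟨x, rfl⟩ := hsurj e he
      show Λ ⟨g * Φ x * g⁻¹, _⟩ = Λ ⟨Φ x, _⟩
      rw [hL, hΛ]
      exact Finset.prod_congr rfl fun j _ => hg j (x j)
end
end
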